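/- arXiv:1809.10997 — 3 statements merged into one kernel-verified Lean document; each statement's English description precedes it below -/
import Mathlib

section
/- Let K be a number field, let α_1,…,α_m ∈ Z_K be pairwise distinct nonzero algebraic integers, and let λ_0,λ_1,…,λ_m ∈ Z_K with at least one λ_j ≠ 0. Then there exist infinitely many non-Archimedean places v of K such that Λ_v = λ_0 + λ_1 F_v(α_1) + … + λ_m F_v(α_m) ≠ 0. -/
open NumberField IsDedekindDomain Nat Finset

/-- Euler's factorial series `F_v(α) = ∑ₙ n! αⁿ`, summed in the `v`-adic completion
of the number field `K`. -/
noncomputable def eulerF (K : Type*) [Field K] [NumberField K]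
    (v : HeightOneSpectrum (𝓞 K)) (α : 𝓞 K) : v.adicCompletion K :=
  ∑' n : ℕ, ((n ! : ℕ) : v.adicCompletion K) *
    (algebraMap K (v.adicCompletion K) (α : K)) ^ n

open Polynomial in
/-- The functional `X^n ↦ u n`. -/
noncomputable def ePhi {κ : Type*} [Field κ] (u : ℕ → κ) : κ[X] →ₗ[κ] κ :=
  Polynomial.lsum (fun n => (u n) • (LinearMap.id : κ →ₗ[κ] κ))

open Polynomial in
theorem ePhi_monomial {κ : Type*} [Field κ] (u : ℕ → κ) (n : ℕ) (c : κ) :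
    ePhi u (monomial n c) = u n * c := by
  simp [ePhi, Polynomial.lsum_apply, Polynomial.sum_monomial_index]

open Polynomial in
/-- The operator sending R to X times the derivative of X R. -/
noncomputable def eT {κ : Type*} [Field κ] (R : κ[X]) : κ[X] := X * derivative (X * R)

open Polynomial in
theorem eT_add {κ : Type*} [Field κ] (P Q : κ[X]) : eT (P + Q) = eT P + eT Q := by
  simp only [eT, mul_add, derivative_add]

open Polynomial in
theorem eT_monomial {κ : Type*} [Field κ] (n : ℕ) (c : κ) :
    eT (monomial n c) = monomial (n + 1) (c * ((n : κ) + 1)) := by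
  rw [eT, X_mul_monomial, derivative_monomial, X_mul_monomial]
  simp

open Polynomial in
theorem ePhi_rec {κ : Type*} [Field κ] {m : ℕ} (u : ℕ → κ) (a lam : Fin m → κ)
    (hu : ∀ n : ℕ, ((n : κ) + 1) * u (n + 1) = u n + ∑ j, lam j * a j ^ n) (R : κ[X]) :
    ePhi u (eT R) = ePhi u R + ∑ j, lam j * R.eval (a j) := by
  induction R using Polynomial.induction_on' with
  | add p q hp hq =>
    rw [eT_add, map_add, map_add, hp, hq]
    simp only [eval_add, mul_add, Finset.sum_add_distrib]
    ring
  | monomial n c =>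
    rw [eT_monomial, ePhi_monomial, ePhi_monomial]
    have : u (n + 1) * (c * ((n : κ) + 1)) = c * (((n : κ) + 1) * u (n + 1)) := by ring
    rw [this, hu, mul_add, Finset.mul_sum]
    congr 1
    · ring
    · refine Finset.sum_congr rfl fun j _ => ?_
      rw [eval_monomial]; ring

open Polynomial in
theorem ePhi_fix {κ : Type*} [Field κ] {m : ℕ} (u : ℕ → κ) (a lam : Fin m → κ)
    (hu : ∀ n : ℕ, ((n : κ) + 1) * u (n + 1) = u n + ∑ j, lam j * a j ^ n)
    (W : κ[X]) (hW : ∀ j, W.eval (a j) = 0) (r : ℕ) (g : κ[X]) :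
    ePhi u (eT (W ^ (r + 1) * g)) = ePhi u (W ^ (r + 1) * g) := by
  rw [ePhi_rec u a lam hu]
  simp [hW]

open Polynomial in
theorem eT_pow {κ : Type*} [Field κ] (W : κ[X]) (r : ℕ) (g : κ[X]) :
    eT (W ^ (r + 1) * g) =
      W ^ r * (((r : κ[X]) + 1) * X ^ 2 * derivative W * g + X ^ 2 * W * derivative g
        + X * W * g) := by
  simp only [eT, derivative_mul, derivative_X, derivative_pow, C_eq_natCast]
  push_cast
  ring

open Polynomial in
theorem ePhi_iter {κ : Type*} [Field κ] {m : ℕ} (u : ℕ → κ) (a lam : Fin m → κ)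
    (hu : ∀ n : ℕ, ((n : κ) + 1) * u (n + 1) = u n + ∑ j, lam j * a j ^ n)
    (W : κ[X]) (hW : ∀ j, W.eval (a j) = 0) (r : ℕ) : ∀ (g : κ[X]),
    ePhi u (eT^[r] (W ^ r * g)) = ePhi u (W ^ r * g) := by
  induction r with
  | zero => intro g; simp
  | succ r ih =>
    intro g
    rw [Function.iterate_succ_apply, ← ePhi_fix u a lam hu W hW r g, eT_pow, ih]

open Polynomial in
theorem ePhi_step1 {κ : Type*} [Field κ] [CharZero κ] {m : ℕ} (u : ℕ → κ) (a lam : Fin m → κ)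
    (hu : ∀ n : ℕ, ((n : κ) + 1) * u (n + 1) = u n + ∑ j, lam j * a j ^ n)
    (W : κ[X]) (hW : ∀ j, W.eval (a j) = 0) (hmon : W.Monic) (hdeg : W.natDegree = m) (l : ℕ)
    (h : ∀ e ≤ m, ePhi u (W ^ l * X ^ e) = 0) (e : ℕ) : ePhi u (W ^ l * X ^ e) = 0 := by
  induction e using Nat.strong_induction_on with
  | _ e ih =>
  by_cases he : e ≤ m
  · exact h e he
  obtain ⟨k, rfl⟩ : ∃ k, e = k + m + 1 := ⟨e - m - 1, by omega⟩
  have key := ePhi_fix u a lam hu W hW l (X ^ k)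
  rw [eT_pow] at key
  set H : κ[X] := ((l : κ[X]) + 1) * X ^ 2 * derivative W * X ^ k
    + X ^ 2 * W * derivative (X ^ k) + X * W * X ^ k - W * X ^ k with hH
  have hH2 : H = C ((l : κ) + 1) * (derivative W * X ^ (k + 2)) + C (k : κ) * (W * X ^ (k + 1))
      + W * X ^ (k + 1) - W * X ^ k := by
    rw [hH, derivative_X_pow]
    rcases k with _ | k
    · simp; ring
    · simp only [C_add, C_1, C_eq_natCast, Nat.add_sub_cancel]; ring
  have h0 : ePhi u (W ^ l * H) = 0 := by
    rw [hH, mul_sub, map_sub, key, sub_eq_zero]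
    congr 1; ring
  have hdW : (derivative W).natDegree ≤ m - 1 := hdeg ▸ natDegree_derivative_le W
  have hHdeg : H.natDegree < k + m + 2 := by
    rw [hH2]
    by_cases hm0 : m = 0
    · have hW1 : W = 1 := hmon.natDegree_eq_zero.mp (by omega)
      rw [hW1, hm0]
      simp only [derivative_one, zero_mul, mul_zero, zero_add, one_mul]
      refine Nat.lt_succ_of_le ?_
      compute_degree
    refine Nat.lt_succ_of_le ?_
    refine natDegree_sub_le_of_le (natDegree_add_le_of_degree_le (natDegree_add_le_of_degree_le ?_ ?_) ?_) ?_ |>.trans (le_of_eq (max_self _))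
    · refine (natDegree_C_mul_le _ _).trans (natDegree_mul_le.trans ?_)
      rw [natDegree_X_pow]; omega
    · refine (natDegree_C_mul_le _ _).trans (natDegree_mul_le.trans ?_)
      rw [natDegree_X_pow]; omega
    · refine (natDegree_mul_le.trans ?_)
      rw [natDegree_X_pow]; omega
    · refine (natDegree_mul_le.trans ?_)
      rw [natDegree_X_pow]; omega
  have hWm : W.coeff m = 1 := hdeg ▸ hmon.coeff_natDegree
  have hWm1 : W.coeff (m + 1) = 0 := coeff_eq_zero_of_natDegree_lt (by omega)
  have hc : H.coeff (k + m + 1) = (((l + 1) * m + k + 1 : ℕ) : κ) := by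
    rw [hH2]
    simp only [coeff_sub, coeff_add, coeff_C_mul]
    have e1 : (W * X ^ (k + 1)).coeff (k + m + 1) = 1 := by
      rw [show k + m + 1 = m + (k + 1) by ring, coeff_mul_X_pow, hWm]
    have e2 : (W * X ^ k).coeff (k + m + 1) = 0 := by
      rw [show k + m + 1 = (m + 1) + k by ring, coeff_mul_X_pow, hWm1]
    have e3 : (derivative W * X ^ (k + 2)).coeff (k + m + 1) = (m : κ) := by
      rcases Nat.eq_zero_or_pos m with hm0 | hm0
      · have hW1 : W = 1 := hmon.natDegree_eq_zero.mp (by omega)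
        simp [hW1, hm0]
      · obtain ⟨mm, rfl⟩ : ∃ mm, m = mm + 1 := ⟨m - 1, by omega⟩
        rw [show k + (mm + 1) + 1 = mm + (k + 2) by ring, coeff_mul_X_pow, coeff_derivative, hWm]
        push_cast; ring
    rw [e1, e2, e3]; push_cast; ring
  rw [H.as_sum_range' _ hHdeg, Finset.mul_sum, map_sum, Finset.sum_range_succ] at h0
  have hterm : ∀ i, ePhi u (W ^ l * monomial i (H.coeff i)) =
      H.coeff i * ePhi u (W ^ l * X ^ i) := by
    intro i
    rw [← C_mul_X_pow_eq_monomial, ← smul_eq_mul (H.coeff i), ← map_smul, smul_eq_C_mul]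
    congr 1; ring
  rw [Finset.sum_eq_zero, zero_add, hterm, hc] at h0
  · rcases mul_eq_zero.mp h0 with h1 | h1
    · exfalso
      have : ((l + 1) * m + k + 1 : ℕ) = 0 := by exact_mod_cast h1
      omega
    · exact h1
  · intro i hi
    rw [hterm, ih i (by simpa using hi), mul_zero]

open Polynomial in
theorem ePhi_eq_zero {κ : Type*} [Field κ] [CharZero κ] {m : ℕ} (u : ℕ → κ) (a lam : Fin m → κ)
    (hu : ∀ n : ℕ, ((n : κ) + 1) * u (n + 1) = u n + ∑ j, lam j * a j ^ n)
    (W : κ[X]) (hW : ∀ j, W.eval (a j) = 0) (hmon : W.Monic) (hdeg : W.natDegree = m)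
    (hsep : W.Separable) (hX : IsCoprime W X) (l : ℕ)
    (h : ∀ e ≤ m, ePhi u (W ^ l * X ^ e) = 0) (g : κ[X]) : ePhi u g = 0 := by
  have h1 : ∀ g, ePhi u (W ^ l * g) = 0 := by
    intro g
    induction g using Polynomial.induction_on' with
    | add p q hp hq => rw [mul_add, map_add, hp, hq, add_zero]
    | monomial n c =>
      rw [← C_mul_X_pow_eq_monomial, mul_left_comm, ← smul_eq_C_mul, map_smul,
        ePhi_step1 u a lam hu W hW hmon hdeg l h, smul_zero]
  clear h
  induction l generalizing g with
  | zero => simpa using h1 g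
  | succ r ih =>
    refine ih g fun g => ?_
    have hcop : IsCoprime W (((r : κ[X]) + 1) * X ^ 2 * derivative W) := by
      refine IsCoprime.mul_right (IsCoprime.mul_right ?_ hX.pow_right) hsep
      have : IsUnit ((r : κ[X]) + 1) := by
        rw [← C_eq_natCast, ← C_1, ← C_add, isUnit_C, isUnit_iff_ne_zero]
        exact_mod_cast Nat.succ_ne_zero r
      obtain ⟨w, hw⟩ := this.exists_left_inv
      exact ⟨0, w, by rw [hw]; simp⟩
    obtain ⟨A, B, hAB⟩ := hcop
    have h2 := ePhi_fix u a lam hu W hW r (B * g)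
    rw [h1, eT_pow] at h2
    have h3 : W ^ r * g = W ^ r * (((r : κ[X]) + 1) * X ^ 2 * derivative W * (B * g)
        + X ^ 2 * W * derivative (B * g) + X * W * (B * g))
        + W ^ (r + 1) * (A * g - X ^ 2 * derivative (B * g) - X * (B * g)) := by
      calc W ^ r * g = W ^ r * ((A * W + B * (((r : κ[X]) + 1) * X ^ 2 * derivative W)) * g) := by
            rw [hAB, one_mul]
        _ = _ := by ring
    rw [h3, map_add, h2, h1, add_zero]

open Polynomial in
theorem arch_u {κ : Type*} [Field κ] {m : ℕ} (u : ℕ → κ) (a lam : Fin m → κ)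
    (hu : ∀ n : ℕ, ((n : κ) + 1) * u (n + 1) = u n + ∑ j, lam j * a j ^ n)
    (w : AbsoluteValue κ ℝ) (hw : ∀ n : ℕ, 1 ≤ w ((n : κ) + 1)) :
    ∃ C M : ℝ, 1 ≤ C ∧ 1 ≤ M ∧ ∀ n, w (u n) ≤ M * C ^ n := by
  have hs1 : 0 ≤ ∑ j, w (a j) := Finset.sum_nonneg fun j _ => w.nonneg _
  have hs2 : 0 ≤ ∑ j, w (lam j) := Finset.sum_nonneg fun j _ => w.nonneg _
  have hs3 := w.nonneg (u 0)
  refine ⟨2 + ∑ j, w (a j), 1 + w (u 0) + ∑ j, w (lam j), by linarith, by linarith, ?_⟩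
  set C := 2 + ∑ j, w (a j) with hC
  set M := 1 + w (u 0) + ∑ j, w (lam j) with hM
  have hC0 : 0 ≤ C := by linarith
  intro n
  induction n with
  | zero => simp only [pow_zero, mul_one]; linarith
  | succ n ih =>
    have h1 : w (u (n + 1)) ≤ w (((n : κ) + 1) * u (n + 1)) := by
      rw [map_mul]
      exact le_mul_of_one_le_left (w.nonneg _) (hw n)
    have h2 : w (∑ j, lam j * a j ^ n) ≤ (∑ j, w (lam j)) * C ^ n := by
      refine (w.sum_le _ _).trans ?_
      rw [Finset.sum_mul]
      refine Finset.sum_le_sum fun j _ => ?_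
      rw [map_mul, map_pow]
      have : w (a j) ≤ C := by
        have := Finset.single_le_sum (f := fun j => w (a j)) (fun i _ => w.nonneg _)
          (Finset.mem_univ j)
        linarith
      exact mul_le_mul_of_nonneg_left (pow_le_pow_left₀ (w.nonneg _) this n) (w.nonneg _)
    rw [hu] at h1
    have h3 := w.add_le (u n) (∑ j, lam j * a j ^ n)
    have h4 : 0 ≤ C ^ n := pow_nonneg hC0 n
    have h5 : M * C ^ n * 2 ≤ M * C ^ n * C :=
      mul_le_mul_of_nonneg_left (by linarith) (mul_nonneg (by linarith) h4)
    have h6 : (∑ j, w (lam j)) * C ^ n ≤ M * C ^ n :=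
      mul_le_mul_of_nonneg_right (by linarith) h4
    rw [pow_succ, ← mul_assoc]
    linarith

open Polynomial in
theorem arch_phi {κ : Type*} [Field κ] {m : ℕ} (u : ℕ → κ) (a lam : Fin m → κ)
    (hu : ∀ n : ℕ, ((n : κ) + 1) * u (n + 1) = u n + ∑ j, lam j * a j ^ n)
    (w : AbsoluteValue κ ℝ) (hw : ∀ n : ℕ, 1 ≤ w ((n : κ) + 1)) (W : κ[X]) :
    ∃ C M A : ℝ, 1 ≤ C ∧ 1 ≤ M ∧ 1 ≤ A ∧
      ∀ l e, w (ePhi u (W ^ l * X ^ e)) ≤ M * A ^ l * C ^ e := by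
  obtain ⟨C, M, hC, hM, h⟩ := arch_u u a lam hu w hw
  have hC0 : 0 ≤ C := by linarith
  have hS : 0 ≤ ∑ i ∈ Finset.range (W.natDegree + 1), w (W.coeff i) * C ^ i :=
    Finset.sum_nonneg fun i _ => mul_nonneg (w.nonneg _) (pow_nonneg hC0 _)
  refine ⟨C, M, 1 + ∑ i ∈ Finset.range (W.natDegree + 1), w (W.coeff i) * C ^ i, hC, hM,
    by linarith, ?_⟩
  set A := 1 + ∑ i ∈ Finset.range (W.natDegree + 1), w (W.coeff i) * C ^ i with hA
  intro l
  induction l with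
  | zero =>
    intro e
    have : (W ^ 0 * X ^ e : κ[X]) = monomial e 1 := by
      rw [pow_zero, one_mul, X_pow_eq_monomial]
    rw [this, ePhi_monomial, mul_one, pow_zero, mul_one]
    exact h e
  | succ l ih =>
    intro e
    have h1 : W ^ (l + 1) * X ^ e =
        ∑ i ∈ Finset.range (W.natDegree + 1), W.coeff i • (W ^ l * X ^ (i + e)) := by
      have h2 : W ^ (l + 1) * X ^ e = (W ^ l * X ^ e) *
          ∑ i ∈ Finset.range (W.natDegree + 1), Polynomial.C (W.coeff i) * X ^ i := by
        rw [← W.as_sum_range_C_mul_X_pow]; ring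
      rw [h2, Finset.mul_sum]
      refine Finset.sum_congr rfl fun i _ => ?_
      rw [smul_eq_C_mul]; ring
    have h0 : 0 ≤ M * A ^ l * C ^ e := by positivity
    rw [h1, map_sum]
    refine (w.sum_le _ _).trans ?_
    calc _ ≤ ∑ i ∈ Finset.range (W.natDegree + 1), (M * A ^ l * C ^ e) * (w (W.coeff i) * C ^ i) := by
          refine Finset.sum_le_sum fun i _ => ?_
          rw [map_smul, smul_eq_mul, map_mul]
          refine (mul_le_mul_of_nonneg_left (ih (i + e)) (w.nonneg _)).trans (le_of_eq ?_)
          ring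
      _ = (M * A ^ l * C ^ e) * (A - 1) := by rw [← Finset.mul_sum, hA]; ring
      _ ≤ (M * A ^ l * C ^ e) * A := mul_le_mul_of_nonneg_left (by linarith) h0
      _ = _ := by ring

open Polynomial in
theorem eT_iter_sum {κ : Type*} [Field κ] (l : ℕ) {ι : Type*} (s : Finset ι) (f : ι → κ[X]) :
    eT^[l] (∑ i ∈ s, f i) = ∑ i ∈ s, eT^[l] (f i) := by
  induction l with
  | zero => rfl
  | succ l ih =>
    simp only [Function.iterate_succ_apply']
    rw [ih]
    exact map_sum (AddMonoidHom.mk' (eT (κ := κ)) eT_add) _ _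

open Polynomial in
theorem eT_iter_monomial {κ : Type*} [Field κ] (l n : ℕ) (c : κ) :
    eT^[l] (monomial n c) = monomial (n + l) (c * (((n + 1).ascFactorial l : ℕ) : κ)) := by
  induction l with
  | zero => simp
  | succ l ih =>
    rw [Function.iterate_succ_apply', ih, eT_monomial, Nat.ascFactorial_succ, ← add_assoc]
    congr 1
    push_cast; ring

open Polynomial in
theorem nonarch_good {κ Γ : Type*} [Field κ] [LinearOrderedCommGroupWithZero Γ]
    (v : Valuation κ Γ) (hv : ∀ n : ℕ, v (n : κ) ≤ 1) (u : ℕ → κ) (hu : ∀ n, v (u n) ≤ 1)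
    (Q : κ[X]) (hQ : ∀ n, v (Q.coeff n) ≤ 1) (l : ℕ) :
    v (ePhi u (eT^[l] Q)) ≤ v ((l ! : ℕ) : κ) := by
  rw [Q.as_sum_range, eT_iter_sum, map_sum]
  refine v.map_sum_le fun n _ => ?_
  rw [eT_iter_monomial, ePhi_monomial]
  obtain ⟨k, hk⟩ := Nat.factorial_dvd_ascFactorial (n + 1) l
  rw [hk, Nat.cast_mul, map_mul, map_mul, map_mul]
  calc _ ≤ 1 * (1 * (v ((l ! : ℕ) : κ) * 1)) := by
        gcongr
        · exact hu _
        · exact hQ _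
        · exact hv _
    _ = _ := by simp

open Polynomial in
theorem nonarch_bad {κ Γ : Type*} [Field κ] [LinearOrderedCommGroupWithZero Γ]
    (v : Valuation κ Γ) (hv : ∀ n : ℕ, v (n : κ) ≤ 1) (u : ℕ → κ)
    (hu : ∀ n, v (((n ! : ℕ) : κ) * u n) ≤ 1)
    (Q : κ[X]) (hQ : ∀ n, v (Q.coeff n) ≤ 1) (L : ℕ) (hL : Q.natDegree ≤ L) :
    v (((L ! : ℕ) : κ) * ePhi u Q) ≤ 1 := by
  rw [Q.as_sum_range, map_sum, Finset.mul_sum]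
  refine v.map_sum_le fun n hn => ?_
  rw [ePhi_monomial]
  obtain ⟨k, hk⟩ := Nat.factorial_dvd_factorial
    (show n ≤ L by have := Finset.mem_range.mp hn; omega)
  have : ((L ! : ℕ) : κ) * (u n * Q.coeff n) = (k : κ) * (((n ! : ℕ) : κ) * u n) * Q.coeff n := by
    rw [hk]; push_cast; ring
  rw [this, map_mul, map_mul]
  exact mul_le_one' (mul_le_one' (hv _) (hu _)) (hQ _)

theorem val_nat_le_one {K : Type*} [Field K] [NumberField K] (v : HeightOneSpectrum (𝓞 K))
    (n : ℕ) : v.valuation K (n : K) ≤ 1 := by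
  simpa using v.valuation_le_one (K := K) (n : 𝓞 K)

theorem val_nat_lt_one {K : Type*} [Field K] [NumberField K] (v : HeightOneSpectrum (𝓞 K))
    (n : ℕ) : v.valuation K (n : K) < 1 ↔ (n : 𝓞 K) ∈ v.asIdeal := by
  simpa using v.valuation_lt_one_iff_mem (K := K) (n : 𝓞 K)

theorem exists_prime_dvd_mem {K : Type*} [Field K] [NumberField K] (v : HeightOneSpectrum (𝓞 K))
    (b : ℕ) (hb0 : b ≠ 0) (hb : (b : 𝓞 K) ∈ v.asIdeal) :
    ∃ p : ℕ, p.Prime ∧ p ∣ b ∧ (p : 𝓞 K) ∈ v.asIdeal := by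
  induction b using Nat.recOnMul with
  | zero => exact absurd rfl hb0
  | one => exact absurd ((Ideal.eq_top_iff_one _).mpr (by simpa using hb)) v.isPrime.ne_top
  | prime p hp => exact ⟨p, hp, dvd_rfl, hb⟩
  | mul x y hx hy =>
    rw [Nat.cast_mul] at hb
    rcases v.isPrime.mem_or_mem hb with h | h
    · obtain ⟨p, h1, h2, h3⟩ := hx (fun h => hb0 (by simp [h])) h
      exact ⟨p, h1, h2.mul_right _, h3⟩
    · obtain ⟨p, h1, h2, h3⟩ := hy (fun h => hb0 (by simp [h])) h
      exact ⟨p, h1, h2.mul_left _, h3⟩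

theorem val_pow_le_factorial {K : Type*} [Field K] [NumberField K] (v : HeightOneSpectrum (𝓞 K))
    (b : ℕ) (hb0 : b ≠ 0) (hb : (b : 𝓞 K) ∈ v.asIdeal) (n : ℕ) :
    v.valuation K (b : K) ^ n ≤ v.valuation K ((n ! : ℕ) : K) := by
  obtain ⟨p, hp, ⟨c, rfl⟩, hpv⟩ := exists_prime_dvd_mem v b hb0 hb
  have := Fact.mk hp
  obtain ⟨t, ht⟩ := pow_padicValNat_dvd (p := p) (n := n !)
  have hk : padicValNat p (n !) ≤ n := by
    rcases Nat.eq_zero_or_pos n with rfl | hn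
    · simp
    · have h1 := sub_one_mul_padicValNat_factorial_lt_of_ne_zero p hn.ne'
      have h2 := hp.two_le
      exact (Nat.le_mul_of_pos_left _ (by omega)).trans h1.le
  have htp : ¬ p ∣ t := by
    intro h
    refine pow_succ_padicValNat_not_dvd (p := p) (Nat.factorial_ne_zero n) ?_
    rw [pow_succ]
    conv_rhs => rw [ht]
    exact Nat.mul_dvd_mul_left _ h
  have ht1 : v.valuation K (t : K) = 1 := by
    refine le_antisymm (val_nat_le_one v t) (not_lt.mp fun h => ?_)
    rw [val_nat_lt_one] at h
    have hc : IsCoprime (p : ℤ) (t : ℤ) := Nat.isCoprime_iff_coprime.mpr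
      ((Nat.Prime.coprime_iff_not_dvd hp).mpr htp)
    obtain ⟨x, y, hxy⟩ := hc
    apply v.isPrime.ne_top
    rw [Ideal.eq_top_iff_one]
    have : ((x : 𝓞 K) * (p : 𝓞 K) + (y : 𝓞 K) * (t : 𝓞 K)) = 1 := by exact_mod_cast congrArg (Int.cast (R := 𝓞 K)) hxy
    rw [← this]
    exact add_mem (Ideal.mul_mem_left _ _ hpv) (Ideal.mul_mem_left _ _ h)
  rw [ht]
  push_cast
  rw [map_mul, map_mul, map_pow, ht1, mul_one]
  calc _ ≤ (v.valuation K (p : K)) ^ n := by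
        refine pow_le_pow_left' ?_ n
        exact mul_le_of_le_one_right' (val_nat_le_one v c)
    _ ≤ _ := pow_le_pow_right_of_le_one' (val_nat_le_one v p) hk

theorem pow_dvd_factorial_mul (b k : ℕ) (hb : b ≠ 0) : b ^ k ∣ (b * k)! := by
  induction k with
  | zero => simp
  | succ k ih =>
    obtain ⟨c, rfl⟩ : ∃ c, b = c + 1 := ⟨b - 1, by omega⟩
    rw [show (c + 1) * (k + 1) = ((c + 1) * k + c) + 1 by ring, Nat.factorial_succ, pow_succ, mul_comm]
    refine Nat.mul_dvd_mul ⟨k + 1, by ring⟩ (ih.trans (Nat.factorial_dvd_factorial (by omega)))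

open Filter in
theorem val_factorial_lt {K : Type*} [Field K] [NumberField K] (v : HeightOneSpectrum (𝓞 K))
    (g : (WithZero (Multiplicative ℤ))ˣ) :
    ∀ᶠ n : ℕ in atTop, v.valuation K ((n ! : ℕ) : K) < g := by
  set b := Ideal.absNorm v.asIdeal with hbdef
  have hb : (b : 𝓞 K) ∈ v.asIdeal := Ideal.absNorm_mem _
  have hb0 : b ≠ 0 := by
    rw [hbdef, Ne, Ideal.absNorm_eq_zero_iff]; exact v.ne_bot
  obtain ⟨k, hk⟩ := exists_pow_lt₀ ((val_nat_lt_one (K := K) v b).mpr hb) g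
  filter_upwards [eventually_ge_atTop (b * k)] with n hn
  obtain ⟨c, hc⟩ := (pow_dvd_factorial_mul b k hb0).trans (Nat.factorial_dvd_factorial hn)
  rw [hc]
  push_cast
  rw [map_mul, map_pow]
  exact (mul_le_of_le_one_right' (val_nat_le_one v c)).trans_lt hk

/-- Partial sums of the linear form. -/
noncomputable def ePart {K : Type*} [Field K] {m : ℕ} (l0 : K) (lam a : Fin m → K) (n : ℕ) : K :=
  l0 + ∑ j, lam j * ∑ k ∈ Finset.range n, ((k ! : ℕ) : K) * a j ^ k

theorem valued_algebraMap {K : Type*} [Field K] [NumberField K] (v : HeightOneSpectrum (𝓞 K))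
    (x : K) : Valued.v (algebraMap K (v.adicCompletion K) x) = v.valuation K x :=
  HeightOneSpectrum.adicCompletion.valued_coe K v x

open Filter Topology in
theorem eulerF_hasSum {K : Type*} [Field K] [NumberField K] (v : HeightOneSpectrum (𝓞 K))
    (α : 𝓞 K) : HasSum (fun n : ℕ => ((n ! : ℕ) : v.adicCompletion K) *
    (algebraMap K (v.adicCompletion K) (α : K)) ^ n) (eulerF K v α) := by
  refine Summable.hasSum ?_
  refine NonarchimedeanAddGroup.summable_of_tendsto_cofinite_zero ?_
  rw [Nat.cofinite_eq_atTop, (Valued.hasBasis_nhds_zero (v.adicCompletion K) _).tendsto_right_iff]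
  intro γ _
  have hγ : (MonoidWithZeroHom.ValueGroup₀.embedding γ.1) ≠ 0 := by
    simp
  filter_upwards [val_factorial_lt (K := K) v (Units.mk0 _ hγ)] with n hn
  rw [Valuation.restrict_lt_iff_lt_embedding]
  have h1 : ((n ! : ℕ) : v.adicCompletion K) * (algebraMap K (v.adicCompletion K) (α : K)) ^ n
      = algebraMap K (v.adicCompletion K) (((n ! : ℕ) : K) * (α : K) ^ n) := by
    rw [map_mul, map_pow, map_natCast]
  rw [h1, valued_algebraMap, map_mul, map_pow]
  refine lt_of_le_of_lt ?_ hn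
  exact mul_le_of_le_one_right' (pow_le_one' (v.valuation_le_one (K := K) α) n)

open Filter Topology in
theorem good_place {K : Type*} [Field K] [NumberField K] {m : ℕ} (v : HeightOneSpectrum (𝓞 K))
    (α : Fin m → 𝓞 K) (l0 : 𝓞 K) (lam : Fin m → 𝓞 K)
    (h : algebraMap K (v.adicCompletion K) ((l0 : K)) +
        ∑ j : Fin m, algebraMap K (v.adicCompletion K) ((lam j : K)) *
          eulerF K v (α j) = 0) (n : ℕ) :
    v.valuation K (ePart (l0 : K) (fun j => (lam j : K)) (fun j => (α j : K)) n) ≤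
      v.valuation K ((n ! : ℕ) : K) := by
  have ht : Tendsto (fun n => algebraMap K (v.adicCompletion K)
      (ePart (l0 : K) (fun j => (lam j : K)) (fun j => (α j : K)) n)) atTop (𝓝 0) := by
    rw [← h]
    have : ∀ n, algebraMap K (v.adicCompletion K)
        (ePart (l0 : K) (fun j => (lam j : K)) (fun j => (α j : K)) n) =
        algebraMap K (v.adicCompletion K) ((l0 : K)) +
        ∑ j : Fin m, algebraMap K (v.adicCompletion K) ((lam j : K)) *
          ∑ k ∈ Finset.range n, ((k ! : ℕ) : v.adicCompletion K) *
            (algebraMap K (v.adicCompletion K) (α j : K)) ^ k := by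
      intro n
      simp only [ePart, map_add, map_sum, map_mul, map_pow, map_natCast]
    simp_rw [this]
    refine tendsto_const_nhds.add (tendsto_finsetSum _ fun j _ => ?_)
    exact tendsto_const_nhds.mul (eulerF_hasSum v (α j)).tendsto_sum_nat
  have hn0 : ((n ! : ℕ) : K) ≠ 0 := Nat.cast_ne_zero.mpr (Nat.factorial_ne_zero n)
  have hne : Valued.v.restrict (algebraMap K (v.adicCompletion K) ((n ! : ℕ) : K)) ≠ 0 := by
    rw [Ne, map_eq_zero, map_eq_zero]; exact hn0
  have hev := ht.eventually ((Valued.hasBasis_nhds_zero (v.adicCompletion K) _).mem_of_mem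
    (i := Units.mk0 _ hne) trivial)
  obtain ⟨N, hN, hnN⟩ := (hev.and (eventually_ge_atTop n)).exists
  rw [Units.val_mk0, Valuation.restrict_lt_iff, valued_algebraMap,
    valued_algebraMap] at hN
  have hdiff : ePart (l0 : K) (fun j => (lam j : K)) (fun j => (α j : K)) n =
      ePart (l0 : K) (fun j => (lam j : K)) (fun j => (α j : K)) N -
      ∑ j, (lam j : K) * ∑ k ∈ Finset.Ico n N, ((k ! : ℕ) : K) * (α j : K) ^ k := by
    simp only [ePart]
    rw [add_sub_assoc, ← Finset.sum_sub_distrib]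
    congr 1
    refine Finset.sum_congr rfl fun j _ => ?_
    rw [← Finset.sum_range_add_sum_Ico _ hnN]; ring
  rw [hdiff]
  refine (Valuation.map_sub _ _ _).trans (max_le hN.le ?_)
  refine Valuation.map_sum_le _ fun j _ => ?_
  rw [map_mul]
  refine (mul_le_of_le_one_left' (v.valuation_le_one (K := K) (lam j))).trans ?_
  refine Valuation.map_sum_le _ fun k hk => ?_
  rw [map_mul, map_pow]
  refine (mul_le_of_le_one_right' (pow_le_one' (v.valuation_le_one (K := K) (α j)) k)).trans ?_
  obtain ⟨c, hc⟩ := Nat.factorial_dvd_factorial (Finset.mem_Ico.mp hk).1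
  rw [hc, Nat.cast_mul, map_mul]
  exact mul_le_of_le_one_right' (val_nat_le_one v c)

theorem ePart_int {K : Type*} [Field K] [NumberField K] {m : ℕ} (v : HeightOneSpectrum (𝓞 K))
    (α : Fin m → 𝓞 K) (l0 : 𝓞 K) (lam : Fin m → 𝓞 K) (n : ℕ) :
    v.valuation K (ePart (l0 : K) (fun j => (lam j : K)) (fun j => (α j : K)) n) ≤ 1 := by
  have : ePart (l0 : K) (fun j => (lam j : K)) (fun j => (α j : K)) n =
      ((l0 + ∑ j, lam j * ∑ k ∈ Finset.range n, ((k ! : ℕ) : 𝓞 K) * α j ^ k : 𝓞 K) : K) := by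
    simp [ePart]
  rw [this]
  exact v.valuation_le_one (K := K) _

theorem ePart_rec {K : Type*} [Field K] [CharZero K] {m : ℕ} (l0 : K) (lam a : Fin m → K) (n : ℕ) :
    ((n : K) + 1) * (ePart l0 lam a (n + 1) / (((n + 1)! : ℕ) : K)) =
      ePart l0 lam a n / ((n ! : ℕ) : K) + ∑ j, lam j * a j ^ n := by
  have h1 : ((n ! : ℕ) : K) ≠ 0 := Nat.cast_ne_zero.mpr (Nat.factorial_ne_zero n)
  have h2 : (n : K) + 1 ≠ 0 := by exact_mod_cast Nat.succ_ne_zero n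
  have h3 : ePart l0 lam a (n + 1) = ePart l0 lam a n + ((n ! : ℕ) : K) * ∑ j, lam j * a j ^ n := by
    simp only [ePart, Finset.sum_range_succ, mul_add, Finset.sum_add_distrib, Finset.mul_sum]
    rw [add_assoc]
    congr 2
    refine Finset.sum_congr rfl fun j _ => ?_
    ring
  rw [h3, Nat.factorial_succ]
  push_cast
  field_simp

open Filter Topology Polynomial in
theorem euler_linear_form_nonvanishing_infinite (K : Type*) [Field K] [NumberField K]
    {m : ℕ} (hm : 1 ≤ m)
    (α : Fin m → 𝓞 K) (hα0 : ∀ j, α j ≠ 0) (hinj : Function.Injective α)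
    (lam : Fin (m + 1) → 𝓞 K) (hlam : ∃ i, lam i ≠ 0) :
    {v : HeightOneSpectrum (𝓞 K) |
      algebraMap K (v.adicCompletion K) ((lam 0 : K)) +
        ∑ j : Fin m, algebraMap K (v.adicCompletion K) ((lam j.succ : K)) *
          eulerF K v (α j) ≠ 0}.Infinite := by
  intro hfin
  set a : Fin m → K := fun j => (α j : K) with ha
  set lm : Fin m → K := fun j => (lam j.succ : K) with hlm
  set p : ℕ → K := ePart (lam 0 : K) lm a with hp
  set u : ℕ → K := fun n => p n / ((n ! : ℕ) : K) with hudef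
  have hu : ∀ n : ℕ, ((n : K) + 1) * u (n + 1) = u n + ∑ j, lm j * a j ^ n := fun n =>
    ePart_rec _ _ _ n
  have hainj : Function.Injective a := fun i j h => hinj (RingOfIntegers.coe_injective h)
  have ha0 : ∀ j, a j ≠ 0 := fun j h => hα0 j (RingOfIntegers.coe_injective (by simpa [ha] using h))
  set W : K[X] := ∏ j, (X - C (a j)) with hWdef
  have hW : ∀ j, W.eval (a j) = 0 := fun j => by
    rw [hWdef, eval_prod]
    exact Finset.prod_eq_zero (Finset.mem_univ j) (by simp)
  have hmon : W.Monic := monic_prod_of_monic _ _ fun j _ => monic_X_sub_C _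
  have hdeg : W.natDegree = m := by
    rw [hWdef, natDegree_prod_of_monic _ _ fun j _ => monic_X_sub_C _]; simp
  have hsep : W.Separable := separable_prod_X_sub_C_iff.mpr hainj
  have hX : IsCoprime W X := by
    refine IsCoprime.prod_left fun j _ => ?_
    have := isCoprime_X_sub_C_of_isUnit_sub (R := K) (a := a j) (b := 0)
      (by simpa using ha0 j)
    simpa using this
  -- integrality of coefficients
  have hcoef : ∀ (v : HeightOneSpectrum (𝓞 K)) (l e n : ℕ),
      v.valuation K ((W ^ l * X ^ e).coeff n) ≤ 1 := by
    intro v l e n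
    have h1 : W ^ l * X ^ e =
        ((∏ j, (X - C (α j))) ^ l * X ^ e : (𝓞 K)[X]).map (algebraMap (𝓞 K) K) := by
      simp [hWdef, Polynomial.map_prod, ha]
    rw [h1, coeff_map]
    exact v.valuation_le_one (K := K) _
  -- nonvanishing
  have hnon : ∀ l : ℕ, ∃ e ≤ m, ePhi u (W ^ l * X ^ e) ≠ 0 := by
    intro l
    by_contra! hcon
    have hz := ePhi_eq_zero u a lm hu W hW hmon hdeg hsep hX l hcon
    obtain ⟨i, hi⟩ := hlam
    apply hi
    refine Fin.cases ?_ (fun j => ?_) i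
    · have h1 := hz (monomial 0 1)
      rw [ePhi_monomial, mul_one] at h1
      have h2 : u 0 = (lam 0 : K) := by simp [hudef, hp, ePart]
      rw [h2] at h1
      exact RingOfIntegers.coe_injective (by simpa using h1)
    · have h1 := ePhi_rec u a lm hu (∏ k ∈ Finset.univ.erase j, (X - C (a k)))
      rw [hz, hz, zero_add, Finset.sum_eq_single j] at h1
      · rcases mul_eq_zero.mp h1.symm with h2 | h2
        · exact RingOfIntegers.coe_injective (by simpa [hlm] using h2)
        · exfalso
          rw [eval_prod, Finset.prod_eq_zero_iff] at h2
          obtain ⟨k, hk, hk2⟩ := h2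
          simp only [eval_sub, eval_X, eval_C, sub_eq_zero] at hk2
          exact (Finset.ne_of_mem_erase hk) (hainj hk2).symm
      · intro k _ hk
        rw [eval_prod, Finset.prod_eq_zero (i := k) (by simp [hk]) (by simp), mul_zero]
      · simp
  -- the bad primes
  set B : ℕ := ∏ v ∈ hfin.toFinset, Ideal.absNorm v.asIdeal with hB
  have hB0 : B ≠ 0 := by
    rw [hB, Finset.prod_ne_zero_iff]
    intro v _
    rw [Ne, Ideal.absNorm_eq_zero_iff]; exact v.ne_bot
  have hBmem : ∀ v ∈ hfin.toFinset, (B : 𝓞 K) ∈ v.asIdeal := by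
    intro v hv
    obtain ⟨c, hc⟩ := Finset.dvd_prod_of_mem (fun v : HeightOneSpectrum (𝓞 K) =>
      Ideal.absNorm v.asIdeal) hv
    rw [hB, hc, Nat.cast_mul]
    exact Ideal.mul_mem_right _ _ (Ideal.absNorm_mem _)
  -- archimedean smallness
  have harch : ∀ᶠ l : ℕ in atTop, ∀ w : InfinitePlace K, ∀ e ≤ m,
      w (ePhi u (W ^ l * X ^ e)) * (B : ℝ) ^ (m * l + m + l) / (l ! : ℕ) < 1 := by
    rw [eventually_all]
    intro w
    obtain ⟨c, M, A, hc, hM, hA, hbd⟩ := arch_phi u a lm hu w.1 (fun n => by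
      have : w.1 ((n : K) + 1) = (n : ℝ) + 1 := by
        have h2 : w (((n + 1 : ℕ)) : K) = ((n + 1 : ℕ) : ℝ) := by
          rw [← InfinitePlace.norm_embedding_eq, map_natCast, Complex.norm_natCast]
        have h3 : w.1 ((n : K) + 1) = w (((n + 1 : ℕ)) : K) := by push_cast; rfl
        rw [h3, h2]; push_cast; rfl
      rw [this]
      have := Nat.cast_nonneg (α := ℝ) n
      linarith) W
    have hlim := (FloorSemiring.tendsto_pow_div_factorial_atTop
      (A * (B : ℝ) ^ (m + 1))).const_mul (M * c ^ m * (B : ℝ) ^ m)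
    rw [mul_zero] at hlim
    filter_upwards [hlim.eventually (gt_mem_nhds zero_lt_one)] with l hl e he
    refine lt_of_le_of_lt ?_ hl
    rw [← mul_div_assoc]
    have h1 : w (ePhi u (W ^ l * X ^ e)) ≤ M * A ^ l * c ^ m := by
      refine (hbd l e).trans ?_
      gcongr
    calc _ ≤ (M * A ^ l * c ^ m) * (B : ℝ) ^ (m * l + m + l) / (l ! : ℕ) := by gcongr
      _ = _ := by
        rw [mul_pow, ← pow_mul]
        congr 1
        ring
  obtain ⟨l, hl⟩ := harch.exists
  obtain ⟨e, he, hd⟩ := hnon l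
  set d := ePhi u (W ^ l * X ^ e) with hddef
  set L := m * l + m with hL
  have hdegQ : (W ^ l * X ^ e).natDegree ≤ L := by
    refine natDegree_mul_le.trans ?_
    rw [natDegree_X_pow, hmon.natDegree_pow, hdeg, mul_comm l m]
    omega
  have hfac : ∀ n : ℕ, ((n ! : ℕ) : K) ≠ 0 := fun n =>
    Nat.cast_ne_zero.mpr (Nat.factorial_ne_zero n)
  have hvfac : ∀ (v : HeightOneSpectrum (𝓞 K)) (n : ℕ), v.valuation K ((n ! : ℕ) : K) ≠ 0 :=
    fun v n => (Valuation.ne_zero_iff _).mpr (hfac n)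
  have hintegral : ∀ v : HeightOneSpectrum (𝓞 K),
      v.valuation K (d * (B : K) ^ (L + l) / ((l ! : ℕ) : K)) ≤ 1 := by
    intro v
    rw [map_div₀, map_mul, map_pow]
    refine div_le_one_of_le₀ ?_ (_root_.zero_le)
    by_cases hv : v ∈ hfin.toFinset
    · have hb := nonarch_bad (v.valuation K) (val_nat_le_one v) u (fun n => by
        rw [hudef]
        simp only
        rw [mul_div_cancel₀ _ (hfac n)]
        exact ePart_int v α (lam 0) (fun j => lam j.succ) n) (W ^ l * X ^ e)
        (hcoef v l e) L hdegQ
      have h1 := val_pow_le_factorial (K := K) v B hB0 (hBmem v hv) L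
      have h2 := val_pow_le_factorial (K := K) v B hB0 (hBmem v hv) l
      rw [map_mul] at hb
      rw [pow_add, ← mul_assoc]
      calc _ ≤ v.valuation K d * v.valuation K ((L ! : ℕ) : K) * v.valuation K ((l ! : ℕ) : K) := by
            gcongr
        _ ≤ 1 * v.valuation K ((l ! : ℕ) : K) := by
            gcongr
            rw [mul_comm]; exact hb
        _ = _ := one_mul _
    · have hz : algebraMap K (v.adicCompletion K) ((lam 0 : K)) +
        ∑ j : Fin m, algebraMap K (v.adicCompletion K) ((lam j.succ : K)) *
          eulerF K v (α j) = 0 := by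
        by_contra hne
        exact hv (hfin.mem_toFinset.mpr hne)
      have hg := nonarch_good (v.valuation K) (val_nat_le_one v) u (fun n => by
        rw [hudef]
        simp only
        rw [map_div₀]
        exact div_le_one_of_le₀ (good_place v α (lam 0) (fun j => lam j.succ) hz n)
          (_root_.zero_le)) (W ^ l * X ^ e) (hcoef v l e) l
      rw [ePhi_iter u a lm hu W hW] at hg
      exact (mul_le_of_le_one_right' (pow_le_one' (val_nat_le_one v B) _)).trans hg
  obtain ⟨E, hE⟩ := HeightOneSpectrum.mem_integers_of_valuation_le_one K _ hintegral
  have hE0 : E ≠ 0 := by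
    rintro rfl
    rw [map_zero] at hE
    exact (div_ne_zero (mul_ne_zero hd (pow_ne_zero _ (Nat.cast_ne_zero.mpr hB0))) (hfac l)) hE.symm
  have hsmall : ∀ w : InfinitePlace K, w (E : K) < 1 := by
    intro w
    have h1 : (E : K) = d * (B : K) ^ (L + l) / ((l ! : ℕ) : K) := hE
    have hnat : ∀ n : ℕ, w (n : K) = n := fun n => by
      rw [← InfinitePlace.norm_embedding_eq, map_natCast, Complex.norm_natCast]
    rw [h1, map_div₀, map_mul, map_pow, hnat, hnat]
    exact hl w e he
  obtain ⟨w⟩ : Nonempty (InfinitePlace K) := inferInstance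
  exact absurd (InfinitePlace.one_le_of_lt_one (w := w) hE0 fun z _ => hsmall z)
    (not_le.mpr (hsmall w))
end

section
/- Let K be a number field of degree κ, α_1,…,α_m ∈ Z_K pairwise distinct and nonzero, and let H satisfy log H ≥ s·e^s where s = max{e^κ + 1, c_1 + 1, (m+3)^2 + 1}. Suppose λ_0,λ_1,…,λ_m ∈ Z_K are such that at least one of them is non-zero and Π_{v∈V_∞} max_{0≤i≤m} ‖λ_i‖_v ≤ H. Then there exists a prime p in the open interval ( log(log H / log log H), 17m·log H / log log H ) and a place v' of K lying over p such that ‖λ_0 + λ_1 F_{v'}(α_1) + … + λ_m F_{v'}(α_m)‖_{v'} > H^{−(m+1) − 114 m^2 · (log log log H)/(log log H)}. -/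
open NumberField IsDedekindDomain Nat Finset Filter

/-- The paper's normalised absolute value on the `v`-adic completion of a number
field `K` of degree `κ`: `‖x‖_v = |x|_v ^ (κ_v/κ) = (N(v)^(−ord_v x))^(1/κ)`. -/
noncomputable def compNorm (K : Type*) [Field K] [NumberField K]
    (v : HeightOneSpectrum (𝓞 K)) (x : v.adicCompletion K) : ℝ :=
  ((WithZeroMulInt.toNNReal
      (by
        simp only [ne_eq, Nat.cast_eq_zero]
        exact Ideal.absNorm_ne_zero_iff_mem_nonZeroDivisors.mpr
          (mem_nonZeroDivisors_of_ne_zero v.ne_bot)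
        : (Ideal.absNorm v.asIdeal : NNReal) ≠ 0)
      (Valued.v x) : NNReal) : ℝ) ^ ((Module.finrank ℚ K : ℝ))⁻¹

/-- The paper's normalised absolute value attached to an Archimedean place `w` of a
number field `K` of degree `κ`:  `‖x‖_w = (w x) ^ (mult w / κ)`. -/
noncomputable def infNorm (K : Type*) [Field K] [NumberField K]
    (w : InfinitePlace K) (x : K) : ℝ :=
  (w x) ^ ((w.mult : ℝ) / (Module.finrank ℚ K : ℝ))

lemma aux_log_factorial_le (n : ℕ) (hn : 1 ≤ n) :
    Real.log (n ! : ℕ) ≤ ((n : ℝ) + 1) * Real.log n - n + 1 := by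
  induction n, hn using Nat.le_induction with
  | base => simp
  | succ n hn ih =>
    have hn' : (0 : ℝ) < n := by exact_mod_cast hn
    rw [Nat.factorial_succ, Nat.cast_mul, Real.log_mul (by positivity) (by positivity)]
    have h1 : Real.log n - Real.log (n + 1) ≤ - (1 / (n + 1)) := by
      rw [← Real.log_div (by positivity) (by positivity)]
      refine (Real.log_le_sub_one_of_pos (by positivity)).trans (le_of_eq ?_)
      field_simp; ring
    have h2 : ((n : ℝ) + 1) * (Real.log n - Real.log (n + 1)) ≤ -1 := by
      have := mul_le_mul_of_nonneg_left h1 (by positivity : (0 : ℝ) ≤ n + 1)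
      refine this.trans (le_of_eq ?_)
      field_simp
    push_cast
    nlinarith

lemma aux_factorial_log (n : ℕ) :
    Real.log (n ! : ℕ) = ∑ p ∈ primesLE n, ((n !).factorization p : ℝ) * Real.log p := by
  have h0 : n ! ≠ 0 := Nat.factorial_ne_zero n
  have h := Nat.prod_factorization_pow_eq_self h0
  conv_lhs => rw [← h]
  rw [Finsupp.prod_of_support_subset (s := primesLE n)]
  · push_cast
    rw [Real.log_prod]
    · refine Finset.sum_congr rfl fun p hp => ?_
      rw [Real.log_pow]
    · intro p hp
      have := (Nat.mem_primesLE.mp hp).2.pos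
      positivity
  · intro p hp
    rw [Nat.support_factorization, Nat.mem_primeFactors] at hp
    exact Nat.mem_primesLE.mpr ⟨(hp.1.dvd_factorial).mp hp.2.1, hp.1⟩
  · simp

lemma aux_sum_log_div (n : ℕ) (hn : 10 ≤ n) :
    ∑ p ∈ primesLE n, Real.log p / p ≤ Real.log n + 0.45 := by
  have hn' : (10 : ℝ) ≤ n := by exact_mod_cast hn
  have h1 := aux_log_factorial_le n (by omega)
  rw [aux_factorial_log] at h1
  have h2 : ∑ p ∈ primesLE n, (((n : ℝ) + 1) * (Real.log p / p) - Real.log p) ≤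
      ∑ p ∈ primesLE n, ((n !).factorization p : ℝ) * Real.log p := by
    refine Finset.sum_le_sum fun p hp => ?_
    obtain ⟨hpn, hp⟩ := Nat.mem_primesLE.mp hp
    have hp0 : (0 : ℝ) < p := by exact_mod_cast hp.pos
    have hlog : 0 ≤ Real.log p := Real.log_natCast_nonneg p
    have h3 : n / p ≤ (n !).factorization p := by
      have hd : p ^ (n / p) ∣ n ! := by
        refine (pow_dvd_pow_of_dvd dvd_rfl _).trans ?_
        have h4 : p ^ (n / p) ∣ (p * (n / p))! := by
          generalize n / p = k
          induction k with
          | zero => simp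
          | succ k ih =>
            rw [pow_succ, mul_add, mul_one]
            refine (mul_dvd_mul ih (Nat.dvd_factorial hp.pos le_rfl)).trans
              (Nat.factorial_mul_factorial_dvd_factorial_add _ _)
        exact h4.trans (Nat.factorial_dvd_factorial (Nat.mul_div_le n p))
      exact (hp.pow_dvd_iff_le_factorization (Nat.factorial_ne_zero n)).mp hd
    have h5 : n + 1 ≤ p * ((n / p) + 1) := Nat.lt_mul_div_succ n hp.pos
    have h6 : ((n : ℝ) + 1) / p ≤ ((n !).factorization p : ℝ) + 1 := by
      rw [div_le_iff₀ hp0]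
      have : n + 1 ≤ ((n !).factorization p + 1) * p := by nlinarith
      exact_mod_cast this
    have h7 := mul_le_mul_of_nonneg_right h6 hlog
    calc _ = ((n : ℝ) + 1) / p * Real.log p - Real.log p := by ring
      _ ≤ _ := by linarith
  rw [Finset.sum_sub_distrib, ← Finset.mul_sum, ← Chebyshev.theta_eq_sum_primesLE_log] at h2
  have h3 := Chebyshev.theta_le_log4_mul_x (x := n) (by positivity)
  have h4 : Real.log 4 < 1.3863 := by
    rw [show (4 : ℝ) = 2 ^ 2 by norm_num, Real.log_pow]
    have := Real.log_two_lt_d9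
    push_cast; linarith
  by_contra! hc
  have h5 := mul_lt_mul_of_pos_left hc (by positivity : (0 : ℝ) < n + 1)
  nlinarith

lemma aux_sum_log_div2 (n : ℕ) (hn : 4 ≤ n) :
    ∑ p ∈ primesLE n, Real.log p / (p * (p - 1)) ≤ 1.2 - (1.25 + Real.log n) / n := by
  induction n, hn using Nat.le_induction with
  | base =>
    have : primesLE 4 = {2, 3} := by decide
    rw [this, Finset.sum_pair (by norm_num)]
    have h2 := Real.log_two_lt_d9
    have h3 : Real.log 3 < 1.15 := by
      rw [Real.log_lt_iff_lt_exp (by norm_num)]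
      have := Real.exp_one_gt_d9
      have h := Real.add_one_le_exp (0.15 : ℝ)
      rw [show (1.15 : ℝ) = 1 + 0.15 by norm_num, Real.exp_add]
      nlinarith
    have h4 : Real.log 4 < 1.3863 := by
      rw [show (4 : ℝ) = 2 ^ 2 by norm_num, Real.log_pow]
      push_cast; linarith
    push_cast
    norm_num
    linarith
  | succ n hn ih =>
    have hn' : (4 : ℝ) ≤ n := by exact_mod_cast hn
    have hsub : ∑ p ∈ primesLE (n + 1), Real.log p / (p * (p - 1)) ≤
        ∑ p ∈ primesLE n, Real.log p / (p * (p - 1)) + Real.log (n + 1) / ((n + 1) * n) := by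
      have hl : 0 ≤ Real.log ((n : ℝ) + 1) := Real.log_nonneg (by linarith)
      have hs : primesLE (n + 1) ⊆ insert (n + 1) (primesLE n) := by
        intro p hp
        obtain ⟨h1, h2⟩ := Nat.mem_primesLE.mp hp
        rcases Nat.lt_or_ge n p with h | h
        · exact Finset.mem_insert.mpr (Or.inl (by omega))
        · exact Finset.mem_insert.mpr (Or.inr (Nat.mem_primesLE.mpr ⟨h, h2⟩))
      refine (Finset.sum_le_sum_of_subset_of_nonneg hs ?_).trans ?_
      · intro p hp _
        rcases Nat.eq_zero_or_pos p with rfl | hp0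
        · simp
        have : (1 : ℝ) ≤ p := by exact_mod_cast hp0
        have h5 := Real.log_natCast_nonneg p
        have : (0 : ℝ) ≤ p - 1 := by linarith
        positivity
      · rw [Finset.sum_insert]
        · push_cast
          rw [add_sub_cancel_right, add_comm]
        · intro h
          have := (Nat.mem_primesLE.mp h).1
          omega
    refine hsub.trans ?_
    have h1 : Real.log (n + 1) - Real.log n ≤ 1 / n := by
      rw [← Real.log_div (by positivity) (by positivity)]
      refine (Real.log_le_sub_one_of_pos (by positivity)).trans (le_of_eq ?_)
      field_simp; ring
    have h2 : Real.log (n + 1) / ((n + 1) * n) ≤ (1.25 + Real.log n) / n - (1.25 + Real.log (n + 1)) / (n + 1) := by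
      rw [div_sub_div _ _ (by positivity) (by positivity), mul_comm ((n : ℝ) + 1) n]
      refine div_le_div_of_nonneg_right ?_ (by positivity)
      have h3 := mul_le_mul_of_nonneg_left h1 (by positivity : (0 : ℝ) ≤ n + 1)
      have h4 : ((n : ℝ) + 1) * (1 / n) ≤ 1.25 := by
        rw [mul_one_div, div_le_iff₀ (by positivity)]; linarith
      nlinarith
    push_cast
    linarith

lemma aux_mertens (n : ℕ) (hn : 10 ≤ n) :
    ∑ p ∈ primesLE n, Real.log p / (p - 1) ≤ Real.log n + 1.65 := by
  have h1 := aux_sum_log_div n hn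
  have h2 := aux_sum_log_div2 n (by omega)
  have h3 : 0 ≤ (1.25 + Real.log n) / n := by
    have := Real.log_natCast_nonneg n
    positivity
  have : ∑ p ∈ primesLE n, Real.log p / (p - 1) =
      ∑ p ∈ primesLE n, Real.log p / p + ∑ p ∈ primesLE n, Real.log p / (p * (p - 1)) := by
    rw [← Finset.sum_add_distrib]
    refine Finset.sum_congr rfl fun p hp => ?_
    have hp1 : (1 : ℝ) < p := by exact_mod_cast (Nat.mem_primesLE.mp hp).2.one_lt
    have : (p : ℝ) - 1 ≠ 0 := by linarith
    field_simp
    ring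
  rw [this]
  linarith

lemma aux_split (N l n : ℕ) : ∃ D S : ℕ, N ! * l ! = D * S ∧ 0 < S ∧
    (∀ p : ℕ, p.Prime → p ∣ D → n < p) ∧
    Real.log S ≤ ((N : ℝ) + l) * ∑ p ∈ primesLE n, Real.log p / (p - 1) := by
  have hM : N ! * l ! ≠ 0 := by positivity
  set M := N ! * l ! with hMdef
  refine ⟨∏ p ∈ M.primeFactors with ¬ p ≤ n, p ^ M.factorization p,
    ∏ p ∈ M.primeFactors with p ≤ n, p ^ M.factorization p, ?_, ?_, ?_, ?_⟩
  · rw [mul_comm, Finset.prod_filter_mul_prod_filter_not]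
    exact (Nat.prod_factorization_pow_eq_self hM).symm
  · refine Finset.prod_pos fun p hp => ?_
    have := (Nat.prime_of_mem_primeFactors (Finset.mem_filter.mp hp).1).pos
    positivity
  · intro p hp hd
    obtain ⟨q, hq, hpq⟩ := (hp.prime.dvd_finsetProd_iff _).mp hd
    obtain ⟨hq1, hq2⟩ := Finset.mem_filter.mp hq
    have := (Nat.prime_dvd_prime_iff_eq hp (Nat.prime_of_mem_primeFactors hq1)).mp
      (hp.dvd_of_dvd_pow hpq)
    omega
  · push_cast
    rw [Real.log_prod, Finset.mul_sum]
    · have hsub : {p ∈ M.primeFactors | p ≤ n} ⊆ primesLE n := by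
        intro p hp
        obtain ⟨h1, h2⟩ := Finset.mem_filter.mp hp
        exact Nat.mem_primesLE.mpr ⟨h2, Nat.prime_of_mem_primeFactors h1⟩
      refine (Finset.sum_le_sum_of_subset_of_nonneg hsub ?_).trans (Finset.sum_le_sum ?_)
      · intro p hp _
        exact Real.log_nonneg (by
          have := (Nat.mem_primesLE.mp hp).2.pos
          exact one_le_pow₀ (by exact_mod_cast this))
      · intro p hp
        obtain ⟨hpn, hpp⟩ := Nat.mem_primesLE.mp hp
        have hp1 : (1 : ℝ) < p := by exact_mod_cast hpp.one_lt
        rw [Real.log_pow, mul_div_assoc']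
        rw [le_div_iff₀ (by linarith), mul_right_comm]
        refine mul_le_mul_of_nonneg_right ?_ (Real.log_natCast_nonneg p)
        have := Fact.mk hpp
        have key : ∀ k : ℕ, ((k !).factorization p : ℝ) * (p - 1) ≤ k := by
          intro k
          have h := sub_one_mul_padicValNat_factorial (p := p) k
          rw [← Nat.factorization_def _ hpp] at h
          have h2 : (p - 1) * (k !).factorization p ≤ k := h ▸ Nat.sub_le _ _
          have h3 : (((p - 1 : ℕ) : ℝ)) * (k !).factorization p ≤ k := by exact_mod_cast h2
          rw [Nat.cast_sub hpp.one_lt.le] at h3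
          push_cast at h3
          linarith
        rw [hMdef, Nat.factorization_mul (by positivity) (by positivity)]
        have := key N
        have := key l
        push_cast [Finsupp.add_apply]
        linarith
    · intro p hp
      have := (Nat.prime_of_mem_primeFactors (Finset.mem_filter.mp hp).1).pos
      positivity


lemma aux_log_tangent (y a : ℝ) (hy : 0 < y) (ha : 0 < a) :
    Real.log y ≤ y / a + Real.log a - 1 := by
  have := Real.log_le_sub_one_of_pos (div_pos hy ha)
  rw [Real.log_div hy.ne' ha.ne'] at this
  linarith

lemma aux_log_pow_two (k : ℕ) : (k : ℝ) * 0.69314718 < Real.log (2 ^ k) + 0.00000001 * k + 0.0000000001 ∧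
    Real.log (2 ^ k) ≤ k * 0.6931471808 := by
  rw [Real.log_pow]
  have h1 := Real.log_two_gt_d9
  have h2 := Real.log_two_lt_d9
  have : (0 : ℝ) ≤ k := by positivity
  constructor <;> nlinarith

lemma aux_log16 : Real.log 16 < 2.7726 ∧ 2.7725 < Real.log 16 := by
  rw [show (16 : ℝ) = 2 ^ 4 by norm_num, Real.log_pow]
  have h1 := Real.log_two_gt_d9
  have h2 := Real.log_two_lt_d9
  push_cast
  constructor <;> linarith

lemma aux_log32 : Real.log 32 < 3.4658 ∧ 3.4657 < Real.log 32 := by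
  rw [show (32 : ℝ) = 2 ^ 5 by norm_num, Real.log_pow]
  have h1 := Real.log_two_gt_d9
  have h2 := Real.log_two_lt_d9
  push_cast
  constructor <;> linarith

/-- The key numerical inequality. -/
lemma aux_key (m : ℕ) (hm : 1 ≤ m) (Y : ℝ) (hY : ((m : ℝ) + 3) ^ 2 + 3.77 ≤ Y) :
    (2 * Real.log Y + 1 + (m + 1) * (Real.log Y + 1.65) + 1) * Y <
      40 * m * Real.log Y * (Y - (2 * Real.log Y + 1 + (m + 1) * (Real.log Y + 1.65))) := by
  have h16 := aux_log16
  have h32 := aux_log32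
  have hm' : (1 : ℝ) ≤ m := by exact_mod_cast hm
  have hY0 : 19.77 ≤ Y := by nlinarith
  have ht16 := aux_log_tangent Y 16 (by linarith) (by norm_num)
  set u := Real.log Y with hu
  rcases Nat.lt_or_ge m 3 with h3 | h3
  · interval_cases m
    · have hu1 : 2.96 ≤ u := by
        have := Real.log_le_log (by norm_num) hY0
        have h2 := Real.one_sub_inv_le_log_of_pos (x := 19.77 / 16) (by norm_num)
        rw [Real.log_div (by norm_num) (by norm_num)] at h2
        norm_num at h2 h16 this ⊢
        linarith
      have hYu : 16 * u - 28.3616 ≤ Y := by linarith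
      push_cast
      nlinarith
    · have hY1 : 28.77 ≤ Y := by norm_num at hY ⊢; linarith
      have hu1 : 3.35 ≤ u := by
        have := Real.log_le_log (by norm_num) hY1
        have h2 := Real.one_sub_inv_le_log_of_pos (x := 28.77 / 32) (by norm_num)
        rw [Real.log_div (by norm_num) (by norm_num)] at h2
        norm_num at h2 h32 this ⊢
        linarith
      have hYu : 16 * u - 28.3616 ≤ Y := by linarith
      push_cast
      nlinarith
  · have hm3 : (3 : ℝ) ≤ m := by exact_mod_cast h3
    have hY1 : 39.77 ≤ Y := by nlinarith
    have hu1 : 3.64 ≤ u := by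
      have := Real.log_le_log (by norm_num) hY1
      have h2 := Real.one_sub_inv_le_log_of_pos (x := 39.77 / 32) (by norm_num)
      rw [Real.log_div (by norm_num) (by norm_num)] at h2
      norm_num at h2 h32 this ⊢
      linarith
    obtain ⟨z, hz0, hz⟩ : ∃ z : ℝ, 0 < z ∧ z ^ 2 = Y :=
      ⟨√Y, Real.sqrt_pos.mpr (by linarith), Real.sq_sqrt (by linarith)⟩
    have hz1 : 6.3 ≤ z := by nlinarith
    have hmz : (m : ℝ) + 3 ≤ z := by nlinarith
    have huz : u = 2 * Real.log z := by rw [hu, ← hz, Real.log_pow]; norm_num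
    have hz8 := aux_log_tangent z 8 hz0 (by norm_num)
    have h8 : Real.log 8 < 2.0795 := by
      rw [show (8 : ℝ) = 2 ^ 3 by norm_num, Real.log_pow]
      have h2 := Real.log_two_lt_d9
      push_cast; linarith
    have huz2 : u ≤ z / 4 + 2.159 := by linarith
    have hE : 2 * u + 1 + (m + 1) * (u + 1.65) ≤ 0.82 * Y := by
      have h1 : (m + 3) * u ≤ z * (z / 4 + 2.159) :=
        mul_le_mul hmz huz2 (by linarith) hz0.le
      nlinarith
    have hmu : (m : ℝ) * 3.64 ≤ m * u := by nlinarith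
    have h4 : (2 * u + 1 + (m + 1) * (u + 1.65) + 1) < 7.2 * (m * u) := by nlinarith
    have h5 : 0 < (m : ℝ) * u := by nlinarith
    have h6 := mul_lt_mul_of_pos_right h4 (by linarith : 0 < Y)
    have h7 := mul_le_mul_of_nonneg_left hE (by linarith : 0 ≤ 40 * (m * u))
    linarith

lemma aux_mu (m : ℕ) (hm : 1 ≤ m) (Y : ℝ) (hY : ((m : ℝ) + 3) ^ 2 + 3.77 ≤ Y) :
    m * Real.log Y ≤ 0.39 * Y := by
  have hm' : (1 : ℝ) ≤ m := by exact_mod_cast hm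
  have hY0 : 19.77 ≤ Y := by nlinarith
  obtain ⟨z, hz0, hz⟩ : ∃ z : ℝ, 0 < z ∧ z ^ 2 = Y :=
    ⟨√Y, Real.sqrt_pos.mpr (by linarith), Real.sq_sqrt (by linarith)⟩
  have hz1 : 4 ≤ z := by nlinarith
  have hmz : (m : ℝ) + 3 ≤ z := by nlinarith
  have huz : Real.log Y = 2 * Real.log z := by rw [← hz, Real.log_pow]; norm_num
  have hz8 := aux_log_tangent z 8 hz0 (by norm_num)
  have h8 : Real.log 8 < 2.0795 := by
    rw [show (8 : ℝ) = 2 ^ 3 by norm_num, Real.log_pow]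
    have h2 := Real.log_two_lt_d9
    push_cast; linarith
  have h1 : m * Real.log Y ≤ (z - 3) * (z / 4 + 2.159) :=
    mul_le_mul (by linarith) (by linarith) (Real.log_nonneg (by linarith)) (by linarith)
  nlinarith [sq_nonneg (z - 8)]

set_option maxHeartbeats 2000000 in
lemma aux_params (m : ℕ) (hm : 1 ≤ m) (c₁ s T : ℝ) (hc : 1 ≤ c₁) (hcs : c₁ ≤ s)
    (hs : ((m : ℝ) + 3) ^ 2 + 1 ≤ s) (hT : s * Real.exp s ≤ T) :
    10 ≤ ⌊Real.log (T / Real.log T)⌋₊ ∧ 0 < Real.log T ∧ 0 < T ∧ ∃ l : ℕ,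
    ((m * (l + 1) : ℕ) : ℝ) < 17 * m * T / Real.log T ∧
    (∀ N : ℕ, N ≤ m * (l + 1) →
      Real.log (m + 1) + T + (l + 1) * Real.log c₁ +
        (N + l) * (Real.log (⌊Real.log (T / Real.log T)⌋₊ : ℕ) + 1.65) < Real.log (l ! : ℕ)) ∧
    Real.log ((m * (l + 1))! : ℕ) + Real.log (l ! : ℕ) ≤
      (m + 1) * T + 114 * m ^ 2 * Real.log (Real.log T) / Real.log T * T := by
  have hm' : (1 : ℝ) ≤ m := by exact_mod_cast hm
  have hs17 : 17 ≤ s := by nlinarith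
  have h16 := aux_log16
  have hlogs : 2.77 ≤ Real.log s := by
    have := Real.log_le_log (by norm_num : (0 : ℝ) < 16) (by linarith : (16 : ℝ) ≤ s)
    linarith
  have hT0 : 0 < T := lt_of_lt_of_le (by positivity) hT
  have hYs : s + Real.log s ≤ Real.log T := by
    have := Real.log_le_log (by positivity) hT
    rw [Real.log_mul (by positivity) (by positivity), Real.log_exp] at this
    linarith
  set Y := Real.log T with hYdef
  have hY : ((m : ℝ) + 3) ^ 2 + 3.77 ≤ Y := by linarith
  have hmY : (m : ℝ) ≤ Y := by nlinarith
  have hY0 : 19.77 ≤ Y := by nlinarith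
  have hkey := aux_key m hm Y hY
  have hmu := aux_mu m hm Y hY
  have ht16 := aux_log_tangent Y 16 (by linarith) (by norm_num)
  have hu0 : 2.77 ≤ Real.log Y := hlogs.trans (Real.log_le_log (by linarith) (by linarith))
  have hcu : Real.log c₁ ≤ Real.log Y := Real.log_le_log (by linarith) (by linarith)
  have hmu2 : Real.log m ≤ Real.log Y / 2 := by
    have : Real.log ((m : ℝ) ^ 2) ≤ Real.log Y := Real.log_le_log (by positivity) (by linarith [sq_nonneg (m : ℝ)])
    rw [Real.log_pow] at this
    push_cast at this
    linarith
  have h17u : Real.log 17 ≤ Real.log Y := Real.log_le_log (by norm_num) (by linarith)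
  have hlogX : Real.log (T / Y) = Y - Real.log Y := by
    rw [Real.log_div hT0.ne' (by linarith)]
  set X := T / Y with hX
  have hX0 : 0 < X := by positivity
  have hXY : X * Y = T := by rw [hX]; field_simp
  set u := Real.log Y with hu
  have huY : u ≤ 0.16 * Y := by linarith
  have hXsq : Y ^ 2 ≤ X := by
    have h1 := Real.pow_div_factorial_le_exp (x := Y - u) (by linarith) 3
    rw [← hlogX, Real.exp_log hX0, hlogX] at h1
    have h2 : (0.84 * Y) ^ 3 ≤ (Y - u) ^ 3 := pow_le_pow_left₀ (by linarith) (by linarith) 3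
    have h3 : (3 ! : ℝ) = 6 := by norm_num [Nat.factorial]
    rw [h3] at h1
    have h4 : Y ^ 2 * 19.77 ≤ Y ^ 2 * Y := mul_le_mul_of_nonneg_left hY0 (sq_nonneg Y)
    linarith [sq_nonneg Y]
  have hXY19 : 19.77 * Y ≤ X := by
    have : 19.77 * Y ≤ Y * Y := mul_le_mul_of_nonneg_right hY0 (by linarith)
    linarith
  have hn10 : 10 ≤ ⌊Y - u⌋₊ := by
    rw [Nat.le_floor_iff (by linarith)]
    push_cast; linarith
  have hlogn : Real.log (⌊Y - u⌋₊ : ℕ) ≤ u := by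
    refine Real.log_le_log (by exact_mod_cast (by omega : 0 < ⌊Y - u⌋₊)) ?_
    refine (Nat.floor_le (by linarith)).trans (by linarith)
  rw [hlogX]
  refine ⟨hn10, by linarith, hT0, ?_⟩
  set lam := 1 + 40 * m * u / Y with hlam
  have hlamY : lam * Y = Y + 40 * m * u := by rw [hlam]; field_simp
  have hlam1 : 1 ≤ lam := by
    rw [hlam]
    have : 0 ≤ 40 * m * u / Y := by positivity
    linarith
  have hlam2 : lam ≤ 16.6 := by
    have : 40 * m * u / Y ≤ 15.6 := by
      rw [div_le_iff₀ (by linarith)]; linarith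
    linarith
  have hl1 : lam * X ≤ (⌈lam * X⌉₊ : ℕ) := Nat.le_ceil _
  have hl2 : ((⌈lam * X⌉₊ : ℕ) : ℝ) < lam * X + 1 := Nat.ceil_lt_add_one (by positivity)
  generalize ⌈lam * X⌉₊ = l at hl1 hl2
  have hX390 : 390 ≤ X := by linarith
  have hlamX1 : 1 * X ≤ lam * X := mul_le_mul_of_nonneg_right hlam1 hX0.le
  have hlamX2 : lam * X ≤ 16.6 * X := mul_le_mul_of_nonneg_right hlam2 hX0.le
  have hlX : X ≤ l := by linarith
  have hl17 : (l : ℝ) + 1 < 17 * X := by linarith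
  have hl0 : (0 : ℝ) < l := by linarith
  refine ⟨l, ?_, ?_, ?_⟩
  · rw [mul_div_assoc, ← hX]
    push_cast
    have := mul_lt_mul_of_pos_left hl17 (by linarith : (0 : ℝ) < m)
    linarith
  · intro N hN
    have hN' : (N : ℝ) ≤ m * (l + 1) := by exact_mod_cast hN
    have hfac : (l : ℝ) * Real.log l - l ≤ Real.log (l ! : ℕ) := by
      have h1 := Real.pow_div_factorial_le_exp (x := l) hl0.le l
      have h2 := Real.log_le_log (by positivity) h1
      rw [Real.log_exp, Real.log_div (by positivity) (by positivity), Real.log_pow] at h2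
      linarith
    have hlogl : Y - u ≤ Real.log l := hlogX ▸ Real.log_le_log hX0 hlX
    have h1 : (l : ℝ) * (Y - u) ≤ l * Real.log l := mul_le_mul_of_nonneg_left hlogl hl0.le
    have h2 : ((N : ℝ) + l) * (Real.log (⌊Y - u⌋₊ : ℕ) + 1.65) ≤ (m * (l + 1) + l) * (u + 1.65) := by
      refine mul_le_mul (by linarith) (by linarith) ?_ (by positivity)
      have := Real.log_natCast_nonneg ⌊Y - u⌋₊
      linarith
    have h3 : ((l : ℝ) + 1) * Real.log c₁ ≤ (l + 1) * u := mul_le_mul_of_nonneg_left hcu (by linarith)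
    have h4 : Real.log ((m : ℝ) + 1) ≤ m := by
      have := Real.log_le_sub_one_of_pos (by linarith : (0 : ℝ) < m + 1)
      linarith
    -- main
    set E := 2 * u + 1 + (m + 1) * (u + 1.65) with hE
    have hE0 : 0 < E := by rw [hE]; positivity
    have hYE : 0 < Y - E := by
      have h40 : 0 < 40 * (m : ℝ) * u := by positivity
      have : 0 < 40 * (m : ℝ) * u * (Y - E) := lt_trans (by positivity) hkey
      exact pos_of_mul_pos_right this h40.le
    have h5 : (Y + 1) < lam * (Y - E) := by
      have : (Y + 1) * Y < lam * (Y - E) * Y := by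
        have : lam * (Y - E) * Y = (Y + 40 * m * u) * (Y - E) := by rw [← hlamY]; ring
        rw [this]; linarith
      exact lt_of_mul_lt_mul_right this (by linarith)
    have h6 : X * (Y + 1) < X * (lam * (Y - E)) := mul_lt_mul_of_pos_left h5 hX0
    have h7 : lam * X * (Y - E) ≤ l * (Y - E) := mul_le_mul_of_nonneg_right hl1 hYE.le
    have h8 : (m : ℝ) + u + m * (u + 1.65) ≤ X := by
      linarith
    have hlE : (l : ℝ) * E = l * (2 * u + 1 + (m + 1) * (u + 1.65)) := by rw [hE]
    linarith
  · have hlogl : Real.log ((l : ℝ) + 1) ≤ Y := by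
      have := Real.log_le_log (by linarith) hl17.le
      rw [Real.log_mul (by norm_num) hX0.ne', hlogX] at this
      linarith
    have hlogl' : Real.log (l : ℝ) ≤ Y := (Real.log_le_log hl0 (by linarith)).trans hlogl
    have hf : ∀ k : ℕ, 0 < k → Real.log (k ! : ℕ) ≤ k * Real.log k := by
      intro k hk
      rw [← Real.log_pow]
      refine Real.log_le_log (by positivity) ?_
      exact_mod_cast Nat.factorial_le_pow k
    have hl0' : 0 < l := by exact_mod_cast hl0
    have h1 := hf l hl0'
    have h2 := hf (m * (l + 1)) (by positivity)
    have h3 : Real.log ((m * (l + 1) : ℕ) : ℝ) ≤ u / 2 + Y := by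
      push_cast
      rw [Real.log_mul (by positivity) (by positivity)]
      linarith
    have h4 : ((m * (l + 1) : ℕ) : ℝ) * Real.log ((m * (l + 1) : ℕ) : ℝ) ≤
        m * (l + 1) * (u / 2 + Y) := by
      push_cast at h3 ⊢
      exact mul_le_mul_of_nonneg_left h3 (by positivity)
    have h5 : (l : ℝ) * Real.log l ≤ (l + 1) * Y :=
      mul_le_mul (by linarith) hlogl' (Real.log_nonneg (by linarith)) (by linarith)
    have h6 : (l : ℝ) + 1 ≤ lam * X + 2 := by linarith
    have h7 : 114 * (m : ℝ) ^ 2 * u / Y * T = 114 * m ^ 2 * u * X := by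
      rw [← hXY]; field_simp
    rw [h7]
    have h8 : ((m : ℝ) + 1) * (((l : ℝ) + 1) * Y) ≤ (m + 1) * ((lam * X + 2) * Y) := by gcongr
    have h9 : (lam * X + 2) * Y = T + 40 * m * u * X + 2 * Y := by
      rw [← hXY]; linear_combination X * hlamY
    rw [h9] at h8
    have h10 : (m : ℝ) * (l + 1) * (u / 2) ≤ m * (17 * X) * (u / 2) := by gcongr
    have huX : 0 < u * X := by positivity
    have h11 : (m : ℝ) * (u * X) ≤ m ^ 2 * (u * X) := by
      refine mul_le_mul_of_nonneg_right (le_self_pow₀ hm' (by norm_num)) huX.le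
    have h12 : ((m : ℝ) + 1) * (2 * Y) ≤ m ^ 2 * (u * X) := by
      have h13 : (m : ℝ) * (2.77 * X) ≤ m * (u * X) := by gcongr
      have h14 : (m : ℝ) * (19.77 * Y) ≤ m * X := by gcongr
      have h15 : 1 * Y ≤ m * Y := mul_le_mul_of_nonneg_right hm' (by linarith)
      linarith
    have h16' : 0 ≤ (m : ℝ) ^ 2 * (u * X) := by positivity
    linarith


section PadeAux

/-- The monic polynomial `∏ (X - α_j)^{e_j}`. -/
noncomputable def padeG {R : Type*} [CommRing R] {m : ℕ} (α : Fin m → R) (e : Fin m → ℕ) :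
    Polynomial R :=
  ∏ j, (Polynomial.X - Polynomial.C (α j)) ^ e j

/-- Weighted coefficients of `padeG`. -/
noncomputable def padeA {R : Type*} [CommRing R] {m : ℕ} (α : Fin m → R) (e : Fin m → ℕ)
    (i : ℕ) : R :=
  (padeG α e).coeff i * (((∑ j, e j).descFactorial ((∑ j, e j) - i) : ℕ) : R)

/-- Values at `t = 1` of the Pade polynomials. -/
noncomputable def padeVal {R : Type*} [CommRing R] {m : ℕ} (α : Fin m → R) (e : Fin m → ℕ)
    (c : Fin (m + 1)) : R :=
  Fin.cases (∑ i ∈ range ((∑ j, e j) + 1), padeA α e i)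
    (fun j => ∑ i ∈ range ((∑ j, e j) + 1), padeA α e i * ∑ n ∈ range i, ((n ! : ℕ) : R) * α j ^ n) c

/-- The Pade polynomials. -/
noncomputable def padePoly {R : Type*} [CommRing R] {m : ℕ} (α : Fin m → R) (e : Fin m → ℕ)
    (c : Fin (m + 1)) : Polynomial R :=
  Fin.cases (∑ i ∈ range ((∑ j, e j) + 1),
      Polynomial.C (padeA α e i) * Polynomial.X ^ ((∑ j, e j) - i))
    (fun j => ∑ i ∈ range ((∑ j, e j) + 1), Polynomial.C (padeA α e i) *
      Polynomial.X ^ ((∑ j, e j) - i) *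
      ∑ n ∈ range i, Polynomial.C (((n ! : ℕ) : R) * α j ^ n) * Polynomial.X ^ n) c

/-- Remainder coefficients. -/
noncomputable def padeR {R : Type*} [CommRing R] {m : ℕ} (α : Fin m → R) (e : Fin m → ℕ)
    (j : Fin m) (k : ℕ) : R :=
  ∑ i ∈ range ((∑ j, e j) + 1), padeA α e i * (((i + k)! : ℕ) * α j ^ (i + k))

variable {R : Type*} [CommRing R] {m : ℕ}

lemma padePoly_eval (α : Fin m → R) (e : Fin m → ℕ) (c : Fin (m + 1)) :
    (padePoly α e c).eval 1 = padeVal α e c := by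
  refine Fin.cases ?_ (fun j => ?_) c
  · simp [padePoly, padeVal, Polynomial.eval_finsetSum]
  · simp [padePoly, padeVal, Polynomial.eval_finsetSum]

lemma padeG_monic (α : Fin m → R) (e : Fin m → ℕ) : (padeG α e).Monic :=
  Polynomial.monic_prod_of_monic _ _ fun j _ => (Polynomial.monic_X_sub_C (α j)).pow _

lemma padeG_natDegree [Nontrivial R] (α : Fin m → R) (e : Fin m → ℕ) :
    (padeG α e).natDegree = ∑ j, e j := by
  rw [padeG, Polynomial.natDegree_prod_of_monic _ _
    (fun j _ => (Polynomial.monic_X_sub_C (α j)).pow _)]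
  refine Finset.sum_congr rfl fun j _ => ?_
  rw [(Polynomial.monic_X_sub_C (α j)).natDegree_pow, Polynomial.natDegree_X_sub_C, mul_one]

lemma padeR_eq [Nontrivial R] (α : Fin m → R) (e : Fin m → ℕ) (j : Fin m) (k : ℕ) :
    padeR α e j k = (((∑ j, e j)! : ℕ) : R) * (k ! : ℕ) * α j ^ k *
      (Polynomial.taylor (α j) (Polynomial.X ^ k * padeG α e)).coeff k := by
  have hdeg := padeG_natDegree α e
  rw [Polynomial.taylor_coeff, Polynomial.eval_eq_sum_range' (n := (∑ j, e j) + 1), padeR,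
    Finset.mul_sum]
  · refine Finset.sum_congr rfl fun i hi => ?_
    have hi' : i ≤ ∑ j, e j := Nat.lt_succ_iff.mp (Finset.mem_range.mp hi)
    rw [Polynomial.hasseDeriv_coeff, add_comm i k, Polynomial.coeff_X_pow_mul', if_pos (by omega),
      Nat.add_sub_cancel_left, padeA]
    have h1 : (∑ j, e j).descFactorial ((∑ j, e j) - i) * (k + i)! =
        (∑ j, e j)! * k ! * (k + i).choose k := by
      have h2 := Nat.factorial_mul_descFactorial (n := ∑ j, e j) (k := (∑ j, e j) - i) (by omega)
      rw [Nat.sub_sub_self hi'] at h2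
      have h3 := Nat.add_choose_mul_factorial_mul_factorial k i
      rw [Nat.choose_symm_add, ← h2, ← h3]; ring
    have h1' : (((∑ j, e j).descFactorial ((∑ j, e j) - i) : ℕ) : R) * ((k + i)! : ℕ) =
        (((∑ j, e j)! : ℕ) : R) * (k ! : ℕ) * ((k + i).choose k : ℕ) := by exact_mod_cast congrArg (Nat.cast (R := R)) h1
    rw [pow_add]
    linear_combination ((padeG α e).coeff i * α j ^ k * α j ^ i) * h1'
  · refine Nat.lt_succ_of_le ((Polynomial.natDegree_hasseDeriv_le _ _).trans ?_)
    rw [← hdeg]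
    have := Polynomial.natDegree_mul_le (p := (Polynomial.X ^ k : Polynomial R)) (q := padeG α e)
    rw [Polynomial.natDegree_X_pow] at this
    omega

lemma padeG_split (α : Fin m → R) (e : Fin m → ℕ) (j : Fin m) :
    padeG α e = (Polynomial.X - Polynomial.C (α j)) ^ e j *
      ∏ i ∈ Finset.univ.erase j, (Polynomial.X - Polynomial.C (α i)) ^ e i := by
  exact (Finset.mul_prod_erase _ (fun i => (Polynomial.X - Polynomial.C (α i)) ^ e i) (Finset.mem_univ j)).symm

lemma padeR_zero [Nontrivial R] (α : Fin m → R) (e : Fin m → ℕ) (j : Fin m) (k : ℕ) (hk : k < e j) :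
    padeR α e j k = 0 := by
  rw [padeR_eq, padeG_split α e j, mul_left_comm, Polynomial.taylor_mul, Polynomial.taylor_pow]
  simp [Polynomial.coeff_X_pow_mul', hk.not_ge]

lemma padeR_ne [IsDomain R] [CharZero R] (α : Fin m → R) (hα0 : ∀ j, α j ≠ 0)
    (hinj : Function.Injective α) (e : Fin m → ℕ) (j : Fin m) :
    padeR α e j (e j) ≠ 0 := by
  rw [padeR_eq, padeG_split α e j, mul_left_comm, Polynomial.taylor_mul, Polynomial.taylor_pow]
  have hf : ∀ k : ℕ, ((k ! : ℕ) : R) ≠ 0 := fun k => by exact_mod_cast Nat.factorial_ne_zero k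
  refine mul_ne_zero (mul_ne_zero (mul_ne_zero (hf _) (hf _)) (pow_ne_zero _ (hα0 j))) ?_
  rw [map_sub, Polynomial.taylor_X, Polynomial.taylor_C, add_sub_cancel_right,
    Polynomial.coeff_X_pow_mul', if_pos le_rfl, Nat.sub_self, Polynomial.taylor_coeff_zero]
  rw [Polynomial.eval_mul, Polynomial.eval_pow, Polynomial.eval_X, Polynomial.eval_prod]
  refine mul_ne_zero (pow_ne_zero _ (hα0 j)) (Finset.prod_ne_zero_iff.mpr fun i hi => ?_)
  rw [Polynomial.eval_pow, Polynomial.eval_sub, Polynomial.eval_X, Polynomial.eval_C]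
  refine pow_ne_zero _ (sub_ne_zero.mpr fun h => ?_)
  exact (Finset.mem_erase.mp hi).1 (hinj h).symm

/-- Formal factorial series. -/
noncomputable def facSeries (a : R) : PowerSeries R := PowerSeries.mk fun n => ((n ! : ℕ) : R) * a ^ n

lemma facSeries_split (a : R) (i : ℕ) :
    facSeries a = ((∑ n ∈ range i, Polynomial.C (((n ! : ℕ) : R) * a ^ n) * Polynomial.X ^ n :
        Polynomial R) : PowerSeries R) +
      PowerSeries.X ^ i * PowerSeries.mk fun k => (((i + k)! : ℕ) : R) * a ^ (i + k) := by
  ext n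
  rw [map_add, PowerSeries.coeff_X_pow_mul', Polynomial.coeff_coe, Polynomial.finsetSum_coeff]
  simp only [Polynomial.coeff_C_mul_X_pow, facSeries, PowerSeries.coeff_mk]
  rcases Nat.lt_or_ge n i with h | h
  · simp [h.not_ge, h]
  · simp [h, h.not_gt]

lemma pade_formal [Nontrivial R] (α : Fin m → R) (e : Fin m → ℕ) (j : Fin m) :
    ((padePoly α e 0 : Polynomial R) : PowerSeries R) * facSeries (α j) =
      ((padePoly α e j.succ : Polynomial R) : PowerSeries R) +
      PowerSeries.X ^ ((∑ j, e j) + e j) * PowerSeries.mk fun k => padeR α e j (e j + k) := by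
  have h1 : PowerSeries.X ^ ((∑ j, e j) + e j) * PowerSeries.mk (fun k => padeR α e j (e j + k)) =
      PowerSeries.X ^ (∑ j, e j) * PowerSeries.mk (fun k => padeR α e j k) := by
    rw [pow_add, mul_assoc]
    congr 1
    ext n
    rw [PowerSeries.coeff_X_pow_mul', PowerSeries.coeff_mk]
    split_ifs with h
    · rw [PowerSeries.coeff_mk]; congr 1; omega
    · rw [PowerSeries.coeff_mk, padeR_zero _ _ _ _ (by omega)]
  have h2 : PowerSeries.mk (fun k => padeR α e j k) = ∑ i ∈ range ((∑ j, e j) + 1),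
      PowerSeries.C (padeA α e i) *
        PowerSeries.mk fun k => (((i + k)! : ℕ) : R) * α j ^ (i + k) := by
    ext n
    simp [padeR]
  have hc : ∀ p : Polynomial R, (p : PowerSeries R) = Polynomial.coeToPowerSeries.ringHom p :=
    fun _ => rfl
  rw [h1, h2]
  simp only [padePoly, Fin.cases_zero, Fin.cases_succ]
  rw [hc, hc, map_sum, map_sum, Finset.sum_mul, Finset.mul_sum, ← Finset.sum_add_distrib]
  refine Finset.sum_congr rfl fun i hi => ?_
  have hi' : i ≤ ∑ j, e j := Nat.lt_succ_iff.mp (Finset.mem_range.mp hi)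
  rw [facSeries_split (α j) i, hc]
  have hX : (PowerSeries.X : PowerSeries R) ^ (∑ j, e j) =
      PowerSeries.X ^ ((∑ j, e j) - i) * PowerSeries.X ^ i := by
    rw [← pow_add, Nat.sub_add_cancel hi']
  rw [hX]
  simp only [map_mul, map_pow]
  have hXc : Polynomial.coeToPowerSeries.ringHom (Polynomial.X : Polynomial R) = PowerSeries.X :=
    Polynomial.coe_X
  have hCc : ∀ a : R, Polynomial.coeToPowerSeries.ringHom (Polynomial.C a) = PowerSeries.C a :=
    fun a => Polynomial.coe_C a
  simp only [hXc, hCc]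
  ring

/-- Exponents for row `r`. -/
def padeE (m l : ℕ) (r : Fin (m + 1)) (j : Fin m) : ℕ := if r = j.succ then l else l + 1

lemma padeE_sum_zero (l : ℕ) : ∑ j, padeE m l 0 j = m * (l + 1) := by
  simp [padeE, (Fin.succ_ne_zero _).symm]

lemma padeE_sum_succ (l : ℕ) (k : Fin m) : (∑ j, padeE m l k.succ j) + 1 = m * (l + 1) := by
  have h : ∀ j, padeE m l k.succ j + (if j = k then 1 else 0) = l + 1 := by
    intro j
    unfold padeE
    by_cases h : j = k
    · simp [h]
    · have : k ≠ j := fun h' => h h'.symm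
      simp [h, this]
  have h2 : ∑ j, (padeE m l k.succ j + (if j = k then 1 else 0)) = m * (l + 1) := by
    rw [Finset.sum_congr rfl fun j _ => h j]; simp
  rw [Finset.sum_add_distrib] at h2
  simpa using h2

lemma padePoly_natDegree (α : Fin m → R) (e : Fin m → ℕ) (c : Fin (m + 1)) (he : 1 ≤ ∑ j, e j) :
    (padePoly α e c).natDegree + (if c = 0 then 0 else 1) ≤ ∑ j, e j := by
  refine Fin.cases ?_ (fun j => ?_) c
  · simp only [padePoly, Fin.cases_zero, if_true, add_zero]
    refine Polynomial.natDegree_sum_le_of_forall_le _ _ fun i hi => ?_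
    exact (Polynomial.natDegree_C_mul_X_pow_le _ _).trans (by omega)
  · simp only [padePoly, Fin.cases_succ, Fin.succ_ne_zero, if_false]
    suffices h : _ ≤ (∑ j, e j) - 1 from Nat.add_le_of_le_sub he h
    refine Polynomial.natDegree_sum_le_of_forall_le _ _ fun i hi => ?_
    have hi' : i ≤ ∑ j, e j := Nat.lt_succ_iff.mp (Finset.mem_range.mp hi)
    rw [Finset.mul_sum]
    refine Polynomial.natDegree_sum_le_of_forall_le _ _ fun n hn => ?_
    have hn' := Finset.mem_range.mp hn
    refine Polynomial.natDegree_mul_le.trans ?_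
    have h1 := Polynomial.natDegree_C_mul_X_pow_le (padeA α e i) ((∑ j, e j) - i)
    have h2 := Polynomial.natDegree_C_mul_X_pow_le (((n ! : ℕ) : R) * α j ^ n) n
    omega

lemma padeE_sum_pos (l : ℕ) (hm : 1 ≤ m) (hl : 1 ≤ l) (r : Fin (m + 1)) : 1 ≤ ∑ j, padeE m l r j := by
  have h : 2 ≤ m * (l + 1) := by nlinarith
  refine Fin.cases ?_ (fun k => ?_) r
  · rw [padeE_sum_zero]; omega
  · have := padeE_sum_succ l k; omega

lemma poly_eval_of_coe (p : Polynomial R) (D : ℕ) (hdeg : p.natDegree ≤ D) (u : PowerSeries R)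
    (h : (p : PowerSeries R) = PowerSeries.X ^ D * u) : p.eval 1 = PowerSeries.constantCoeff u := by
  have hc : ∀ n, p.coeff n = if D ≤ n then PowerSeries.coeff (n - D) u else 0 := by
    intro n
    rw [← Polynomial.coeff_coe, h, PowerSeries.coeff_X_pow_mul']
  rw [Polynomial.eval_eq_sum_range' (Nat.lt_succ_of_le hdeg), Finset.sum_range_succ]
  rw [Finset.sum_eq_zero]
  · rw [hc D]; simp
  · intro n hn
    rw [hc n, if_neg (by simpa using hn)]; simp

theorem pade_det_ne [IsDomain R] [CharZero R] (α : Fin m → R) (hα0 : ∀ j, α j ≠ 0)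
    (hinj : Function.Injective α) (hm : 1 ≤ m) (l : ℕ) (hl : 1 ≤ l) :
    (Matrix.of fun r c => padeVal α (padeE m l r) c).det ≠ 0 := by
  obtain ⟨Q, hQ⟩ : ∃ Q, Q + 1 = m * (l + 1) + l := ⟨m * (l + 1) + l - 1, by
    have : 1 ≤ m * (l + 1) := by nlinarith
    omega⟩
  set M : Matrix (Fin (m + 1)) (Fin (m + 1)) (Polynomial R) :=
    Matrix.of fun r c => padePoly α (padeE m l r) c with hM
  have hev : (Matrix.of fun r c => padeVal α (padeE m l r) c).det = M.det.eval 1 := by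
    rw [← Polynomial.coe_evalRingHom, RingHom.map_det]
    congr 1
    ext r c
    simp [hM, padePoly_eval]
  rw [hev]
  -- degree
  have hdeg : M.det.natDegree ≤ m * Q := by
    rw [Matrix.det_apply]
    refine Polynomial.natDegree_sum_le_of_forall_le _ _ fun σ _ => ?_
    refine (Polynomial.natDegree_smul_le _ _).trans ?_
    refine (Polynomial.natDegree_prod_le _ _).trans ?_
    have h1 : ∑ i, ((M (σ i) i).natDegree + (if i = 0 then 0 else 1)) ≤
        ∑ i, ∑ j, padeE m l (σ i) j := by
      refine Finset.sum_le_sum fun i _ => ?_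
      exact padePoly_natDegree α _ i (padeE_sum_pos l hm hl _)
    rw [Equiv.sum_comp σ (fun i => ∑ j, padeE m l i j), Finset.sum_add_distrib,
      Fin.sum_univ_succ (fun i : Fin (m + 1) => if i = 0 then 0 else 1),
      Fin.sum_univ_succ (fun i => ∑ j, padeE m l i j), padeE_sum_zero] at h1
    simp only [if_true, Fin.succ_ne_zero, if_false, Finset.sum_const, Finset.card_univ,
      Fintype.card_fin, smul_eq_mul, mul_one, zero_add] at h1
    have h2 : ∑ i : Fin m, ((∑ j, padeE m l i.succ j) + 1) = m * (m * (l + 1)) := by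
      rw [Finset.sum_congr rfl fun i _ => padeE_sum_succ l i]; simp
    rw [Finset.sum_add_distrib] at h2
    simp only [Finset.sum_const, Finset.card_univ, Fintype.card_fin, smul_eq_mul, mul_one] at h2
    have h3 : m * Q + m = m * (m * (l + 1)) + m * l := by
      rw [← Nat.mul_succ, Nat.succ_eq_add_one, hQ]; ring
    have h4 : m * (l + 1) = m * l + m := by ring
    omega
  -- power series factorization
  let E : Matrix (Fin (m + 1)) (Fin (m + 1)) (PowerSeries R) := Matrix.of fun r c =>
    Fin.cases ((padePoly α (padeE m l r) 0 : Polynomial R) : PowerSeries R)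
      (fun j => - (PowerSeries.X ^ ((∑ i, padeE m l r i) + padeE m l r j - Q) *
        PowerSeries.mk fun k => padeR α (padeE m l r) j (padeE m l r j + k))) c
  let q : Fin (m + 1) → PowerSeries R := fun c => if c = 0 then 1 else PowerSeries.X ^ Q
  have hge : ∀ (r : Fin (m + 1)) (j : Fin m), Q ≤ (∑ i, padeE m l r i) + padeE m l r j ∧
      (r = j.succ → (∑ i, padeE m l r i) + padeE m l r j = Q) ∧
      (r ≠ j.succ → (∑ i, padeE m l r i) + padeE m l r j ≠ Q) := by
    intro r j
    by_cases h : r = j.succ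
    · subst h
      have h1 := padeE_sum_succ l j
      have h2 : padeE m l j.succ j = l := by simp [padeE]
      rw [h2]
      refine ⟨by omega, fun _ => by omega, fun h => absurd rfl h⟩
    · have h2 : padeE m l r j = l + 1 := by simp [padeE, h]
      rw [h2]
      have h3 : m * (l + 1) ≤ (∑ i, padeE m l r i) + 1 := by
        refine Fin.cases ?_ (fun k => ?_) r
        · rw [padeE_sum_zero]; omega
        · rw [padeE_sum_succ]
      refine ⟨by omega, fun h' => absurd h' h, fun _ => by omega⟩
  have hdet : ((M.det : Polynomial R) : PowerSeries R) = PowerSeries.X ^ (m * Q) * E.det := by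
    have hcoe : ((M.det : Polynomial R) : PowerSeries R) =
        Polynomial.coeToPowerSeries.ringHom M.det := rfl
    rw [hcoe, RingHom.map_det, ← Matrix.det_transpose]
    have hB : (Matrix.of fun r c => q c * E r c).det = PowerSeries.X ^ (m * Q) * E.det := by
      rw [Matrix.det_mul_row]
      congr 1
      rw [Fin.prod_univ_succ]
      simp [q, Fin.succ_ne_zero, ← pow_mul, mul_comm]
    rw [← hB, ← Matrix.det_transpose (Matrix.of fun r c => q c * E r c)]
    refine Matrix.det_eq_of_forall_row_eq_smul_add_const
      (Fin.cases 0 (fun j => facSeries (α j))) 0 rfl ?_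
    intro c r
    refine Fin.cases ?_ (fun j => ?_) c
    · simp [E, q, M]
    · have h := pade_formal α (padeE m l r) j
      have hX : (PowerSeries.X : PowerSeries R) ^ ((∑ i, padeE m l r i) + padeE m l r j) =
          PowerSeries.X ^ Q * PowerSeries.X ^ ((∑ i, padeE m l r i) + padeE m l r j - Q) := by
        rw [← pow_add, Nat.add_sub_cancel' (hge r j).1]
      rw [hX] at h
      simp only [Matrix.transpose_apply, RingHom.mapMatrix_apply, Matrix.map_apply, Matrix.of_apply,
        E, q, M, Fin.cases_succ, Fin.cases_zero, Fin.succ_ne_zero, if_false, if_true]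
      have hc : ∀ p : Polynomial R, Polynomial.coeToPowerSeries.ringHom p = (p : PowerSeries R) :=
        fun _ => rfl
      rw [hc]
      linear_combination -h
  rw [poly_eval_of_coe M.det (m * Q) hdeg E.det hdet, RingHom.map_det,
    Matrix.det_of_isLowerTriangular]
  · refine Finset.prod_ne_zero_iff.mpr fun r _ => ?_
    refine Fin.cases ?_ (fun j => ?_) r
    · have h1 : PowerSeries.constantCoeff (E 0 0) = 1 := by
        simp only [E, Matrix.of_apply, Fin.cases_zero]
        rw [← PowerSeries.coeff_zero_eq_constantCoeff_apply, Polynomial.coeff_coe]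
        simp only [padePoly, Fin.cases_zero, Polynomial.finsetSum_coeff,
          Polynomial.coeff_C_mul_X_pow]
        rw [Finset.sum_range_succ, Finset.sum_eq_zero]
        · simp only [Nat.sub_self, if_true, zero_add, padeA, Nat.descFactorial_zero, Nat.cast_one, mul_one]
          rw [← padeG_natDegree α]
          exact padeG_monic _ _
        · intro i hi
          have := Finset.mem_range.mp hi
          rw [if_neg (by omega)]
      simp [h1]
    · have h1 : PowerSeries.constantCoeff (E j.succ j.succ) = - padeR α (padeE m l j.succ) j (padeE m l j.succ j) := by
        simp only [E, Matrix.of_apply, Fin.cases_succ]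
        rw [(hge j.succ j).2.1 rfl]
        simp
      simp only [RingHom.mapMatrix_apply, Matrix.map_apply, h1]
      exact neg_ne_zero.mpr (padeR_ne α hα0 hinj _ j)
  · intro r c hrc
    have hrc' : r < c := by simpa using hrc
    obtain ⟨j, rfl⟩ : ∃ j : Fin m, c = j.succ :=
      ⟨c.pred (Fin.ne_zero_of_lt hrc'), (Fin.succ_pred _ _).symm⟩
    simp only [RingHom.mapMatrix_apply, Matrix.map_apply, E, Matrix.of_apply, Fin.cases_succ]
    have h1 := (hge r j).1
    have h2 := (hge r j).2.2 hrc'.ne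
    rw [map_neg, map_mul, map_pow, PowerSeries.constantCoeff_X, zero_pow (by omega), zero_mul, neg_zero]

end PadeAux

section ArchAux

/-- Majorant of `padeG`. -/
noncomputable def padeMaj {R : Type*} [CommRing R] {m : ℕ} (f : AbsoluteValue R ℝ)
    (α : Fin m → R) (e : Fin m → ℕ) : Polynomial ℝ :=
  ∏ j, (Polynomial.X + Polynomial.C (f (α j))) ^ e j

lemma maj_mul {R : Type*} [CommRing R] (f : AbsoluteValue R ℝ) {p q : Polynomial R}
    {P Q : Polynomial ℝ} (h1 : ∀ i, f (p.coeff i) ≤ P.coeff i) (h2 : ∀ i, f (q.coeff i) ≤ Q.coeff i)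
    (i : ℕ) : f ((p * q).coeff i) ≤ (P * Q).coeff i := by
  rw [Polynomial.coeff_mul, Polynomial.coeff_mul]
  refine (f.sum_le _ _).trans (Finset.sum_le_sum fun x _ => ?_)
  rw [f.map_mul]
  exact mul_le_mul (h1 _) (h2 _) (f.nonneg _) ((f.nonneg _).trans (h1 _))

lemma maj_one {R : Type*} [CommRing R] [IsDomain R] (f : AbsoluteValue R ℝ) (i : ℕ) :
    f ((1 : Polynomial R).coeff i) ≤ (1 : Polynomial ℝ).coeff i := by
  rw [Polynomial.coeff_one, Polynomial.coeff_one]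
  split_ifs <;> simp

lemma padeMaj_le {R : Type*} [CommRing R] [IsDomain R] {m : ℕ} (f : AbsoluteValue R ℝ)
    (α : Fin m → R) (e : Fin m → ℕ) (i : ℕ) :
    f ((padeG α e).coeff i) ≤ (padeMaj f α e).coeff i := by
  have hlin : ∀ (a : R) (i : ℕ), f ((Polynomial.X - Polynomial.C a).coeff i) ≤
      (Polynomial.X + Polynomial.C (f a)).coeff i := by
    intro a i
    rw [Polynomial.coeff_sub, Polynomial.coeff_add, Polynomial.coeff_X, Polynomial.coeff_X,
      Polynomial.coeff_C, Polynomial.coeff_C]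
    rcases i with _ | i
    · simp
    · rcases i with _ | i
      · simp
      · simp
  have hpow : ∀ (a : R) (k i : ℕ), f (((Polynomial.X - Polynomial.C a) ^ k).coeff i) ≤
      ((Polynomial.X + Polynomial.C (f a)) ^ k).coeff i := by
    intro a k
    induction k with
    | zero => intro i; simpa using maj_one f i
    | succ k ih => intro i; rw [pow_succ, pow_succ]; exact maj_mul f ih (hlin a) i
  unfold padeG padeMaj
  revert i
  induction (Finset.univ : Finset (Fin m)) using Finset.induction_on with
  | empty => intro i; simpa using maj_one f i
  | insert j s hj ih =>
    intro i
    rw [Finset.prod_insert hj, Finset.prod_insert hj]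
    exact maj_mul f (hpow _ _) ih i

lemma sum_factorial_le (i : ℕ) : ∑ n ∈ range i, n ! ≤ i ! := by
  induction i with
  | zero => simp
  | succ i ih =>
    rw [Finset.sum_range_succ]
    rcases Nat.eq_zero_or_pos i with rfl | hi
    · simp
    · rw [Nat.factorial_succ]; nlinarith

lemma padeVal_le {R : Type*} [CommRing R] [IsDomain R] {m : ℕ} (f : AbsoluteValue R ℝ)
    (hnat : ∀ n : ℕ, f (n : R) ≤ n)
    (α : Fin m → R) (e : Fin m → ℕ) (c : Fin (m + 1)) (a : ℝ) (ha : 1 ≤ a) (haj : ∀ j, f (α j) ≤ a) :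
    f (padeVal α e c) ≤ ((∑ j, e j)! : ℕ) * ∏ j, (f (α j) + a) ^ e j := by
  have hdeg : (padeMaj f α e).natDegree = ∑ j, e j := by
    rw [padeMaj, Polynomial.natDegree_prod_of_monic _ _
      (fun j _ => (Polynomial.monic_X_add_C _).pow _)]
    refine Finset.sum_congr rfl fun j _ => ?_
    rw [(Polynomial.monic_X_add_C _).natDegree_pow, Polynomial.natDegree_X_add_C, mul_one]
  have hev : ∏ j, (f (α j) + a) ^ e j =
      ∑ i ∈ range ((∑ j, e j) + 1), (padeMaj f α e).coeff i * a ^ i := by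
    rw [← hdeg, ← Polynomial.eval_eq_sum_range, padeMaj, Polynomial.eval_prod]
    refine Finset.prod_congr rfl fun j _ => ?_
    simp [add_comm]
  have hP : ∀ i, 0 ≤ (padeMaj f α e).coeff i := fun i => (f.nonneg _).trans (padeMaj_le f α e i)
  have hA : ∀ i, f (padeA α e i) ≤ (padeMaj f α e).coeff i *
      ((∑ j, e j).descFactorial ((∑ j, e j) - i) : ℕ) := by
    intro i
    rw [padeA, f.map_mul]
    exact mul_le_mul (padeMaj_le f α e i) (hnat _) (f.nonneg _) (hP i)
  have hd : ∀ i ∈ range ((∑ j, e j) + 1),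
      (((∑ j, e j).descFactorial ((∑ j, e j) - i) : ℕ) : ℝ) * (i ! : ℕ) = ((∑ j, e j)! : ℕ) := by
    intro i hi
    have hi' : i ≤ ∑ j, e j := Nat.lt_succ_iff.mp (Finset.mem_range.mp hi)
    have h2 := Nat.factorial_mul_descFactorial (n := ∑ j, e j) (k := (∑ j, e j) - i) (by omega)
    rw [Nat.sub_sub_self hi'] at h2
    rw [← h2]; push_cast; ring
  -- a uniform bound for the inner factor
  have hterm : ∀ (x : R) (i : ℕ), i ∈ range ((∑ j, e j) + 1) → f x ≤ (i ! : ℕ) * a ^ i →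
      f (padeA α e i * x) ≤ ((∑ j, e j)! : ℕ) * ((padeMaj f α e).coeff i * a ^ i) := by
    intro x i hi hx
    rw [f.map_mul, ← hd i hi]
    refine (mul_le_mul (hA i) hx (f.nonneg _) (mul_nonneg (hP i) (by positivity))).trans
      (le_of_eq ?_)
    ring
  rw [hev, Finset.mul_sum]
  refine Fin.cases ?_ (fun j => ?_) c
  · simp only [padeVal, Fin.cases_zero]
    refine (f.sum_le _ _).trans (Finset.sum_le_sum fun i hi => ?_)
    have := hterm 1 i hi (by
      rw [f.map_one]
      have h1 : (1 : ℝ) ≤ (i ! : ℕ) := by exact_mod_cast Nat.factorial_pos i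
      have h2 : 1 ≤ a ^ i := one_le_pow₀ ha
      nlinarith)
    rwa [mul_one] at this
  · simp only [padeVal, Fin.cases_succ]
    refine (f.sum_le _ _).trans (Finset.sum_le_sum fun i hi => ?_)
    refine hterm _ i hi ?_
    refine (f.sum_le _ _).trans ?_
    have h1 : ∀ n ∈ range i, f (((n ! : ℕ) : R) * α j ^ n) ≤ (n ! : ℕ) * a ^ i := by
      intro n hn
      have hn' := Finset.mem_range.mp hn
      rw [f.map_mul, map_pow]
      refine mul_le_mul (hnat _) ?_ (pow_nonneg (f.nonneg _) _) (by positivity)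
      exact (pow_le_pow_left₀ (f.nonneg _) (haj j) n).trans (pow_le_pow_right₀ ha hn'.le)
    refine (Finset.sum_le_sum h1).trans ?_
    rw [← Finset.sum_mul]
    refine mul_le_mul_of_nonneg_right ?_ (by positivity)
    exact_mod_cast sum_factorial_le i

variable (K : Type*) [Field K] [NumberField K]

lemma theta_sum : ∑ w : InfinitePlace K, ((w.mult : ℝ) / (Module.finrank ℚ K : ℝ)) = 1 := by
  rw [← Finset.sum_div, ← Nat.cast_sum, InfinitePlace.sum_mult_eq, div_self]
  exact_mod_cast (Module.finrank_pos (R := ℚ) (M := K)).ne'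

lemma theta_pos (w : InfinitePlace K) : 0 < (w.mult : ℝ) / (Module.finrank ℚ K : ℝ) := by
  have h1 : 0 < w.mult := InfinitePlace.mult_pos
  have h2 := Module.finrank_pos (R := ℚ) (M := K)
  positivity

lemma theta_le_one (w : InfinitePlace K) : (w.mult : ℝ) / (Module.finrank ℚ K : ℝ) ≤ 1 := by
  rw [← theta_sum K]
  exact Finset.single_le_sum (f := fun w : InfinitePlace K => (w.mult : ℝ) / (Module.finrank ℚ K : ℝ))
    (fun w _ => (theta_pos K w).le) (Finset.mem_univ w)

lemma prod_rpow_theta (x : ℝ) (hx : 0 < x) :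
    ∏ w : InfinitePlace K, x ^ ((w.mult : ℝ) / (Module.finrank ℚ K : ℝ)) = x := by
  rw [← Real.rpow_sum_of_pos hx, theta_sum, Real.rpow_one]

lemma infNorm_nonneg (w : InfinitePlace K) (x : K) : 0 ≤ infNorm K w x :=
  Real.rpow_nonneg (apply_nonneg w x) _

lemma infNorm_mul (w : InfinitePlace K) (x y : K) :
    infNorm K w (x * y) = infNorm K w x * infNorm K w y := by
  unfold infNorm
  rw [map_mul, Real.mul_rpow (apply_nonneg w x) (apply_nonneg w y)]

lemma one_le_prod_infNorm (y : 𝓞 K) (hy : y ≠ 0) : 1 ≤ ∏ w : InfinitePlace K, infNorm K w (y : K) := by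
  have h1 : ∏ w : InfinitePlace K, infNorm K w (y : K) =
      (∏ w : InfinitePlace K, w (y : K) ^ w.mult) ^ ((Module.finrank ℚ K : ℝ))⁻¹ := by
    rw [← Real.finsetProd_rpow _ _ (fun w _ => pow_nonneg (apply_nonneg w _) _)]
    refine Finset.prod_congr rfl fun w _ => ?_
    rw [infNorm, div_eq_mul_inv, Real.rpow_mul (apply_nonneg w _), Real.rpow_natCast]
  rw [h1, InfinitePlace.prod_eq_abs_norm]
  refine Real.one_le_rpow ?_ (by positivity)
  have h2 : Algebra.norm ℤ y ≠ 0 := Algebra.norm_ne_zero_iff.mpr hy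
  have h3 := Algebra.coe_norm_int y
  rw [← h3]
  have h4 : 1 ≤ |Algebra.norm ℤ y| := Int.one_le_abs h2
  exact_mod_cast h4

lemma natCast_prod_infNorm (n : ℕ) (hn : 0 < n) :
    ∏ w : InfinitePlace K, infNorm K w ((n : ℕ) : K) = n := by
  have h : ∀ w : InfinitePlace K, infNorm K w ((n : ℕ) : K) =
      (n : ℝ) ^ ((w.mult : ℝ) / (Module.finrank ℚ K : ℝ)) := by
    intro w
    rw [infNorm]
    congr 1
    rw [← InfinitePlace.norm_embedding_eq, map_natCast, Complex.norm_natCast]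
  rw [Finset.prod_congr rfl fun w _ => h w]
  exact prod_rpow_theta K _ (by exact_mod_cast hn)

/-- Archimedean bound at one place. -/
lemma infNorm_form_le {m : ℕ} (w : InfinitePlace K) (hm : 1 ≤ m) (α : Fin m → 𝓞 K)
    (e : Fin m → ℕ) (lam : Fin (m + 1) → 𝓞 K) :
    infNorm K w ((∑ c, padeVal α e c * lam c : 𝓞 K) : K) ≤
      (((m : ℝ) + 1) * ((∑ j, e j)! : ℕ)) ^ ((w.mult : ℝ) / (Module.finrank ℚ K : ℝ)) *
      ((⨆ i, infNorm K w ((lam i : K))) *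
      ∏ j, (infNorm K w ((α j : K)) + ⨆ j, max 1 (infNorm K w ((α j : K)))) ^ e j) := by
  set θ := (w.mult : ℝ) / (Module.finrank ℚ K : ℝ) with hθ
  have hθ0 : 0 < θ := theta_pos K w
  have hθ1 : θ ≤ 1 := theta_le_one K w
  let f : AbsoluteValue (𝓞 K) ℝ := w.1.comp (f := algebraMap (𝓞 K) K) RingOfIntegers.coe_injective
  have hf : ∀ x : 𝓞 K, f x = w (x : K) := fun x => rfl
  have hnat : ∀ n : ℕ, f (n : 𝓞 K) ≤ n := by
    intro n
    rw [hf]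
    have : (((n : 𝓞 K)) : K) = (n : K) := by simp
    rw [this, ← InfinitePlace.norm_embedding_eq, map_natCast, Complex.norm_natCast]
  have : Nonempty (Fin m) := ⟨⟨0, hm⟩⟩
  obtain ⟨j0, hj0⟩ := Finite.exists_max (fun j => f (α j))
  obtain ⟨i0, hi0⟩ := Finite.exists_max (fun i => f (lam i))
  set a := max 1 (f (α j0)) with ha
  have ha1 : 1 ≤ a := le_max_left _ _
  have haj : ∀ j, f (α j) ≤ a := fun j => (hj0 j).trans (le_max_right _ _)
  set B := ∏ j, (f (α j) + a) ^ e j with hB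
  have hB0 : 0 ≤ B := Finset.prod_nonneg fun j _ => pow_nonneg (add_nonneg (f.nonneg _) (by linarith)) _
  have h1 : f (∑ c, padeVal α e c * lam c) ≤ (((m : ℝ) + 1) * ((∑ j, e j)! : ℕ)) * (f (lam i0) * B) := by
    refine (f.sum_le _ _).trans ?_
    have h2 : ∀ c ∈ (Finset.univ : Finset (Fin (m + 1))), f (padeVal α e c * lam c) ≤
        ((∑ j, e j)! : ℕ) * B * f (lam i0) := by
      intro c _
      rw [f.map_mul]
      exact mul_le_mul (padeVal_le f hnat α e c a ha1 haj) (hi0 c) (f.nonneg _) (by positivity)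
    refine (Finset.sum_le_sum h2).trans (le_of_eq ?_)
    rw [Finset.sum_const, Finset.card_univ, Fintype.card_fin, nsmul_eq_mul]
    push_cast; ring
  have hsup1 : (f (lam i0)) ^ θ ≤ ⨆ i, infNorm K w ((lam i : K)) :=
    le_ciSup (f := fun i => infNorm K w ((lam i : K))) (Set.finite_range _).bddAbove i0
  have hsup2 : a ^ θ ≤ ⨆ j, max 1 (infNorm K w ((α j : K))) := by
    refine le_trans ?_ (le_ciSup (f := fun j => max 1 (infNorm K w ((α j : K))))
      (Set.finite_range _).bddAbove j0)
    show a ^ θ ≤ max 1 (f (α j0) ^ θ)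
    rcases le_total 1 (f (α j0)) with h | h
    · rw [ha, max_eq_right h]; exact le_max_right _ _
    · rw [ha, max_eq_left h, Real.one_rpow]; exact le_max_left _ _
  have hBθ : B ^ θ ≤ ∏ j, (infNorm K w ((α j : K)) + ⨆ j, max 1 (infNorm K w ((α j : K)))) ^ e j := by
    rw [hB, ← Real.finsetProd_rpow _ _ (fun j _ => pow_nonneg (add_nonneg (f.nonneg _) (by linarith)) _)]
    refine Finset.prod_le_prod (fun j _ => Real.rpow_nonneg
      (pow_nonneg (add_nonneg (f.nonneg _) (by linarith)) _) _) fun j _ => ?_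
    have h0 : 0 ≤ f (α j) + a := add_nonneg (f.nonneg _) (by linarith)
    rw [← Real.rpow_natCast, ← Real.rpow_mul h0, mul_comm, Real.rpow_mul h0, Real.rpow_natCast]
    refine pow_le_pow_left₀ (Real.rpow_nonneg h0 _) ?_ _
    refine (Real.rpow_add_le_add_rpow (f.nonneg _) (by linarith) hθ0.le hθ1).trans ?_
    exact add_le_add le_rfl hsup2
  have h0 : infNorm K w ((∑ c, padeVal α e c * lam c : 𝓞 K) : K) =
      (f (∑ c, padeVal α e c * lam c)) ^ θ := rfl
  rw [h0]
  refine (Real.rpow_le_rpow (f.nonneg _) h1 hθ0.le).trans ?_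
  rw [Real.mul_rpow (by positivity) (mul_nonneg (f.nonneg _) hB0), Real.mul_rpow (f.nonneg _) hB0]
  refine mul_le_mul_of_nonneg_left ?_ (by positivity)
  exact mul_le_mul hsup1 hBθ (Real.rpow_nonneg hB0 _) ((Real.rpow_nonneg (f.nonneg _) _).trans hsup1)

lemma prod_infNorm_form_le {m : ℕ} (hm : 1 ≤ m) (α : Fin m → 𝓞 K)
    (e : Fin m → ℕ) (L : ℕ) (he : ∀ j, e j ≤ L) (lam : Fin (m + 1) → 𝓞 K) (c₁ : ℝ)
    (hc₁ : c₁ = ∏ w : InfinitePlace K,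
        ((⨆ j, max 1 (infNorm K w ((α j : K)))) ^ m *
          ∏ i, (infNorm K w ((α i : K)) + ⨆ j, max 1 (infNorm K w ((α j : K))))))
    (H : ℝ) (hheight : ∏ w : InfinitePlace K, ⨆ i, infNorm K w ((lam i : K)) ≤ H) :
    1 ≤ c₁ ∧ ∏ w : InfinitePlace K, infNorm K w ((∑ c, padeVal α e c * lam c : 𝓞 K) : K) ≤
      (((m : ℝ) + 1) * ((∑ j, e j)! : ℕ)) * (H * c₁ ^ L) := by
  have : Nonempty (Fin m) := ⟨⟨0, hm⟩⟩
  have hsup : ∀ w : InfinitePlace K, 1 ≤ ⨆ j, max 1 (infNorm K w ((α j : K))) := fun w =>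
    (le_max_left _ _).trans (le_ciSup (f := fun j => max 1 (infNorm K w ((α j : K))))
      (Set.finite_range _).bddAbove ⟨0, hm⟩)
  have hfac : ∀ (w : InfinitePlace K) (j : Fin m),
      1 ≤ infNorm K w ((α j : K)) + ⨆ j, max 1 (infNorm K w ((α j : K))) := fun w j => by
    have := hsup w
    have := infNorm_nonneg K w (α j)
    linarith
  have hprod : ∀ w : InfinitePlace K,
      1 ≤ ∏ i, (infNorm K w ((α i : K)) + ⨆ j, max 1 (infNorm K w ((α j : K)))) := fun w =>
    Finset.one_le_prod fun j _ => hfac w j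
  have hle : ∀ w : InfinitePlace K,
      ∏ i, (infNorm K w ((α i : K)) + ⨆ j, max 1 (infNorm K w ((α j : K)))) ≤
      ((⨆ j, max 1 (infNorm K w ((α j : K)))) ^ m *
          ∏ i, (infNorm K w ((α i : K)) + ⨆ j, max 1 (infNorm K w ((α j : K))))) := fun w =>
    le_mul_of_one_le_left (by linarith [hprod w]) (one_le_pow₀ (hsup w))
  refine ⟨by rw [hc₁]; exact Finset.one_le_prod fun w _ => (hprod w).trans (hle w), ?_⟩
  have hlam0 : ∀ w : InfinitePlace K, 0 ≤ ⨆ i, infNorm K w ((lam i : K)) := fun w =>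
    Real.iSup_nonneg fun i => infNorm_nonneg K w _
  refine (Finset.prod_le_prod (fun w _ => infNorm_nonneg K w _)
    (fun w _ => infNorm_form_le K w hm α e lam)).trans ?_
  rw [Finset.prod_mul_distrib, Finset.prod_mul_distrib, prod_rpow_theta K _ (by positivity)]
  refine mul_le_mul_of_nonneg_left ?_ (by positivity)
  have hH0 : 0 ≤ H := (Finset.prod_nonneg fun w _ => hlam0 w).trans hheight
  refine mul_le_mul hheight ?_ (Finset.prod_nonneg fun w _ => Finset.prod_nonneg fun j _ =>
    pow_nonneg (by linarith [hfac w j]) _) hH0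
  rw [hc₁, ← Finset.prod_pow]
  refine Finset.prod_le_prod (fun w _ => Finset.prod_nonneg fun j _ =>
    pow_nonneg (by linarith [hfac w j]) _) fun w _ => ?_
  refine le_trans ?_ (pow_le_pow_left₀ (by linarith [hprod w]) (hle w) L)
  rw [← Finset.prod_pow]
  refine Finset.prod_le_prod (fun j _ => pow_nonneg (by linarith [hfac w j]) _) fun j _ => ?_
  exact pow_le_pow_right₀ (hfac w j) (he j)

end ArchAux


section NonArch

variable (K : Type*) [Field K] [NumberField K] (v : HeightOneSpectrum (𝓞 K))

/-- The embedding of the ring of integers in the completion. -/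
noncomputable def phiV : 𝓞 K →+* v.adicCompletion K :=
  (algebraMap K (v.adicCompletion K)).comp (algebraMap (𝓞 K) K)

lemma phiV_val (x : 𝓞 K) : Valued.v (phiV K v x) = v.intValuation x := by
  rw [← HeightOneSpectrum.valuation_of_algebraMap (K := K)]
  exact HeightOneSpectrum.adicCompletion.valued_coe K v _

lemma phiV_le_one (x : 𝓞 K) : Valued.v (phiV K v x) ≤ 1 := by
  rw [phiV_val]; exact v.intValuation_le_one x

lemma phiV_dvd {x y : 𝓞 K} (h : x ∣ y) : Valued.v (phiV K v y) ≤ Valued.v (phiV K v x) := by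
  obtain ⟨z, rfl⟩ := h
  rw [map_mul, map_mul]
  exact mul_le_of_le_one_right' (phiV_le_one K v z)

lemma phiV_summable (α : 𝓞 K) : Summable fun n : ℕ => phiV K v ((n ! : ℕ) * α ^ n) := by
  apply NonarchimedeanAddGroup.summable_of_tendsto_cofinite_zero
  rw [Nat.cofinite_eq_atTop]
  have hN : Valued.v (phiV K v ((Ideal.absNorm v.asIdeal : ℕ) : 𝓞 K)) < 1 := by
    rw [phiV_val, HeightOneSpectrum.intValuation_lt_one_iff_mem]
    exact Ideal.absNorm_mem _
  have ht := Valued.tendsto_zero_pow_of_v_lt_one hN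
  rw [(Valued.hasBasis_nhds_zero _ _).tendsto_right_iff] at ht ⊢
  intro γ _
  obtain ⟨k, hk⟩ := (ht γ trivial).exists
  filter_upwards [eventually_ge_atTop ((Ideal.absNorm v.asIdeal) ^ k)] with n hn
  refine lt_of_le_of_lt ?_ hk
  rw [Valuation.restrict_le_iff, ← map_pow]
  apply phiV_dvd
  refine Dvd.dvd.mul_right ?_ _
  rw [← Nat.cast_pow]
  apply Nat.cast_dvd_cast
  refine Nat.dvd_factorial (pow_pos ?_ _) hn
  exact Nat.pos_of_ne_zero (Ideal.absNorm_ne_zero_iff_mem_nonZeroDivisors.mpr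
          (mem_nonZeroDivisors_of_ne_zero v.ne_bot))

lemma eulerF_eq (α : 𝓞 K) : eulerF K v α = ∑' n : ℕ, phiV K v ((n ! : ℕ) * α ^ n) := by
  unfold eulerF
  refine tsum_congr fun n => ?_
  rw [map_mul, map_pow, map_natCast]
  rfl

lemma val_tsum_le {f : ℕ → v.adicCompletion K} (hf : Summable f) (y : v.adicCompletion K)
    (h : ∀ k, Valued.v (f k) ≤ Valued.v y) : Valued.v (∑' k, f k) ≤ Valued.v y := by
  have hc := Valued.isClosed_closedBall (v.adicCompletion K)
    ((Valued.v : Valuation (v.adicCompletion K) _).restrict y)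
  rw [← Valuation.restrict_le_iff]
  refine hc.mem_of_tendsto hf.hasSum (Filter.Eventually.of_forall fun t => ?_)
  refine (Valuation.restrict_le_iff _).2 ?_
  exact Valuation.map_sum_le _ fun i _ => h i

lemma pade_remainder {m : ℕ} (α : Fin m → 𝓞 K) (e : Fin m → ℕ) (j : Fin m) :
    Summable (fun k => phiV K v (padeR α e j k)) ∧
    phiV K v (padeVal α e 0) * eulerF K v (α j) =
      phiV K v (padeVal α e j.succ) + ∑' k, phiV K v (padeR α e j k) := by
  have hs := phiV_summable K v (α j)
  have hsi : ∀ i : ℕ, Summable fun k => phiV K v (padeA α e i) *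
      phiV K v (((k + i)! : ℕ) * α j ^ (k + i)) := fun i =>
    ((summable_nat_add_iff i).2 hs).mul_left _
  have hR : (fun k => phiV K v (padeR α e j k)) = fun k => ∑ i ∈ range ((∑ j, e j) + 1),
      phiV K v (padeA α e i) * phiV K v (((k + i)! : ℕ) * α j ^ (k + i)) := by
    funext k
    rw [padeR, map_sum]
    refine Finset.sum_congr rfl fun i _ => ?_
    rw [← map_mul, add_comm i k]
  rw [hR]
  refine ⟨summable_sum fun i _ => hsi i, ?_⟩
  rw [Summable.tsum_finsetSum fun i _ => hsi i, eulerF_eq]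
  change phiV K v (∑ i ∈ range ((∑ j, e j) + 1), padeA α e i) * _ =
    phiV K v (∑ i ∈ range ((∑ j, e j) + 1), padeA α e i *
      ∑ n ∈ range i, ((n ! : ℕ) : 𝓞 K) * α j ^ n) + _
  rw [map_sum, map_sum, Finset.sum_mul, ← Finset.sum_add_distrib]
  refine Finset.sum_congr rfl fun i _ => ?_
  rw [tsum_mul_left, map_mul, map_sum, ← mul_add, hs.sum_add_tsum_nat_add]

lemma val_form_le {m : ℕ} (α : Fin m → 𝓞 K) (e : Fin m → ℕ) (l : ℕ) (he : ∀ j, l ≤ e j)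
    (lam : Fin (m + 1) → 𝓞 K)
    (h : Valued.v (algebraMap K (v.adicCompletion K) ((lam 0 : K)) +
              ∑ j : Fin m, algebraMap K (v.adicCompletion K) ((lam j.succ : K)) *
                eulerF K v (α j)) ≤ Valued.v (phiV K v (((∑ j, e j)! * l ! : ℕ) : 𝓞 K))) :
    v.intValuation (∑ c, padeVal α e c * lam c) ≤
      v.intValuation (((∑ j, e j)! * l ! : ℕ) : 𝓞 K) := by
  rw [← phiV_val, ← phiV_val]
  have key : phiV K v (∑ c, padeVal α e c * lam c) =
      phiV K v (padeVal α e 0) * (algebraMap K (v.adicCompletion K) ((lam 0 : K)) +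
              ∑ j : Fin m, algebraMap K (v.adicCompletion K) ((lam j.succ : K)) *
                eulerF K v (α j)) -
      ∑ j : Fin m, phiV K v (lam j.succ) * ∑' k, phiV K v (padeR α e j k) := by
    have hl : ∀ c, algebraMap K (v.adicCompletion K) ((lam c : K)) = phiV K v (lam c) :=
      fun c => rfl
    simp only [hl]
    rw [Fin.sum_univ_succ, map_add, map_mul, mul_add, add_sub_assoc, map_sum, Finset.mul_sum,
      ← Finset.sum_sub_distrib]
    congr 1
    refine Finset.sum_congr rfl fun j _ => ?_
    rw [mul_left_comm, (pade_remainder K v α e j).2, map_mul]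
    ring
  rw [key]
  refine (Valuation.map_sub _ _ _).trans (max_le ?_ ?_)
  · rw [map_mul]
    exact (mul_le_of_le_one_left' (phiV_le_one K v _)).trans h
  · refine Valuation.map_sum_le _ fun j _ => ?_
    rw [map_mul]
    refine (mul_le_of_le_one_left' (phiV_le_one K v _)).trans ?_
    refine val_tsum_le K v (pade_remainder K v α e j).1 _ fun k => ?_
    apply phiV_dvd
    by_cases hk : k < e j
    · rw [padeR_zero _ _ _ _ hk]; exact dvd_zero _
    · rw [padeR_eq, mul_assoc, Nat.cast_mul]
      refine Dvd.dvd.mul_right (mul_dvd_mul_left _ ?_) _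
      exact Nat.cast_dvd_cast (Nat.factorial_dvd_factorial ((he j).trans (not_lt.mp hk)))

lemma one_lt_absNorm : 1 < Ideal.absNorm v.asIdeal := by
  have h0 : Ideal.absNorm v.asIdeal ≠ 0 := Ideal.absNorm_ne_zero_iff_mem_nonZeroDivisors.mpr
          (mem_nonZeroDivisors_of_ne_zero v.ne_bot)
  have h1 : Ideal.absNorm v.asIdeal ≠ 1 := by
    rw [Ne, Ideal.absNorm_eq_one_iff]
    exact v.isPrime.ne_top
  omega

lemma compNorm_le {x y : v.adicCompletion K} (h : compNorm K v x ≤ compNorm K v y) :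
    Valued.v x ≤ Valued.v y := by
  have hN : (1 : NNReal) < (Ideal.absNorm v.asIdeal : NNReal) := by
    exact_mod_cast one_lt_absNorm K v
  rw [← (WithZeroMulInt.toNNReal_strictMono hN).le_iff_le]
  have hκ : (0 : ℝ) < ((Module.finrank ℚ K : ℝ))⁻¹ := by
    have : 0 < Module.finrank ℚ K := Module.finrank_pos
    positivity
  unfold compNorm at h
  rw [Real.rpow_le_rpow_iff (NNReal.coe_nonneg _) (NNReal.coe_nonneg _) hκ] at h
  exact_mod_cast h

lemma compNorm_natCast (n : ℕ) (hn : 0 < n) : 1 / (n : ℝ) ≤ compNorm K v (phiV K v (n : 𝓞 K)) := by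
  have hκ : 0 < Module.finrank ℚ K := Module.finrank_pos
  have hn0 : (n : 𝓞 K) ≠ 0 := by exact_mod_cast hn.ne'
  have hN : 0 < Ideal.absNorm v.asIdeal := by have := one_lt_absNorm K v; omega
  obtain ⟨k, hk, hdvd⟩ : ∃ k : ℕ, v.intValuation (n : 𝓞 K) = WithZero.exp (-(k : ℤ)) ∧
      v.asIdeal ^ k ∣ Ideal.span {(n : 𝓞 K)} :=
    ⟨_, v.intValuation_eq_exp_neg_multiplicity hn0, pow_multiplicity_dvd _ _⟩
  have h1 : Ideal.absNorm v.asIdeal ^ k ≤ n ^ Module.finrank ℚ K := by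
    have := Ideal.absNorm_dvd_absNorm_of_le (Ideal.dvd_iff_le.mp hdvd)
    rw [map_pow, Ideal.absNorm_span_natCast, RingOfIntegers.rank] at this
    exact Nat.le_of_dvd (by positivity) this
  unfold compNorm
  rw [phiV_val, hk, WithZeroMulInt.toNNReal_neg_apply _ WithZero.exp_ne_zero]
  have h2 : (WithZero.unzero (WithZero.exp_ne_zero (a := -(k : ℤ)))).toAdd = -(k : ℤ) := rfl
  rw [h2]
  rw [← Real.rpow_le_rpow_iff (z := (Module.finrank ℚ K : ℝ)) (by positivity) (by positivity)
    (by exact_mod_cast hκ), ← Real.rpow_mul (by positivity), inv_mul_cancel₀ (by positivity),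
    Real.rpow_one, Real.rpow_natCast, one_div, inv_pow, zpow_neg, zpow_natCast]
  push_cast
  apply inv_anti₀ (by positivity)
  exact_mod_cast h1

/-- The residue characteristic. -/
lemma exists_prime_mem : ∃ p : ℕ, p.Prime ∧ (p : 𝓞 K) ∈ v.asIdeal := by
  have hN := one_lt_absNorm K v
  have hmem := Ideal.absNorm_mem v.asIdeal
  have key : ∀ n : ℕ, n ≠ 0 → (n : 𝓞 K) ∈ v.asIdeal →
      ∃ p : ℕ, p.Prime ∧ (p : 𝓞 K) ∈ v.asIdeal := by
    intro n
    induction n using Nat.recOnMul with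
    | zero => intro h; exact absurd rfl h
    | one =>
      intro _ h
      rw [Nat.cast_one] at h
      exact absurd ((Ideal.eq_top_iff_one _).2 h) v.isPrime.ne_top
    | prime p hp => intro _ h; exact ⟨p, hp, h⟩
    | mul a b iha ihb =>
      intro h0 h
      rw [Nat.cast_mul] at h
      rcases v.isPrime.mem_or_mem h with h | h
      · exact iha (by rintro rfl; simp at h0) h
      · exact ihb (by rintro rfl; simp at h0) h
  exact key _ (by omega) hmem

lemma val_natCast_eq_one (p D : ℕ) (hp : p.Prime) (hpv : (p : 𝓞 K) ∈ v.asIdeal) (h : ¬ p ∣ D) :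
    v.intValuation (D : 𝓞 K) = 1 := by
  rw [HeightOneSpectrum.intValuation_eq_one_iff]
  intro hD
  have hc : IsCoprime (p : ℤ) (D : ℤ) := Nat.isCoprime_iff_coprime.2 ((hp.coprime_iff_not_dvd).2 h)
  obtain ⟨a, b, hab⟩ := hc
  apply v.isPrime.ne_top
  rw [Ideal.eq_top_iff_one]
  have : (1 : 𝓞 K) = (a : 𝓞 K) * (p : 𝓞 K) + (b : 𝓞 K) * (D : 𝓞 K) := by exact_mod_cast hab.symm
  rw [this]
  exact Ideal.add_mem _ (Ideal.mul_mem_left _ _ hpv) (Ideal.mul_mem_left _ _ hD)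

lemma dvd_of_val_le (W : 𝓞 K) (D : ℕ) (hD : 0 < D)
    (h : ∀ v : HeightOneSpectrum (𝓞 K), v.intValuation W ≤ v.intValuation (D : 𝓞 K)) :
    ∃ y : 𝓞 K, W = D * y := by
  have hD0 : (D : 𝓞 K) ≠ 0 := by exact_mod_cast hD.ne'
  have hD1 : algebraMap (𝓞 K) K (D : 𝓞 K) ≠ 0 := by
    rw [map_natCast]; exact_mod_cast hD.ne'
  obtain ⟨y, hy⟩ := HeightOneSpectrum.mem_integers_of_valuation_le_one (R := 𝓞 K) (K := K)
    (algebraMap (𝓞 K) K W / algebraMap (𝓞 K) K (D : 𝓞 K)) (fun v => by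
      rw [map_div₀, HeightOneSpectrum.valuation_of_algebraMap,
        HeightOneSpectrum.valuation_of_algebraMap]
      exact div_le_one_of_le₀ (h v) _root_.zero_le)
  refine ⟨y, RingOfIntegers.coe_injective ?_⟩
  rw [map_mul]
  rw [eq_div_iff hD1] at hy
  rw [← hy, mul_comm]

end NonArch

/-- Theorem 2 of the paper: if `log H ≥ s·e^s` with
`s = max{e^κ + 1, c₁ + 1, (m+3)² + 1}` and the coefficients `λ_i ∈ 𝓞 K` (not all zero)
satisfy `∏_{v∈V_∞} max_i ‖λ_i‖_v ≤ H`, then there are a prime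
`p ∈ ( log(log H / log log H), 17m·log H / log log H )` and a place `v'` of `K` above `p`
such that `‖λ₀ + λ₁ F_{v'}(α₁) + … + λ_m F_{v'}(α_m)‖_{v'} >
H^(−(m+1) − 114 m²·(log log log H)/(log log H))`. -/
theorem euler_linear_form_lower_bound (K : Type*) [Field K] [NumberField K]
    {m : ℕ} (hm : 1 ≤ m)
    (α : Fin m → 𝓞 K) (hα0 : ∀ j, α j ≠ 0) (hinj : Function.Injective α)
    (c₁ : ℝ)
    (hc₁ : c₁ = ∏ w : InfinitePlace K,
        ((⨆ j, max 1 (infNorm K w ((α j : K)))) ^ m *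
          ∏ i, (infNorm K w ((α i : K)) + ⨆ j, max 1 (infNorm K w ((α j : K))))))
    (s : ℝ)
    (hs : s = max (max (Real.exp (Module.finrank ℚ K) + 1) (c₁ + 1)) (((m : ℝ) + 3) ^ 2 + 1))
    (H : ℝ) (hH : s * Real.exp s ≤ Real.log H)
    (lam : Fin (m + 1) → 𝓞 K) (hlam : ∃ i, lam i ≠ 0)
    (hheight : ∏ w : InfinitePlace K, ⨆ i, infNorm K w ((lam i : K)) ≤ H) :
    ∃ p : ℕ, p.Prime ∧
      Real.log (Real.log H / Real.log (Real.log H)) < (p : ℝ) ∧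
      (p : ℝ) < 17 * m * Real.log H / Real.log (Real.log H) ∧
      ∃ v' : HeightOneSpectrum (𝓞 K), (p : 𝓞 K) ∈ v'.asIdeal ∧
        compNorm K v'
            (algebraMap K (v'.adicCompletion K) ((lam 0 : K)) +
              ∑ j : Fin m, algebraMap K (v'.adicCompletion K) ((lam j.succ : K)) *
                eulerF K v' (α j)) >
          H ^ (-((m : ℝ) + 1) -
            114 * (m : ℝ) ^ 2 * Real.log (Real.log (Real.log H)) / Real.log (Real.log H)) := by
  have hc1 : 1 ≤ c₁ :=
    (prod_infNorm_form_le K hm α (fun _ => 0) 0 (fun _ => le_rfl) lam c₁ hc₁ H hheight).1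
  have hcs : c₁ ≤ s := by
    have : c₁ + 1 ≤ s := by rw [hs]; exact (le_max_right _ _).trans (le_max_left _ _)
    linarith
  have hms : ((m : ℝ) + 3) ^ 2 + 1 ≤ s := by rw [hs]; exact le_max_right _ _
  obtain ⟨hn10, hY, hT, l, hl17, hcontra, hfin⟩ := aux_params m hm c₁ s (Real.log H) hc1 hcs hms hH
  set n := ⌊Real.log (Real.log H / Real.log (Real.log H))⌋₊ with hn
  have hlogn : 0 ≤ Real.log (n : ℝ) := Real.log_natCast_nonneg n
  have hlm : 0 ≤ Real.log ((m : ℝ) + 1) := Real.log_nonneg (by linarith [m.cast_nonneg (α := ℝ)])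
  have hlc : 0 ≤ Real.log c₁ := Real.log_nonneg hc1
  have hH0 : 0 < H := by
    have h0 : 0 ≤ H := (Finset.prod_nonneg fun w _ =>
      Real.iSup_nonneg fun i => infNorm_nonneg K w _).trans hheight
    rcases h0.lt_or_eq with h | h
    · exact h
    · rw [← h, Real.log_zero] at hT; exact absurd hT (lt_irrefl _)
  have hl1 : 1 ≤ l := by
    rcases Nat.eq_zero_or_pos l with h | h
    · exfalso
      have := hcontra 0 (Nat.zero_le _)
      rw [h] at this
      simp only [Nat.factorial_zero, Nat.cast_one, Real.log_one, Nat.cast_zero] at this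
      nlinarith
    · exact h
  by_contra hcon
  push Not at hcon
  -- choose a good row
  obtain ⟨r, hr⟩ : ∃ r, ∑ c, padeVal α (padeE m l r) c * lam c ≠ 0 := by
    by_contra hall
    push Not at hall
    obtain ⟨i, hi⟩ := hlam
    refine hi (congrFun (Matrix.eq_zero_of_mulVec_eq_zero (pade_det_ne α hα0 hinj hm l hl1)
      (v := lam) ?_) i)
    funext r
    exact hall r
  set e := padeE m l r with he
  set N := ∑ j, e j with hN
  set W := ∑ c, padeVal α e c * lam c with hW
  have hel : ∀ j, l ≤ e j := fun j => by rw [he]; unfold padeE; split_ifs <;> omega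
  have heL : ∀ j, e j ≤ l + 1 := fun j => by rw [he]; unfold padeE; split_ifs <;> omega
  have hNle : N ≤ m * (l + 1) := by
    calc N ≤ ∑ _j : Fin m, (l + 1) := Finset.sum_le_sum fun j _ => heL j
      _ = m * (l + 1) := by simp
  have hlN : l ≤ N := (hel ⟨0, hm⟩).trans (Finset.single_le_sum (f := e) (fun _ _ => Nat.zero_le _)
    (Finset.mem_univ _))
  obtain ⟨D, S, hDS, hS, hDp, hlogS⟩ := aux_split N l n
  have hDpos : 0 < D := by
    rcases Nat.eq_zero_or_pos D with h | h
    · rw [h, zero_mul] at hDS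
      exact absurd hDS (by positivity)
    · exact h
  have hbound : H ^ (-((m : ℝ) + 1) -
      114 * (m : ℝ) ^ 2 * Real.log (Real.log (Real.log H)) / Real.log (Real.log H)) ≤
      1 / ((N ! * l ! : ℕ) : ℝ) := by
    rw [Real.rpow_def_of_pos hH0, one_div, ← Real.exp_log (x := ((N ! * l ! : ℕ) : ℝ)) (by positivity),
      ← Real.exp_neg]
    apply Real.exp_le_exp.mpr
    have h1 : Real.log ((N ! * l ! : ℕ) : ℝ) ≤
        Real.log ((m * (l + 1))! : ℕ) + Real.log (l ! : ℕ) := by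
      rw [← Real.log_mul (by positivity) (by positivity)]
      apply Real.log_le_log (by positivity)
      exact_mod_cast Nat.mul_le_mul_right _ (Nat.factorial_le hNle)
    have h2 : Real.log H * (-((m : ℝ) + 1) -
      114 * (m : ℝ) ^ 2 * Real.log (Real.log (Real.log H)) / Real.log (Real.log H)) =
      -((m + 1) * Real.log H + 114 * m ^ 2 * Real.log (Real.log (Real.log H)) /
        Real.log (Real.log H) * Real.log H) := by ring
    rw [h2]
    linarith
  have hdiv : ∀ v : HeightOneSpectrum (𝓞 K), v.intValuation W ≤ v.intValuation (D : 𝓞 K) := by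
    intro v
    obtain ⟨p, hp, hpv⟩ := exists_prime_mem K v
    by_cases hpD : p ∣ D
    · have hnp := hDp p hp hpD
      have hpN : p ≤ N := by
        have h1 : p ∣ N ! * l ! := by rw [hDS]; exact Dvd.dvd.mul_right hpD _
        rcases hp.dvd_mul.mp h1 with h | h
        · exact hp.dvd_factorial.mp h
        · exact (hp.dvd_factorial.mp h).trans hlN
      have hlow : Real.log (Real.log H / Real.log (Real.log H)) < (p : ℝ) :=
        (Nat.lt_floor_add_one _).trans_le (by rw [← hn]; exact_mod_cast hnp)
      have hup : (p : ℝ) < 17 * m * Real.log H / Real.log (Real.log H) :=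
        lt_of_le_of_lt (by exact_mod_cast hpN.trans hNle) hl17
      have h1 := hcon p hp hlow hup v hpv
      have h2 := compNorm_le K v
        ((h1.trans hbound).trans (compNorm_natCast K v (N ! * l !) (by positivity)))
      have h3 := val_form_le K v α e l hel lam h2
      refine h3.trans ?_
      change v.intValuation ((N ! * l ! : ℕ) : 𝓞 K) ≤ _
      rw [hDS, Nat.cast_mul, map_mul]
      exact mul_le_of_le_one_right' (v.intValuation_le_one _)
    · rw [val_natCast_eq_one K v p D hp hpv hpD]
      exact v.intValuation_le_one _
  obtain ⟨y, hy⟩ := dvd_of_val_le K W D hDpos hdiv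
  have hy0 : y ≠ 0 := by
    rintro rfl
    rw [mul_zero] at hy
    exact hr hy
  have hDle : (D : ℝ) ≤ ∏ w : InfinitePlace K, infNorm K w (W : K) := by
    have h1 : ∏ w : InfinitePlace K, infNorm K w (W : K) =
        (∏ w : InfinitePlace K, infNorm K w ((D : ℕ) : K)) *
          ∏ w : InfinitePlace K, infNorm K w (y : K) := by
      rw [← Finset.prod_mul_distrib]
      refine Finset.prod_congr rfl fun w _ => ?_
      rw [← infNorm_mul, hy]
      congr 1
    rw [h1, natCast_prod_infNorm K D hDpos]
    exact le_mul_of_one_le_right (by positivity) (one_le_prod_infNorm K y hy0)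
  have hup := hDle.trans
    (prod_infNorm_form_le K hm α e (l + 1) heL lam c₁ hc₁ H hheight).2
  have hc0 : 0 < c₁ := by linarith
  have hlog : Real.log (D : ℝ) ≤ Real.log ((m : ℝ) + 1) + Real.log (N ! : ℕ) +
      (Real.log H + (l + 1) * Real.log c₁) := by
    have h1 := Real.log_le_log (by exact_mod_cast hDpos) hup
    rw [Real.log_mul (by positivity) (by positivity), Real.log_mul (by positivity) (by positivity),
      Real.log_mul (by positivity) (by positivity), Real.log_pow] at h1
    push_cast at h1 ⊢
    exact h1
  have hsplit : Real.log (N ! : ℕ) + Real.log (l ! : ℕ) = Real.log D + Real.log S := by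
    rw [← Real.log_mul (by positivity) (by positivity),
      ← Real.log_mul (by positivity) (by positivity)]
    congr 1
    exact_mod_cast hDS
  have hSle : Real.log S ≤ (N + l) * (Real.log n + 1.65) :=
    hlogS.trans (mul_le_mul_of_nonneg_left (aux_mertens n hn10) (by positivity))
  have := hcontra N hNle
  linarith
end

section
/- Let K be a number field, m ≥ 1, λ_0,λ_1,…,λ_m ∈ Z_K with λ_j ≠ 0 for at least one j, and α_1,…,α_m ∈ Z_K pairwise distinct nonzero algebraic integers. Let n ≥ 3 be an integer, let R be the union of the primes lying in r residue classes of the reduced residue system modulo n, where r > m·φ(n)/(m+1), and let V = { v ∈ V_0 : v | p for some p ∈ R }. Then there exists a place v' ∈ V such that λ_0 + λ_1 F_{v'}(α_1) + … + λ_m F_{v'}(α_m) ≠ 0. -/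
open NumberField IsDedekindDomain Nat Finset

namespace EulerLin

/-! ### Analytic part -/

lemma abel_le (h w : ℕ → ℝ) (C : ℝ) (hw : Antitone w)
    (hC : ∀ N, ∑ k ∈ range N, h k ≤ C) (N : ℕ) :
    ∑ k ∈ range N, h k * w k ≤ C * w 0 + (∑ k ∈ range N, h k - C) * w N := by
  induction N with
  | zero => simp
  | succ N ih =>
    have h1 := hC (N + 1)
    have h2 : w (N + 1) ≤ w N := hw (Nat.le_succ N)
    rw [sum_range_succ, sum_range_succ] at *
    nlinarith

lemma log_step (s : ℝ) (hs : 0 < s) (N : ℕ) (hN : 1 ≤ N) :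
    (Real.log ((N : ℝ) + 1) - Real.log N) * ((N : ℝ) + 1) ^ (-s) ≤
      ((N : ℝ) ^ (-s) - ((N : ℝ) + 1) ^ (-s)) / s := by
  have hN0 : (0 : ℝ) < N := by exact_mod_cast hN
  have hN1 : (0 : ℝ) < (N : ℝ) + 1 := by linarith
  rw [le_div_iff₀ hs]
  have e : (N : ℝ) ^ (-s) = ((N : ℝ) + 1) ^ (-s) *
      Real.exp (s * (Real.log ((N : ℝ) + 1) - Real.log N)) := by
    rw [Real.rpow_def_of_pos hN0, Real.rpow_def_of_pos hN1, ← Real.exp_add]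
    congr 1
    ring
  rw [e]
  have h1 := Real.add_one_le_exp (s * (Real.log ((N : ℝ) + 1) - Real.log N))
  have h2 : 0 < ((N : ℝ) + 1) ^ (-s) := Real.rpow_pos_of_pos hN1 _
  nlinarith

lemma log_sum (s : ℝ) (hs : 0 < s) (N : ℕ) :
    ∑ k ∈ range (N + 1), (Real.log ((k : ℝ) + 1) - Real.log k) * ((k : ℝ) + 1) ^ (-s) ≤
      (1 - ((N : ℝ) + 1) ^ (-s)) / s := by
  induction N with
  | zero => simp
  | succ N ih =>
    rw [sum_range_succ]
    have := log_step s hs (N + 1) (by omega)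
    push_cast at this ⊢
    have e : (1 - ((N : ℝ) + 1 + 1) ^ (-s)) / s = (1 - ((N : ℝ) + 1) ^ (-s)) / s +
      (((N : ℝ) + 1) ^ (-s) - ((N : ℝ) + 1 + 1) ^ (-s)) / s := by ring
    rw [e]
    linarith

lemma abel_bound (f : ℕ → ℝ) (C d s : ℝ) (hd : 0 ≤ d) (hs : 0 < s)
    (hf : ∀ N : ℕ, ∑ k ∈ range N, f (k + 1) ≤ C + d * Real.log N) (N : ℕ) :
    ∑ k ∈ range N, f (k + 1) * ((k : ℝ) + 1) ^ (-s) ≤ C + d / s := by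
  have hsum : ∀ N : ℕ, ∑ k ∈ range N, (Real.log ((k : ℝ) + 1) - Real.log k) = Real.log N := by
    intro N
    have := Finset.sum_range_sub (fun k : ℕ => Real.log (k : ℝ)) N
    push_cast at this
    simpa using this
  have hw : Antitone (fun k : ℕ => ((k : ℝ) + 1) ^ (-s)) := by
    intro a b hab
    apply Real.rpow_le_rpow_of_nonpos
    · positivity
    · have : (a : ℝ) ≤ b := by exact_mod_cast hab
      linarith
    · linarith
  have hC : ∀ N, ∑ k ∈ range N, (f (k + 1) - d * (Real.log ((k : ℝ) + 1) - Real.log k)) ≤ C := by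
    intro N
    rw [sum_sub_distrib, ← mul_sum, hsum]
    linarith [hf N]
  have h1 := abel_le _ _ C hw hC N
  have h2 : (∑ k ∈ range N, (f (k + 1) - d * (Real.log ((k : ℝ) + 1) - Real.log k)) - C) *
      ((N : ℝ) + 1) ^ (-s) ≤ 0 :=
    mul_nonpos_of_nonpos_of_nonneg (by linarith [hC N]) (by positivity)
  have h3 : ∑ k ∈ range N, (Real.log ((k : ℝ) + 1) - Real.log k) * ((k : ℝ) + 1) ^ (-s) ≤ 1 / s := by
    cases N with
    | zero => simp; positivity
    | succ N =>
      refine (log_sum s hs N).trans ?_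
      gcongr
      have : 0 ≤ ((N : ℝ) + 1) ^ (-s) := by positivity
      linarith
  simp only [sub_mul, sum_sub_distrib, mul_assoc, ← mul_sum] at h1 h2
  simp at h1
  have h4 := mul_le_mul_of_nonneg_left h3 hd
  have h5 : d * (1 / s) = d / s := by ring
  simp only [sub_mul, sum_sub_distrib] at h4
  linarith

/-- `log p / p` on the primes of the given classes. -/
noncomputable def fA {n : ℕ} (A : Finset (ZMod n)) (k : ℕ) : ℝ :=
  open Classical in if k.Prime ∧ (k : ZMod n) ∈ A then Real.log k / k else 0

lemma fA_nonneg {n : ℕ} (A : Finset (ZMod n)) (k : ℕ) : 0 ≤ fA A k := by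
  unfold fA
  split_ifs
  · exact div_nonneg (Real.log_natCast_nonneg k) (by positivity)
  · exact le_rfl

open ArithmeticFunction.vonMangoldt in
lemma residue_split {n : ℕ} (A : Finset (ZMod n)) (s : ℝ) (hs : 0 ≤ s) (k : ℕ) :
    ∑ a ∈ A, residueClass a k / (k : ℝ) ^ (1 + s) ≤ fA A k * (k : ℝ) ^ (-s) +
      ∑ a ∈ A, (if k.Prime then 0 else residueClass a k) / k := by
  classical
  rcases Nat.eq_zero_or_pos k with rfl | hk
  · simp [fA, residueClass_apply_zero]
  have hk0 : (0 : ℝ) < k := by exact_mod_cast hk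
  by_cases hp : k.Prime
  · simp only [hp, if_true, zero_div, sum_const_zero, add_zero]
    rw [← sum_div, Real.rpow_add hk0, Real.rpow_one, Real.rpow_neg hk0.le]
    have : ∑ a ∈ A, residueClass a k = if (k : ZMod n) ∈ A then Real.log k else 0 := by
      simp only [residueClass, Set.indicator_apply, Set.mem_ofPred_eq]
      rw [Finset.sum_ite_eq]
      simp [ArithmeticFunction.vonMangoldt_apply_prime hp]
    rw [this]
    unfold fA
    simp only [hp, true_and]
    split_ifs
    · apply le_of_eq; field_simp
    · simp
  · simp only [hp, if_false]
    have h0 : fA A k = 0 := by simp [fA, hp]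
    rw [h0, zero_mul, zero_add]
    apply sum_le_sum
    intro a _
    apply div_le_div_of_nonneg_left (residueClass_nonneg a k) hk0
    conv_lhs => rw [← Real.rpow_one (k : ℝ)]
    apply Real.rpow_le_rpow_of_exponent_le
    · exact_mod_cast hk
    · linarith

open ArithmeticFunction.vonMangoldt in
lemma fA_lower {n : ℕ} [NeZero n] (A : Finset (ZMod n)) (hA : ∀ a ∈ A, IsUnit a) :
    ∃ C : ℝ, ∀ s : ℝ, 0 < s → s ≤ 1 → ∀ B : ℝ,
      (∀ N, ∑ k ∈ range N, fA A k * (k : ℝ) ^ (-s) ≤ B) →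
      (A.card : ℝ) / n.totient / s - C ≤ B := by
  have hC : ∀ a : ZMod n, ∃ C : ℝ, IsUnit a → ∀ {x : ℝ} (_ : x ∈ Set.Ioc 1 2),
      (n.totient : ℝ)⁻¹ / (x - 1) - C ≤ ∑' n, residueClass a n / (n : ℝ) ^ x := by
    intro a
    by_cases ha : IsUnit a
    · obtain ⟨C, h⟩ := LSeries_residueClass_lower_bound ha
      exact ⟨C, fun _ => h⟩
    · exact ⟨0, fun h => absurd h ha⟩
  choose C hC using hC
  have hsm : Summable (fun k : ℕ => ∑ a ∈ A, (if k.Prime then 0 else residueClass a k) / (k : ℝ)) :=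
    summable_sum fun a _ => summable_residueClass_non_primes_div a
  refine ⟨∑ a ∈ A, C a + ∑' k : ℕ, ∑ a ∈ A, (if k.Prime then 0 else residueClass a k) / (k : ℝ), ?_⟩
  intro s hs hs1 B hB
  have hnn : ∀ k : ℕ, 0 ≤ fA A k * (k : ℝ) ^ (-s) := fun k =>
    mul_nonneg (fA_nonneg A k) (by positivity)
  have hsf : Summable (fun k : ℕ => fA A k * (k : ℝ) ^ (-s)) :=
    summable_of_sum_range_le hnn hB
  have htf : ∑' k : ℕ, fA A k * (k : ℝ) ^ (-s) ≤ B := Real.tsum_le_of_sum_range_le hnn hB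
  have hsr : ∀ a ∈ A, Summable (fun k : ℕ => residueClass a k / (k : ℝ) ^ (1 + s)) := by
    intro a _
    exact LSeries.summable_real_of_abscissaOfAbsConv_lt <|
        (abscissaOfAbsConv_residueClass_le_one a).trans_lt <| by
          have : (1 : ℝ) < 1 + s := by linarith
          exact_mod_cast this
  have h1 : ∑ a ∈ A, ((n.totient : ℝ)⁻¹ / s - C a) ≤
      ∑ a ∈ A, ∑' k : ℕ, residueClass a k / (k : ℝ) ^ (1 + s) := by
    apply sum_le_sum
    intro a ha
    have := hC a (hA a ha) (x := 1 + s) ⟨by linarith, by linarith⟩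
    simpa using this
  rw [← Summable.tsum_finsetSum hsr] at h1
  have h2 := Summable.tsum_le_tsum (residue_split A s hs.le) (summable_sum hsr) (hsf.add hsm)
  rw [hsf.tsum_add hsm] at h2
  rw [sum_sub_distrib, sum_const, nsmul_eq_mul] at h1
  have e : (A.card : ℝ) / n.totient / s = A.card * ((n.totient : ℝ)⁻¹ / s) := by ring
  rw [e]
  linarith

lemma fA_large {n : ℕ} [NeZero n] (A : Finset (ZMod n)) (hA : ∀ a ∈ A, IsUnit a)
    (d : ℝ) (hd : 0 ≤ d) (hdA : d < (A.card : ℝ) / n.totient) (N0 : ℕ) :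
    ∃ N, N0 ≤ N ∧ d * Real.log N < ∑ k ∈ range N, fA A (k + 1) := by
  by_contra! hcon
  obtain ⟨C, hC⟩ := fA_lower A hA
  have hD : ∀ N : ℕ, ∑ k ∈ range N, fA A (k + 1) ≤
      ∑ k ∈ range N0, fA A (k + 1) + d * Real.log N := by
    intro N
    have hl : 0 ≤ d * Real.log N := mul_nonneg hd (Real.log_natCast_nonneg N)
    rcases le_total N0 N with h | h
    · have := hcon N h
      have : 0 ≤ ∑ k ∈ range N0, fA A (k + 1) := sum_nonneg fun k _ => fA_nonneg A _
      linarith [hcon N h]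
    · have : ∑ k ∈ range N, fA A (k + 1) ≤ ∑ k ∈ range N0, fA A (k + 1) :=
        sum_le_sum_of_subset_of_nonneg (range_mono h) fun k _ _ => fA_nonneg A _
      linarith
  set D := ∑ k ∈ range N0, fA A (k + 1) with hDdef
  have hD0 : 0 ≤ D := sum_nonneg fun k _ => fA_nonneg A _
  have key : ∀ s : ℝ, 0 < s → s ≤ 1 → (A.card : ℝ) / n.totient / s - C ≤ D + d / s := by
    intro s hs hs1
    apply hC s hs hs1
    intro N
    cases N with
    | zero => simp; positivity
    | succ N =>
      rw [sum_range_succ']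
      have h0 : fA A 0 = 0 := by simp [fA]
      rw [h0, zero_mul, add_zero]
      have := abel_bound (fA A) D d s hd hs hD N
      push_cast
      exact this
  set g := (A.card : ℝ) / n.totient - d with hg
  have hg0 : 0 < g := by linarith
  have key2 : ∀ s : ℝ, 0 < s → s ≤ 1 → g ≤ (|C| + D) * s := by
    intro s hs hs1
    have h1 := key s hs hs1
    have h2 : g / s ≤ |C| + D := by
      rw [hg, sub_div]
      linarith [le_abs_self C]
    rwa [div_le_iff₀ hs] at h2
  have hpos : 0 < |C| + D + g := by positivity
  have := key2 (g / (|C| + D + g) / 2) (by positivity) (by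
    rw [div_div, div_le_one (by positivity)]
    linarith [abs_nonneg C])
  have e : (|C| + D) * (g / (|C| + D + g) / 2) = g * ((|C| + D) / (|C| + D + g)) / 2 := by ring
  rw [e] at this
  have h3 : (|C| + D) / (|C| + D + g) ≤ 1 := by
    rw [div_le_one hpos]; linarith
  nlinarith

end EulerLin


namespace EulerLin

open Polynomial

/-! ### Algebraic part: Padé approximations at `t = 1` -/

section Ring

variable {R : Type*} [CommRing R]

/-- The `N`-th term of Euler's series. -/
def ee (a : R) (N : ℕ) : R := ((N ! : ℕ) : R) * a ^ N

/-- Partial sums of Euler's series. -/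
def EE (a : R) (N : ℕ) : R := ∑ k ∈ range N, ee a k

/-- Coefficients of the common denominator. -/
noncomputable def bb (M : ℕ) (G : R[X]) (i : ℕ) : R := ((M.descFactorial (M - i) : ℕ) : R) * G.coeff i

/-- The common denominator at one. -/
noncomputable def BB (M : ℕ) (G : R[X]) : R := ∑ i ∈ range (M + 1), bb M G i

/-- The numerators at one. -/
noncomputable def BJ (M : ℕ) (a : R) (G : R[X]) : R := ∑ i ∈ range (M + 1), bb M G i * EE a i

/-- The numerical linear form. -/
noncomputable def TT {m : ℕ} (lam : Fin (m + 1) → R) (α : Fin m → R) (M : ℕ) (G : R[X]) : R :=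
  lam 0 * BB M G + ∑ j : Fin m, lam j.succ * BJ M (α j) G

lemma taylor_coeff_mul (a : R) (k M : ℕ) (c : ℕ → R) :
    (taylor a (X ^ k * ∑ i ∈ range (M + 1), C (c i) * X ^ i)).coeff k =
      ∑ i ∈ range (M + 1), ((i + k).choose k : R) * c i * a ^ i := by
  rw [taylor_coeff, mul_sum, map_sum, eval_finsetSum]
  apply sum_congr rfl
  intro i _
  have : (X : R[X]) ^ k * (C (c i) * X ^ i) = monomial (i + k) (c i) := by
    rw [← C_mul_X_pow_eq_monomial, pow_add]; ring
  rw [this, hasseDeriv_monomial, eval_monomial]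
  simp

lemma sum_bee (a : R) (k M : ℕ) (b : ℕ → R) :
    ∑ i ∈ range (M + 1), b i * ee a (i + k) =
      ((k ! : ℕ) : R) * a ^ k *
        (taylor a (X ^ k * ∑ i ∈ range (M + 1), C (((i ! : ℕ) : R) * b i) * X ^ i)).coeff k := by
  rw [taylor_coeff_mul, mul_sum]
  apply sum_congr rfl
  intro i _
  unfold ee
  have h : (((i + k)! : ℕ) : R) = ((i + k).choose k : R) * (i ! : ℕ) * (k ! : ℕ) := by
    rw [← Nat.add_choose_mul_factorial_mul_factorial i k]
    push_cast; ring
  rw [h, pow_add]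
  ring

lemma bb_poly (M : ℕ) (G : R[X]) (hG : G.natDegree ≤ M) :
    ∑ i ∈ range (M + 1), C (((i ! : ℕ) : R) * bb M G i) * X ^ i = C ((M ! : ℕ) : R) * G := by
  conv_rhs => rw [G.as_sum_range_C_mul_X_pow' (Nat.lt_succ_of_le hG)]
  rw [mul_sum]
  apply sum_congr rfl
  intro i hi
  have hi' : i ≤ M := Nat.lt_succ_iff.mp (mem_range.mp hi)
  have := Nat.factorial_mul_descFactorial (Nat.sub_le M i)
  rw [Nat.sub_sub_self hi'] at this
  unfold bb
  rw [← this]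
  push_cast
  simp only [map_mul, map_natCast]
  ring

lemma sum_bbee (a : R) (k M : ℕ) (G : R[X]) (hG : G.natDegree ≤ M) :
    ∑ i ∈ range (M + 1), bb M G i * ee a (i + k) =
      ((M ! : ℕ) : R) * ((k ! : ℕ) : R) * (a ^ k * (taylor a (X ^ k * G)).coeff k) := by
  rw [sum_bee, bb_poly M G hG]
  have : (X : R[X]) ^ k * (C ((M ! : ℕ) : R) * G) = C ((M ! : ℕ) : R) * (X ^ k * G) := by ring
  rw [this, taylor_mul, taylor_C, coeff_C_mul]
  ring

lemma taylor_vanish (a : R) (k l : ℕ) (hk : k < l) (G : R[X]) (hG : (X - C a) ^ l ∣ G) :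
    (taylor a (X ^ k * G)).coeff k = 0 := by
  obtain ⟨H, rfl⟩ := hG
  have : taylor a (X ^ k * ((X - C a) ^ l * H)) = X ^ l * taylor a (X ^ k * H) := by
    simp only [taylor_mul, taylor_pow, map_sub, taylor_X, taylor_C]
    ring
  rw [this, coeff_X_pow_mul', if_neg (by omega)]

lemma dvd_sum_bbee (a : R) (k M l : ℕ) (G : R[X]) (hG : G.natDegree ≤ M)
    (hd : (X - C a) ^ l ∣ G) :
    ((M ! * l ! : ℕ) : R) ∣ ∑ i ∈ range (M + 1), bb M G i * ee a (i + k) := by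
  rw [sum_bbee a k M G hG]
  rcases lt_or_ge k l with h | h
  · rw [taylor_vanish a k l h G hd]; simp
  · push_cast
    apply Dvd.dvd.mul_right
    apply mul_dvd_mul_left
    exact_mod_cast (Nat.cast_dvd_cast (α := R) (Nat.factorial_dvd_factorial h))

lemma dvd_remainder (a : R) (M l N : ℕ) (G : R[X]) (hG : G.natDegree ≤ M)
    (hd : (X - C a) ^ l ∣ G) (hN : M ! * l ! ≤ N) :
    ((M ! * l ! : ℕ) : R) ∣ BB M G * EE a N - BJ M a G := by
  have hDN : ∀ k, N ≤ k → ((M ! * l ! : ℕ) : R) ∣ ee a k := by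
    intro k hk
    unfold ee
    apply Dvd.dvd.mul_right
    apply Nat.cast_dvd_cast
    exact Nat.dvd_factorial (by positivity) (hN.trans hk)
  have e1 : ∀ i N, EE a (i + N) = EE a i + ∑ k ∈ range N, ee a (i + k) := fun i N =>
    sum_range_add _ _ _
  have e : BB M G * EE a N - BJ M a G =
      ∑ k ∈ range N, ∑ i ∈ range (M + 1), bb M G i * ee a (i + k) -
        ∑ i ∈ range (M + 1), bb M G i * ∑ k ∈ range i, ee a (N + k) := by
    rw [sum_comm]
    unfold BB BJ
    rw [sum_mul, ← sum_sub_distrib, ← sum_sub_distrib]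
    apply sum_congr rfl
    intro i _
    rw [← mul_sum]
    have h1 := e1 i N
    have h2 := e1 N i
    rw [add_comm, h1] at h2
    linear_combination (-bb M G i) * h2
  rw [e]
  apply _root_.dvd_sub
  · exact dvd_sum fun k _ => dvd_sum_bbee a k M l G hG hd
  · exact dvd_sum fun i _ => Dvd.dvd.mul_left (dvd_sum fun k _ => hDN _ (by omega)) _

lemma dvd_TT {m : ℕ} (lam : Fin (m + 1) → R) (α : Fin m → R) (M l N : ℕ) (G : R[X])
    (hG : G.natDegree ≤ M) (hd : ∀ j, (X - C (α j)) ^ l ∣ G) (hN : M ! * l ! ≤ N) :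
    ((M ! * l ! : ℕ) : R) ∣
      BB M G * (lam 0 + ∑ j : Fin m, lam j.succ * EE (α j) N) - TT lam α M G := by
  have e : BB M G * (lam 0 + ∑ j : Fin m, lam j.succ * EE (α j) N) - TT lam α M G =
      ∑ j : Fin m, lam j.succ * (BB M G * EE (α j) N - BJ M (α j) G) := by
    unfold TT
    rw [mul_add, mul_sum]
    simp only [mul_sub, sum_sub_distrib]
    have : ∀ j : Fin m, BB M G * (lam j.succ * EE (α j) N) = lam j.succ * (BB M G * EE (α j) N) :=
      fun j => by ring
    simp only [this]
    ring
  rw [e]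
  exact dvd_sum fun j _ => Dvd.dvd.mul_left (dvd_remainder _ M l N G hG (hd j) hN) _

lemma BB_add (M : ℕ) {ι : Type*} (s : Finset ι) (c : ι → R) (G : ι → R[X]) :
    BB M (∑ x ∈ s, C (c x) * G x) = ∑ x ∈ s, c x * BB M (G x) := by
  unfold BB bb
  simp only [finsetSum_coeff, coeff_C_mul, mul_sum]
  rw [sum_comm]
  refine sum_congr rfl fun _ _ => sum_congr rfl fun _ _ => by ring

lemma BJ_add (M : ℕ) (a : R) {ι : Type*} (s : Finset ι) (c : ι → R) (G : ι → R[X]) :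
    BJ M a (∑ x ∈ s, C (c x) * G x) = ∑ x ∈ s, c x * BJ M a (G x) := by
  unfold BJ bb
  simp only [finsetSum_coeff, coeff_C_mul, mul_sum, sum_mul]
  rw [sum_comm]
  refine sum_congr rfl fun _ _ => sum_congr rfl fun _ _ => by ring

/-- The auxiliary polynomials. -/
noncomputable def GG {m : ℕ} (α : Fin m → R) (l μ : ℕ) : R[X] :=
  X ^ μ * ∏ j : Fin m, (X - C (α j)) ^ l

lemma GG_dvd {m : ℕ} (α : Fin m → R) (l μ : ℕ) (j : Fin m) : (X - C (α j)) ^ l ∣ GG α l μ :=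
  Dvd.dvd.mul_left (dvd_prod_of_mem (fun j => (X - C (α j)) ^ l) (mem_univ j)) _

end Ring

section Domain

variable {R : Type*} [CommRing R] [IsDomain R]

lemma pow_dvd_of_taylor (a : R) (ha : a ≠ 0) (G : R[X]) (l : ℕ)
    (h : ∀ k < l, (taylor a (X ^ k * G)).coeff k = 0) : (X - C a) ^ l ∣ G := by
  induction l with
  | zero => simp
  | succ l ih =>
    obtain ⟨H, rfl⟩ := ih fun k hk => h k (by omega)
    have h1 := h l (by omega)
    have e : taylor a (X ^ l * ((X - C a) ^ l * H)) = X ^ l * ((X + C a) ^ l * taylor a H) := by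
      simp only [taylor_mul, taylor_pow, map_sub, taylor_X, taylor_C]
      ring
    rw [e, coeff_X_pow_mul', if_pos le_rfl, Nat.sub_self, mul_coeff_zero, taylor_coeff_zero,
      coeff_zero_eq_eval_zero] at h1
    simp at h1
    have h2 : eval a H = 0 := by
      rcases h1 with h1 | h1
      · exact absurd h1.1 ha
      · exact h1
    rw [pow_succ]
    exact mul_dvd_mul_left _ (dvd_iff_isRoot.mpr h2)

lemma degree_ge {m : ℕ} (α : Fin m → R) (hinj : Function.Injective α) (G : R[X]) (hG : G ≠ 0)
    (l : ℕ) (hd : ∀ j, (X - C (α j)) ^ l ∣ G) : m * l ≤ G.natDegree := by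
  classical
  refine le_trans ?_ (card_roots' G)
  have h1 : ∀ j, l ≤ G.roots.count (α j) := by
    intro j
    rw [count_roots]
    exact (le_rootMultiplicity_iff hG).mpr (hd j)
  calc m * l = ∑ j : Fin m, l := by simp
    _ ≤ ∑ j : Fin m, G.roots.count (α j) := sum_le_sum fun j _ => h1 j
    _ = ∑ x ∈ univ.image α, G.roots.count x := by
        rw [sum_image (fun _ _ _ _ h => hinj h)]
    _ ≤ ∑ x ∈ univ.image α ∪ G.roots.toFinset, G.roots.count x :=
        sum_le_sum_of_subset subset_union_left
    _ = G.roots.card := Multiset.sum_count_eq_card fun a ha => by simp [Multiset.mem_toFinset.mpr ha]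

lemma nonvanish_aux [CharZero R] {m : ℕ} (α : Fin m → R)
    (hα0 : ∀ j, α j ≠ 0) (hinj : Function.Injective α) (l : ℕ) (G : R[X]) (hG0 : G ≠ 0)
    (hG : G.natDegree ≤ m * l + m) (hd : ∀ j, (X - C (α j)) ^ l ∣ G)
    (h0 : BB (m * l + m) G = 0) (hj : ∀ j, BJ (m * l + m) (α j) G = 0) : False := by
  set M := m * l + m with hM
  -- the polynomial `b`
  set b : R[X] := ∑ i ∈ range (M + 1), C (bb M G i) * X ^ i with hb
  have hbc : ∀ i, i ≤ M → b.coeff i = bb M G i := by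
    intro i hi
    rw [hb, finsetSum_coeff]
    simp only [coeff_C_mul, coeff_X_pow]
    simp
    intro h; omega
  have hbdeg : b.natDegree ≤ M := by
    rw [hb]
    apply natDegree_sum_le_of_forall_le
    intro i hi
    exact (natDegree_C_mul_X_pow_le _ _).trans (Nat.lt_succ_iff.mp (mem_range.mp hi))
  have hb1 : b.IsRoot 1 := by
    rw [IsRoot, hb, eval_finsetSum]
    simpa [BB] using h0
  obtain ⟨q, hq⟩ := dvd_iff_isRoot.mpr hb1
  have hbne : b ≠ 0 := by
    intro hb0
    apply hG0
    have := bb_poly M G hG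
    have h2 : ∑ i ∈ range (M + 1), C (((i ! : ℕ) : R) * bb M G i) * X ^ i = (0 : R[X]) := by
      apply sum_eq_zero
      intro i hi
      rw [← hbc i (Nat.lt_succ_iff.mp (mem_range.mp hi)), hb0]
      simp
    rw [h2] at this
    rcases mul_eq_zero.mp this.symm with h | h
    · rw [C_eq_zero] at h
      exact absurd h (by exact_mod_cast Nat.factorial_ne_zero M)
    · exact h
  have hqne : q ≠ 0 := by rintro rfl; simp at hq; exact hbne hq
  have hqdeg : q.natDegree + 1 ≤ M := by
    have : b.natDegree = 1 + q.natDegree := by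
      rw [hq, natDegree_mul (X_sub_C_ne_zero 1) hqne, natDegree_X_sub_C]
    omega
  have hM1 : 1 ≤ M := by omega
  -- summation by parts
  have hsum : ∀ F : ℕ → R, ∑ i ∈ range (M + 1), bb M G i * F i =
      ∑ i ∈ range (M + 1), q.coeff i * (F (i + 1) - F i) := by
    intro F
    have hqM : q.coeff M = 0 := coeff_eq_zero_of_natDegree_lt (by omega)
    have h1 : ∑ i ∈ range (M + 1), bb M G i * F i = ∑ i ∈ range (M + 1), b.coeff i * F i :=
      sum_congr rfl fun i hi => by rw [hbc i (Nat.lt_succ_iff.mp (mem_range.mp hi))]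
    rw [h1]
    have hb' : b = X * q - q := by rw [hq]; simp; ring
    simp only [mul_sub, sum_sub_distrib]
    simp only [hb', coeff_sub, sub_mul, sum_sub_distrib]
    congr 1
    rw [sum_range_succ', sum_range_succ (fun i => q.coeff i * F (i + 1))]
    simp [hqM]
  have hqj : ∀ j, ∀ k ≤ l, ∑ i ∈ range (M + 1), q.coeff i * ee (α j) (i + k) = 0 := by
    intro j k
    induction k with
    | zero =>
      intro _
      have h1 := hj j
      unfold BJ at h1
      rw [hsum] at h1
      rw [← h1]
      refine sum_congr rfl fun i _ => ?_
      unfold EE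
      rw [sum_range_succ]
      simp
    | succ k ih =>
      intro hk
      have h1 := sum_bbee (α j) k M G hG
      rw [taylor_vanish (α j) k l (by omega) G (hd j), hsum (fun i => ee (α j) (i + k))] at h1
      simp only [mul_sub, sum_sub_distrib, mul_zero] at h1
      rw [ih (by omega), sub_zero] at h1
      rw [← h1]
      refine sum_congr rfl fun i _ => ?_
      rw [show i + (k + 1) = i + 1 + k by ring]
  set G' : R[X] := ∑ i ∈ range (M + 1), C (((i ! : ℕ) : R) * q.coeff i) * X ^ i with hG'
  have hG'c : ∀ i, G'.coeff i = ((i ! : ℕ) : R) * q.coeff i := by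
    intro i
    rw [hG', finsetSum_coeff]
    simp only [coeff_C_mul, coeff_X_pow]
    simp
    intro h
    right
    exact coeff_eq_zero_of_natDegree_lt (by omega)
  have hG'0 : G' ≠ 0 := by
    intro h
    apply hqne
    ext i
    have := hG'c i
    rw [h, coeff_zero] at this
    rcases mul_eq_zero.mp this.symm with h | h
    · exact absurd h (by exact_mod_cast Nat.factorial_ne_zero i)
    · simpa using h
  have hG'deg : G'.natDegree ≤ q.natDegree := by
    rw [natDegree_le_iff_coeff_eq_zero]
    intro i hi
    rw [hG'c, coeff_eq_zero_of_natDegree_lt hi, mul_zero]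
  have hdiv : ∀ j, (X - C (α j)) ^ (l + 1) ∣ G' := by
    intro j
    apply pow_dvd_of_taylor _ (hα0 j)
    intro k hk
    have h1 := sum_bee (α j) k M q.coeff
    rw [hqj j k (by omega)] at h1
    rcases mul_eq_zero.mp h1.symm with h | h
    · rcases mul_eq_zero.mp h with h | h
      · exact absurd h (by exact_mod_cast Nat.factorial_ne_zero k)
      · exact absurd h (pow_ne_zero _ (hα0 j))
    · exact h
  have := degree_ge α hinj G' hG'0 (l + 1) hdiv
  rw [mul_add, mul_one] at this
  omega

lemma prod_natDegree {m : ℕ} (α : Fin m → R) (l : ℕ) :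
    (∏ j : Fin m, (X - C (α j)) ^ l).natDegree = m * l := by
  rw [natDegree_prod _ _ fun j _ => pow_ne_zero _ (X_sub_C_ne_zero _)]
  simp [natDegree_pow]

lemma GG_natDegree {m : ℕ} (α : Fin m → R) (l μ : ℕ) (hμ : μ ≤ m) :
    (GG α l μ).natDegree ≤ m * l + m := by
  refine natDegree_mul_le.trans ?_
  rw [prod_natDegree, natDegree_X_pow]
  omega

lemma nonvanish [CharZero R] {m : ℕ} (lam : Fin (m + 1) → R) (hlam : ∃ i, lam i ≠ 0)
    (α : Fin m → R) (hα0 : ∀ j, α j ≠ 0) (hinj : Function.Injective α) (l : ℕ) :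
    ∃ μ ≤ m, TT lam α (m * l + m) (GG α l μ) ≠ 0 := by
  by_contra! hcon
  let Φ : Matrix (Fin (m + 1)) (Fin (m + 1)) R := fun μ =>
    Fin.cons (BB (m * l + m) (GG α l μ)) (fun j => BJ (m * l + m) (α j) (GG α l μ))
  have h1 : Φ.mulVec lam = 0 := by
    ext μ
    have := hcon μ (Nat.lt_succ_iff.mp μ.2)
    unfold TT at this
    simp only [Matrix.mulVec, dotProduct, Φ, Fin.sum_univ_succ, Fin.cons_zero, Fin.cons_succ,
      Pi.zero_apply]
    rw [← this]
    simp only [mul_comm]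
  have hdet : Φ.det = 0 := Matrix.exists_mulVec_eq_zero_iff.mp
    ⟨lam, fun h => by obtain ⟨i, hi⟩ := hlam; exact hi (congrFun h i), h1⟩
  obtain ⟨c, hc0, hc⟩ := Matrix.exists_vecMul_eq_zero_iff.mpr hdet
  set G : R[X] := ∑ μ : Fin (m + 1), C (c μ) * GG α l μ with hGdef
  have hGe : G = (∑ μ : Fin (m + 1), C (c μ) * X ^ (μ : ℕ)) * ∏ j : Fin m, (X - C (α j)) ^ l := by
    rw [hGdef, sum_mul]
    refine sum_congr rfl fun μ _ => ?_
    unfold GG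
    ring
  have hQ : (∑ μ : Fin (m + 1), C (c μ) * X ^ (μ : ℕ)) ≠ 0 := by
    intro h
    apply hc0
    ext μ
    have := congrArg (fun p => p.coeff (μ : ℕ)) h
    simp only [finsetSum_coeff, coeff_C_mul, coeff_X_pow, coeff_zero] at this
    rw [sum_eq_single μ] at this
    · simpa using this
    · intro ν _ hν
      rw [if_neg (fun h => hν (Fin.ext h.symm)), mul_zero]
    · simp
  have hG0 : G ≠ 0 := by
    rw [hGe]
    exact mul_ne_zero hQ (prod_ne_zero_iff.mpr fun j _ => pow_ne_zero _ (X_sub_C_ne_zero _))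
  apply nonvanish_aux α hα0 hinj l G hG0
  · rw [hGdef]
    apply natDegree_sum_le_of_forall_le
    intro μ _
    exact (natDegree_C_mul_le _ _).trans (GG_natDegree α l μ (Nat.lt_succ_iff.mp μ.2))
  · intro j
    exact dvd_sum fun μ _ => Dvd.dvd.mul_left (GG_dvd α l μ j) _
  · rw [hGdef, BB_add]
    have := congrFun hc 0
    simpa [Matrix.vecMul, dotProduct, Φ] using this
  · intro j
    rw [hGdef, BJ_add]
    have := congrFun hc j.succ
    simpa [Matrix.vecMul, dotProduct, Φ] using this

end Domain

end EulerLin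


namespace EulerLin

open Polynomial

/-! ### Archimedean size -/

section Size

variable {R : Type*} [CommRing R] (σ : R →+* ℂ)

lemma dom_mul {p p' : R[X]} {q q' : ℝ[X]} (h : ∀ i, ‖σ (p.coeff i)‖ ≤ q.coeff i)
    (h' : ∀ i, ‖σ (p'.coeff i)‖ ≤ q'.coeff i) (i : ℕ) :
    ‖σ ((p * p').coeff i)‖ ≤ (q * q').coeff i := by
  rw [coeff_mul, coeff_mul, map_sum]
  refine (norm_sum_le _ _).trans (sum_le_sum fun x _ => ?_)
  rw [map_mul, norm_mul]
  exact mul_le_mul (h _) (h' _) (norm_nonneg _) ((norm_nonneg _).trans (h _))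

lemma dom_X (i : ℕ) : ‖σ ((X : R[X]).coeff i)‖ ≤ (X : ℝ[X]).coeff i := by
  rw [coeff_X, coeff_X]
  split_ifs <;> simp

lemma dom_one (i : ℕ) : ‖σ ((1 : R[X]).coeff i)‖ ≤ (1 : ℝ[X]).coeff i := by
  rw [coeff_one, coeff_one]
  split_ifs <;> simp

lemma dom_pow {p : R[X]} {q : ℝ[X]} (h : ∀ i, ‖σ (p.coeff i)‖ ≤ q.coeff i) (k : ℕ) :
    ∀ i, ‖σ ((p ^ k).coeff i)‖ ≤ (q ^ k).coeff i := by
  induction k with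
  | zero => simpa using dom_one σ
  | succ k ih =>
    rw [pow_succ, pow_succ]
    exact dom_mul σ ih h

lemma dom_prod {ι : Type*} (s : Finset ι) {p : ι → R[X]} {q : ι → ℝ[X]}
    (h : ∀ x, ∀ i, ‖σ ((p x).coeff i)‖ ≤ (q x).coeff i) :
    ∀ i, ‖σ ((∏ x ∈ s, p x).coeff i)‖ ≤ (∏ x ∈ s, q x).coeff i := by
  classical
  induction s using Finset.induction_on with
  | empty => simpa using dom_one σ
  | insert a s ha ih =>
    rw [prod_insert ha, prod_insert ha]
    exact dom_mul σ (h a) ih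

lemma dom_lin (a : R) (A : ℝ) (hA : ‖σ a‖ ≤ A) (i : ℕ) :
    ‖σ ((X - C a).coeff i)‖ ≤ (X + C A).coeff i := by
  rw [coeff_sub, coeff_add, map_sub]
  refine (norm_sub_le _ _).trans (add_le_add (dom_X σ i) ?_)
  rw [coeff_C, coeff_C]
  split_ifs
  · exact hA
  · simp

lemma GG_size {m : ℕ} (α : Fin m → R) (A : ℝ) (hA : ∀ j, ‖σ (α j)‖ ≤ A)
    (l μ : ℕ) (hμ : μ ≤ m) :
    ∑ i ∈ range (m * l + m + 1), ‖σ ((GG α l μ).coeff i)‖ ≤ (1 + A) ^ (m * l) := by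
  set q : ℝ[X] := X ^ μ * ∏ _j : Fin m, (X + C A) ^ l with hq
  have h1 : ∀ i, ‖σ ((GG α l μ).coeff i)‖ ≤ q.coeff i :=
    dom_mul σ (dom_pow σ (dom_X σ) μ) (dom_prod σ _ fun j => dom_pow σ (dom_lin σ _ A (hA j)) l)
  refine (sum_le_sum fun i _ => h1 i).trans ?_
  have hdeg : q.natDegree < m * l + m + 1 := by
    refine lt_of_le_of_lt natDegree_mul_le ?_
    rw [natDegree_X_pow]
    have : (∏ _j : Fin m, (X + C A) ^ l).natDegree ≤ m * l := by
      rw [prod_const, ← pow_mul]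
      refine natDegree_pow_le.trans ?_
      rw [natDegree_X_add_C]
      simp [mul_comm]
    omega
  have h2 := eval_eq_sum_range' hdeg (1 : ℝ)
  simp only [one_pow, mul_one] at h2
  rw [← h2, hq]
  simp [← pow_mul, mul_comm]

lemma EE_size (a : R) (A : ℝ) (hA1 : 1 ≤ A) (hA : ‖σ a‖ ≤ A) (i : ℕ) :
    ‖σ (EE a i)‖ ≤ (i ! : ℕ) * A ^ i := by
  have key : ∀ i : ℕ, ∑ k ∈ range i, k ! ≤ i ! := by
    intro i
    induction i with
    | zero => simp
    | succ i ih =>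
      rw [sum_range_succ, Nat.factorial_succ]
      rcases Nat.eq_zero_or_pos i with rfl | h
      · simp
      · nlinarith [Nat.factorial_pos i]
  unfold EE ee
  rw [map_sum]
  refine (norm_sum_le _ _).trans ?_
  calc ∑ k ∈ range i, ‖σ (((k ! : ℕ) : R) * a ^ k)‖ ≤ ∑ k ∈ range i, ((k ! : ℕ) : ℝ) * A ^ i := by
        refine sum_le_sum fun k hk => ?_
        rw [map_mul, map_natCast, map_pow, norm_mul, norm_pow, Complex.norm_natCast]
        gcongr
        calc ‖σ a‖ ^ k ≤ A ^ k := by gcongr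
          _ ≤ A ^ i := pow_le_pow_right₀ hA1 (mem_range.mp hk).le
    _ = ((∑ k ∈ range i, k ! : ℕ) : ℝ) * A ^ i := by rw [← sum_mul]; push_cast; rfl
    _ ≤ (i ! : ℕ) * A ^ i := by
        gcongr
        exact_mod_cast key i

lemma BJ_size (a : R) (A : ℝ) (hA1 : 1 ≤ A) (hA : ‖σ a‖ ≤ A) (M : ℕ) (G : R[X]) :
    ‖σ (BJ M a G)‖ ≤ (M ! : ℕ) * A ^ M * ∑ i ∈ range (M + 1), ‖σ (G.coeff i)‖ := by
  unfold BJ bb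
  rw [map_sum, mul_sum]
  refine (norm_sum_le _ _).trans (sum_le_sum fun i hi => ?_)
  have hi' : i ≤ M := Nat.lt_succ_iff.mp (mem_range.mp hi)
  have hf := Nat.factorial_mul_descFactorial (Nat.sub_le M i)
  rw [Nat.sub_sub_self hi'] at hf
  rw [map_mul, map_mul, map_natCast, norm_mul, norm_mul, Complex.norm_natCast]
  calc (M.descFactorial (M - i) : ℝ) * ‖σ (G.coeff i)‖ * ‖σ (EE a i)‖
      ≤ (M.descFactorial (M - i) : ℝ) * ‖σ (G.coeff i)‖ * ((i ! : ℕ) * A ^ i) := by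
        gcongr
        exact EE_size σ a A hA1 hA i
    _ = ((i ! * M.descFactorial (M - i) : ℕ) : ℝ) * A ^ i * ‖σ (G.coeff i)‖ := by push_cast; ring
    _ ≤ (M ! : ℕ) * A ^ M * ‖σ (G.coeff i)‖ := by
        rw [hf]
        gcongr

lemma BB_size (A : ℝ) (hA1 : 1 ≤ A) (M : ℕ) (G : R[X]) :
    ‖σ (BB M G)‖ ≤ (M ! : ℕ) * A ^ M * ∑ i ∈ range (M + 1), ‖σ (G.coeff i)‖ := by
  unfold BB bb
  rw [map_sum, mul_sum]
  refine (norm_sum_le _ _).trans (sum_le_sum fun i hi => ?_)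
  have hi' : i ≤ M := Nat.lt_succ_iff.mp (mem_range.mp hi)
  have hf := Nat.factorial_mul_descFactorial (Nat.sub_le M i)
  rw [Nat.sub_sub_self hi'] at hf
  rw [map_mul, map_natCast, norm_mul, Complex.norm_natCast]
  have h1 : (M.descFactorial (M - i) : ℝ) ≤ (M ! : ℕ) := by
    rw [← hf]
    exact_mod_cast Nat.le_mul_of_pos_left _ (Nat.factorial_pos i)
  have h2 : (1 : ℝ) ≤ A ^ M := one_le_pow₀ hA1
  gcongr
  nlinarith [(Nat.cast_nonneg (M !) : (0 : ℝ) ≤ _)]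

lemma TT_size {m : ℕ} (lam : Fin (m + 1) → R) (α : Fin m → R) (A L : ℝ) (hA1 : 1 ≤ A)
    (hA : ∀ j, ‖σ (α j)‖ ≤ A) (hL : ∀ i, ‖σ (lam i)‖ ≤ L) (l μ : ℕ) (hμ : μ ≤ m) :
    ‖σ (TT lam α (m * l + m) (GG α l μ))‖ ≤
      (m + 1) * L * (((m * l + m)! : ℕ) * A ^ (m * l + m) * (1 + A) ^ (m * l)) := by
  set W : ℝ := (((m * l + m)! : ℕ) * A ^ (m * l + m) * (1 + A) ^ (m * l)) with hW
  have hL0 : 0 ≤ L := (norm_nonneg _).trans (hL 0)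
  have hG := GG_size σ α A hA l μ hμ
  have hB : ‖σ (BB (m * l + m) (GG α l μ))‖ ≤ W := by
    refine (BB_size σ A hA1 _ _).trans ?_
    rw [hW]
    gcongr
  have hJ : ∀ j, ‖σ (BJ (m * l + m) (α j) (GG α l μ))‖ ≤ W := by
    intro j
    refine (BJ_size σ (α j) A hA1 (hA j) _ _).trans ?_
    rw [hW]
    gcongr
  unfold TT
  rw [map_add, map_mul, map_sum]
  calc _ ≤ L * W + ∑ j : Fin m, L * W := by
        refine (norm_add_le _ _).trans (add_le_add ?_ ((norm_sum_le _ _).trans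
          (sum_le_sum fun j _ => ?_)))
        · rw [norm_mul]
          exact mul_le_mul (hL 0) hB (norm_nonneg _) hL0
        · rw [map_mul, norm_mul]
          exact mul_le_mul (hL _) (hJ j) (norm_nonneg _) hL0
    _ = (m + 1) * L * W := by simp; ring

end Size

/-! ### Places -/

section Places

variable (K : Type*) [Field K] [NumberField K]

lemma le_of_dvd_of_size (T : 𝓞 K) (hT : T ≠ 0) (x : ℕ) (hx : (x : 𝓞 K) ∣ T) (H : ℝ)
    (hH : ∀ σ : K →+* ℂ, ‖σ (T : K)‖ ≤ H) : (x : ℝ) ≤ H := by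
  obtain ⟨t, rfl⟩ := hx
  have ht : t ≠ 0 := right_ne_zero_of_mul hT
  obtain ⟨σ, hσ⟩ := exists_conjugate_one_le_norm ht
  have := hH σ
  simp only [map_mul, map_natCast, norm_mul, Complex.norm_natCast] at this
  nlinarith [(Nat.cast_nonneg x : (0 : ℝ) ≤ x)]

lemma natCast_pow_dvd (T : 𝓞 K) (p k : ℕ) (hp : p ≠ 0)
    (h : ∀ v : HeightOneSpectrum (𝓞 K), (p : 𝓞 K) ∈ v.asIdeal →
      v.valuation K (T : K) ≤ v.valuation K (((p ^ k : ℕ) : 𝓞 K) : K)) :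
    ((p ^ k : ℕ) : 𝓞 K) ∣ T := by
  have hp0 : (((p ^ k : ℕ) : 𝓞 K) : K) ≠ 0 := by
    simp [hp]
  have h1 := HeightOneSpectrum.mem_integers_of_valuation_le_one (R := 𝓞 K) K
    ((T : K) / (((p ^ k : ℕ) : 𝓞 K) : K)) (fun v => by
      rw [map_div₀, div_le_one₀ (zero_lt_iff.mpr ((Valuation.ne_zero_iff _).mpr hp0))]
      by_cases hv : (p : 𝓞 K) ∈ v.asIdeal
      · exact h v hv
      · have h2 : v.valuation K (((p ^ k : ℕ) : 𝓞 K) : K) = 1 := by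
          have h3 : v.valuation K ((p : 𝓞 K) : K) = 1 :=
            (HeightOneSpectrum.valuation_eq_one_iff_notMem v).mpr hv
          push_cast
          rw [map_pow]
          have h4 : ((p : 𝓞 K) : K) = (p : K) := by simp
          rw [h4] at h3
          rw [h3, one_pow]
        rw [h2]
        exact HeightOneSpectrum.valuation_le_one v T)
  obtain ⟨t, ht⟩ := h1
  refine ⟨t, ?_⟩
  apply RingOfIntegers.coe_injective
  rw [eq_div_iff hp0] at ht
  rw [map_mul, mul_comm]
  exact ht.symm

end Places

section Adic

open Filter Topology

lemma valued_nonarch {F : Type*} [Field F] [Valued F (WithZero (Multiplicative ℤ))] :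
    NonarchimedeanAddGroup F where
  is_nonarchimedean U hU := by
    obtain ⟨γ, hγ⟩ := Valued.mem_nhds_zero.mp hU
    refine ⟨⟨Valuation.ltAddSubgroup (Valued.v (R := F)).restrict γ, ?_⟩, ?_⟩
    · exact Valued.isOpen_ball F γ.1
    · exact hγ

variable {K : Type*} [Field K] [NumberField K]

lemma tendsto_ee (v : HeightOneSpectrum (𝓞 K)) (p : ℕ) (hp : p.Prime)
    (hv : (p : 𝓞 K) ∈ v.asIdeal) (a : 𝓞 K) :
    Tendsto (fun n : ℕ => ((n ! : ℕ) : v.adicCompletion K) *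
      (algebraMap K (v.adicCompletion K) (a : K)) ^ n) atTop (𝓝 0) := by
  have hval : ∀ x : K, Valued.v (algebraMap K (v.adicCompletion K) x) = v.valuation K x :=
    fun x => HeightOneSpectrum.valuedAdicCompletion_eq_valuation' v x
  have hp1 : Valued.v ((p : ℕ) : v.adicCompletion K) < 1 := by
    have h1 := (HeightOneSpectrum.valuation_lt_one_iff_mem (K := K) v (p : 𝓞 K)).mpr hv
    rw [← hval] at h1
    simpa using h1
  have ht := Valued.tendsto_zero_pow_of_v_lt_one hp1
  rw [(Valued.hasBasis_nhds_zero _ _).tendsto_right_iff] at ht ⊢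
  intro γ _
  obtain ⟨k, hk⟩ := (ht γ trivial).exists
  filter_upwards [eventually_ge_atTop (p * k)] with n hn
  refine lt_of_le_of_lt ?_ hk
  rw [Valuation.restrict_le_iff]
  have hdvd : p ^ k ∣ n ! := by
    refine dvd_trans ?_ (Nat.factorial_dvd_factorial hn)
    exact dvd_trans (pow_dvd_pow_of_dvd (Nat.dvd_factorial hp.pos le_rfl) k)
      (by
        have : (p !) ^ k ∣ (p * k)! := by
          have := Nat.prod_factorial_dvd_factorial_sum (range k) (fun _ => p)
          simpa [mul_comm] using this
        exact this)
  obtain ⟨c, hc⟩ := hdvd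
  have e : ((n ! : ℕ) : v.adicCompletion K) * (algebraMap K (v.adicCompletion K) (a : K)) ^ n =
      (p : v.adicCompletion K) ^ k *
        algebraMap K (v.adicCompletion K) (((c : 𝓞 K) * a ^ n : 𝓞 K) : K) := by
    rw [hc]
    simp
    ring
  rw [e, map_mul]
  refine mul_le_of_le_one_right' ?_
  rw [hval]
  exact HeightOneSpectrum.valuation_le_one v _

lemma exists_small (v : HeightOneSpectrum (𝓞 K)) (p : ℕ) (hp : p.Prime)
    (hv : (p : 𝓞 K) ∈ v.asIdeal) {m : ℕ} (lam : Fin (m + 1) → 𝓞 K) (α : Fin m → 𝓞 K)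
    (h0 : algebraMap K (v.adicCompletion K) ((lam 0 : K)) +
        ∑ j : Fin m, algebraMap K (v.adicCompletion K) ((lam j.succ : K)) *
          eulerF K v (α j) = 0) (D : 𝓞 K) (hD : D ≠ 0) (N0 : ℕ) :
    ∃ N, N0 ≤ N ∧ v.valuation K ((lam 0 + ∑ j : Fin m, lam j.succ * EE (α j) N : 𝓞 K) : K) ≤
      v.valuation K (D : K) := by
  have hval : ∀ x : K, Valued.v (algebraMap K (v.adicCompletion K) x) = v.valuation K x :=
    fun x => HeightOneSpectrum.valuedAdicCompletion_eq_valuation' v x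
  have : NonarchimedeanAddGroup (v.adicCompletion K) := valued_nonarch
  have hF : ∀ j, Tendsto (fun N => algebraMap K (v.adicCompletion K) ((EE (α j) N : 𝓞 K) : K))
      atTop (𝓝 (eulerF K v (α j))) := by
    intro j
    have hs : Summable (fun n : ℕ => ((n ! : ℕ) : v.adicCompletion K) *
        (algebraMap K (v.adicCompletion K) (α j : K)) ^ n) := by
      apply NonarchimedeanAddGroup.summable_of_tendsto_cofinite_zero
      rw [Nat.cofinite_eq_atTop]
      exact tendsto_ee v p hp hv (α j)
    have := hs.hasSum.tendsto_sum_nat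
    refine this.congr fun N => ?_
    simp [EE, ee]
  have hT : Tendsto (fun N => algebraMap K (v.adicCompletion K)
      ((lam 0 + ∑ j : Fin m, lam j.succ * EE (α j) N : 𝓞 K) : K)) atTop (𝓝 0) := by
    rw [← h0]
    have : Tendsto (fun N => algebraMap K (v.adicCompletion K) ((lam 0 : K)) +
        ∑ j : Fin m, algebraMap K (v.adicCompletion K) ((lam j.succ : K)) *
          algebraMap K (v.adicCompletion K) ((EE (α j) N : 𝓞 K) : K)) atTop
        (𝓝 (algebraMap K (v.adicCompletion K) ((lam 0 : K)) +
        ∑ j : Fin m, algebraMap K (v.adicCompletion K) ((lam j.succ : K)) *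
          eulerF K v (α j))) :=
      tendsto_const_nhds.add (tendsto_finsetSum _ fun j _ => tendsto_const_nhds.mul (hF j))
    refine this.congr fun N => ?_
    simp
  have hDv : (Valued.v (R := v.adicCompletion K)).restrict
      (algebraMap K (v.adicCompletion K) (D : K)) ≠ 0 := by
    rw [Valuation.ne_zero_iff]
    simpa using hD
  rw [(Valued.hasBasis_nhds_zero _ _).tendsto_right_iff] at hT
  obtain ⟨N, hN, hN0⟩ := ((hT (Units.mk0 _ hDv) trivial).and (eventually_ge_atTop N0)).exists
  refine ⟨N, hN0, ?_⟩
  have := (Valuation.restrict_lt_iff _).mp hN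
  rw [hval, hval] at this
  exact this.le

lemma TT_val (v : HeightOneSpectrum (𝓞 K)) (p : ℕ) (hp : p.Prime)
    (hv : (p : 𝓞 K) ∈ v.asIdeal) {m : ℕ} (lam : Fin (m + 1) → 𝓞 K) (α : Fin m → 𝓞 K)
    (h0 : algebraMap K (v.adicCompletion K) ((lam 0 : K)) +
        ∑ j : Fin m, algebraMap K (v.adicCompletion K) ((lam j.succ : K)) *
          eulerF K v (α j) = 0) (M l : ℕ) (G : (𝓞 K)[X]) (hG : G.natDegree ≤ M)
    (hd : ∀ j, (X - C (α j)) ^ l ∣ G) :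
    v.valuation K ((TT lam α M G : 𝓞 K) : K) ≤ v.valuation K (((M ! * l ! : ℕ) : 𝓞 K) : K) := by
  obtain ⟨N, hN0, hN⟩ := exists_small v p hp hv lam α h0 ((M ! * l ! : ℕ) : 𝓞 K)
    (by exact_mod_cast (Nat.mul_pos (Nat.factorial_pos M) (Nat.factorial_pos l)).ne') (M ! * l !)
  obtain ⟨c, hc⟩ := dvd_TT lam α M l N G hG hd hN0
  have e : TT lam α M G = BB M G * (lam 0 + ∑ j : Fin m, lam j.succ * EE (α j) N) -
      ((M ! * l ! : ℕ) : 𝓞 K) * c := by rw [← hc]; ring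
  have e' : ((TT lam α M G : 𝓞 K) : K) = ((BB M G : 𝓞 K) : K) *
      ((lam 0 + ∑ j : Fin m, lam j.succ * EE (α j) N : 𝓞 K) : K) -
      (((M ! * l ! : ℕ) : 𝓞 K) : K) * (c : K) := by
    exact (congrArg (algebraMap (𝓞 K) K) e).trans (by rw [map_sub, map_mul, map_mul])
  rw [e']
  refine (Valuation.map_sub _ _ _).trans (max_le ?_ ?_)
  · rw [map_mul]
    exact mul_le_of_le_one_of_le (HeightOneSpectrum.valuation_le_one v _) hN
  · rw [map_mul]
    exact mul_le_of_le_one_right' (HeightOneSpectrum.valuation_le_one v _)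

end Adic

end EulerLin


namespace EulerLin

lemma pow_div_dvd_factorial (p N : ℕ) (hp : 0 < p) : p ^ (N / p) ∣ N ! := by
  refine dvd_trans (pow_dvd_pow_of_dvd (Nat.dvd_factorial hp le_rfl) (N / p)) ?_
  refine dvd_trans ?_ (Nat.factorial_dvd_factorial (Nat.mul_div_le N p))
  have := Nat.prod_factorial_dvd_factorial_sum (range (N / p)) (fun _ => p)
  simpa [mul_comm] using this

open Classical in
/-- The primes up to `l` in the given classes. -/
noncomputable def PA {n : ℕ} (A : Finset (ZMod n)) (l : ℕ) : Finset ℕ :=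
  (range (l + 1)).filter fun p => p.Prime ∧ (p : ZMod n) ∈ A

lemma mem_PA {n : ℕ} (A : Finset (ZMod n)) (l p : ℕ) :
    p ∈ PA A l ↔ p ≤ l ∧ p.Prime ∧ (p : ZMod n) ∈ A := by
  simp [PA]

/-- A divisor of the linear form supported on the given primes. -/
noncomputable def XX {n : ℕ} (A : Finset (ZMod n)) (M l : ℕ) : ℕ :=
  ∏ p ∈ PA A l, p ^ (M / p + l / p)

lemma sum_PA {n : ℕ} (A : Finset (ZMod n)) (l : ℕ) :
    ∑ k ∈ range l, fA A (k + 1) = ∑ p ∈ PA A l, Real.log p / p := by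
  classical
  have h : ∑ k ∈ range (l + 1), fA A k = ∑ p ∈ PA A l, Real.log p / p := by
    unfold PA fA
    rw [sum_filter]
  rw [← h, sum_range_succ']
  simp [fA]

lemma theta_PA {n : ℕ} (A : Finset (ZMod n)) (l : ℕ) :
    ∑ p ∈ PA A l, Real.log p ≤ Real.log 4 * l := by
  have h := Chebyshev.theta_le_log4_mul_x (x := (l : ℝ)) (by positivity)
  refine le_trans ?_ h
  unfold Chebyshev.theta
  apply sum_le_sum_of_subset_of_nonneg
  · intro p hp
    rw [mem_PA] at hp
    simp [hp.1, hp.2.1, hp.2.1.pos]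
  · intro p _ _
    exact Real.log_natCast_nonneg p

lemma log_XX {n : ℕ} (A : Finset (ZMod n)) (M l m : ℕ) (hM : m * l ≤ M) :
    (m + 1) * l * ∑ p ∈ PA A l, Real.log p / p - 2 * (Real.log 4 * l) ≤ Real.log (XX A M l) := by
  have hpos : ∀ p ∈ PA A l, 0 < p := fun p hp => ((mem_PA A l p).mp hp).2.1.pos
  unfold XX
  push_cast
  rw [Real.log_prod (fun p hp => by have := hpos p hp; positivity)]
  have h1 : ∀ p ∈ PA A l, (m + 1) * l * (Real.log p / p) - 2 * Real.log p ≤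
      Real.log ((p : ℝ) ^ (M / p + l / p)) := by
    intro p hp
    have hp0 : (0 : ℝ) < p := by exact_mod_cast hpos p hp
    rw [Real.log_pow]
    have hl0 : 0 ≤ Real.log p := Real.log_natCast_nonneg p
    have e : (m + 1) * l * (Real.log p / p) - 2 * Real.log p =
      ((m * l : ℝ) / p - 1 + ((l : ℝ) / p - 1)) * Real.log p := by field_simp; ring
    rw [e]
    apply mul_le_mul_of_nonneg_right _ hl0
    have hfl : ∀ N : ℕ, (N : ℝ) / p - 1 ≤ ((N / p : ℕ) : ℝ) := by
      intro N
      rw [← Nat.floor_div_eq_div (K := ℝ)]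
      linarith [Nat.lt_floor_add_one ((N : ℝ) / p)]
    have h2 := hfl M
    have h3 := hfl l
    have h4 : (m * l : ℝ) / p ≤ (M : ℝ) / p := by
      gcongr
      exact_mod_cast hM
    push_cast
    linarith
  have h2 := sum_le_sum h1
  rw [sum_sub_distrib, ← mul_sum, ← mul_sum] at h2
  linarith [theta_PA A l]

variable {K : Type*} [Field K] [NumberField K]

open Polynomial in
lemma XX_dvd {n : ℕ} (A : Finset (ZMod n)) {m : ℕ} (lam : Fin (m + 1) → 𝓞 K) (α : Fin m → 𝓞 K)
    (h0 : ∀ v : HeightOneSpectrum (𝓞 K), (∃ p : ℕ, (p.Prime ∧ (p : ZMod n) ∈ A) ∧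
        (p : 𝓞 K) ∈ v.asIdeal) →
      algebraMap K (v.adicCompletion K) ((lam 0 : K)) +
        ∑ j : Fin m, algebraMap K (v.adicCompletion K) ((lam j.succ : K)) *
          eulerF K v (α j) = 0) (M l : ℕ) (G : (𝓞 K)[X]) (hG : G.natDegree ≤ M)
    (hd : ∀ j, (X - C (α j)) ^ l ∣ G) : ((XX A M l : ℕ) : 𝓞 K) ∣ TT lam α M G := by
  unfold XX
  rw [Nat.cast_prod]
  apply Finset.prod_dvd_of_coprime
  · intro p hp q hq hpq
    have hp' := ((mem_PA A l p).mp hp).2.1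
    have hq' := ((mem_PA A l q).mp hq).2.1
    exact Nat.Coprime.cast (Nat.Coprime.pow _ _ ((Nat.coprime_primes hp' hq').mpr hpq))
  · intro p hp
    have hp' := ((mem_PA A l p).mp hp).2
    apply natCast_pow_dvd K _ p _ hp'.1.ne_zero
    intro v hv
    refine (TT_val v p hp'.1 hv lam α (h0 v ⟨p, hp', hv⟩) M l G hG hd).trans ?_
    have hdv : p ^ (M / p + l / p) ∣ M ! * l ! := by
      rw [pow_add]
      exact mul_dvd_mul (pow_div_dvd_factorial p M hp'.1.pos) (pow_div_dvd_factorial p l hp'.1.pos)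
    obtain ⟨c, hc⟩ := hdv
    have e : (((p ^ (M / p + l / p) * c : ℕ) : 𝓞 K) : K) =
        (((p ^ (M / p + l / p) : ℕ) : 𝓞 K) : K) * (((c : ℕ) : 𝓞 K) : K) := by
      rw [Nat.cast_mul]
      exact map_mul (algebraMap (𝓞 K) K) _ _
    rw [hc, e, map_mul]
    exact mul_le_of_le_one_right' (HeightOneSpectrum.valuation_le_one v _)

lemma exists_bounds {m : ℕ} (x : Fin m → 𝓞 K) :
    ∃ L : ℝ, 1 ≤ L ∧ ∀ i, ∀ σ : K →+* ℂ, ‖σ (x i : K)‖ ≤ L := by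
  refine ⟨1 + ∑ i, house (x i : K), ?_, ?_⟩
  · have : 0 ≤ ∑ i, house (x i : K) := sum_nonneg fun i _ => house_nonneg _
    linarith
  · intro i σ
    have h1 := norm_embedding_le_house (x i : K) σ
    have h2 : house (x i : K) ≤ ∑ i, house (x i : K) :=
      single_le_sum (f := fun i => house (x i : K)) (fun i _ => house_nonneg _) (mem_univ i)
    linarith

lemma log_upper (m l : ℕ) (hm : 1 ≤ m) (hl : 1 ≤ l) (A L : ℝ) (hA : 1 ≤ A) (hL : 1 ≤ L) :
    Real.log ((m + 1) * L * (((m * l + m)! : ℕ) * A ^ (m * l + m) * (1 + A) ^ (m * l))) ≤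
      m * l * Real.log l + (Real.log ((m + 1) * L) + m + 2 * m * Real.log (2 * m) +
        2 * m * Real.log A + m * Real.log (1 + A)) * l := by
  have hm' : (1 : ℝ) ≤ m := by exact_mod_cast hm
  have hl' : (1 : ℝ) ≤ l := by exact_mod_cast hl
  have hf : (0 : ℝ) < (((m * l + m)! : ℕ) : ℝ) := by exact_mod_cast Nat.factorial_pos _
  have hQ : (1 : ℝ) ≤ (m + 1) * L := by nlinarith
  generalize ((m : ℝ) + 1) * L = Q at hQ ⊢
  rw [Real.log_mul (by positivity) (by positivity), Real.log_mul (by positivity) (by positivity),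
    Real.log_mul (by positivity) (by positivity), Real.log_pow, Real.log_pow]
  have h1 : Real.log (((m * l + m)! : ℕ) : ℝ) ≤ (m * l + m) * (Real.log (2 * m) + Real.log l) := by
    have h2 : (((m * l + m)! : ℕ) : ℝ) ≤ (2 * m * l : ℝ) ^ (m * l + m) := by
      have h3 : (m * l + m)! ≤ (2 * m * l) ^ (m * l + m) :=
        (Nat.factorial_le_pow _).trans (Nat.pow_le_pow_left (by nlinarith) _)
      exact_mod_cast h3
    have h4 := Real.log_le_log hf h2
    rw [Real.log_pow, Real.log_mul (by positivity) (by positivity)] at h4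
    push_cast at h4
    exact h4
  have hlogl : Real.log l ≤ l := (Real.log_le_sub_one_of_pos (by linarith)).trans (by linarith)
  have hlog2m : 0 ≤ Real.log (2 * m) := Real.log_nonneg (by linarith)
  have hlogA : 0 ≤ Real.log A := Real.log_nonneg hA
  have hlogL : 0 ≤ Real.log Q := Real.log_nonneg hQ
  have a1 : (m : ℝ) * Real.log l ≤ m * l := by gcongr
  have a2 : (m : ℝ) * Real.log (2 * m) ≤ m * Real.log (2 * m) * l :=
    le_mul_of_one_le_right (by positivity) hl'
  have a3 : (m : ℝ) * Real.log A ≤ m * Real.log A * l :=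
    le_mul_of_one_le_right (by positivity) hl'
  have a4 : Real.log Q ≤ Real.log Q * l :=
    le_mul_of_one_le_right hlogL hl'
  push_cast
  nlinarith

theorem final {m : ℕ} (hm : 1 ≤ m)
    (lam : Fin (m + 1) → 𝓞 K) (hlam : ∃ i, lam i ≠ 0)
    (α : Fin m → 𝓞 K) (hα0 : ∀ j, α j ≠ 0) (hinj : Function.Injective α)
    (n : ℕ) (hn : 3 ≤ n)
    (A : Finset (ZMod n)) (hA : ∀ a ∈ A, IsUnit a)
    (hrm : (m : ℝ) * (n.totient : ℝ) / ((m : ℝ) + 1) < (A.card : ℝ))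
    (h0 : ∀ v : HeightOneSpectrum (𝓞 K), (∃ p : ℕ, (p.Prime ∧ (p : ZMod n) ∈ A) ∧
        (p : 𝓞 K) ∈ v.asIdeal) →
      algebraMap K (v.adicCompletion K) ((lam 0 : K)) +
        ∑ j : Fin m, algebraMap K (v.adicCompletion K) ((lam j.succ : K)) *
          eulerF K v (α j) = 0) : False := by
  have : NeZero n := ⟨by omega⟩
  have hφ : (0 : ℝ) < n.totient := by exact_mod_cast Nat.totient_pos.mpr (by omega)
  have hm1 : (0 : ℝ) < (m : ℝ) + 1 := by positivity
  obtain ⟨d, hd1, hd2⟩ : ∃ d : ℝ, (m : ℝ) / (m + 1) < d ∧ d < (A.card : ℝ) / n.totient := by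
    apply _root_.exists_between
    rw [lt_div_iff₀ hφ]
    calc (m : ℝ) / (m + 1) * n.totient = (m : ℝ) * (n.totient : ℝ) / ((m : ℝ) + 1) := by ring
      _ < _ := hrm
  have hd0 : 0 ≤ d := le_trans (by positivity) hd1.le
  have hε : 0 < (m + 1) * d - m := by
    rw [div_lt_iff₀ hm1] at hd1
    linarith
  obtain ⟨L, hL1, hL⟩ := exists_bounds lam
  obtain ⟨B, hB1, hB⟩ := exists_bounds α
  set Cst : ℝ := Real.log ((m + 1) * L) + m + 2 * m * Real.log (2 * m) +
        2 * m * Real.log B + m * Real.log (1 + B) with hCst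
  set E : ℝ := (Cst + 2 * Real.log 4) / ((m + 1) * d - m) with hE
  obtain ⟨l, hl, hbig⟩ := fA_large A hA d hd0 hd2 (⌈Real.exp E⌉₊ + 1)
  have hl1 : 1 ≤ l := by omega
  have hl0 : (0 : ℝ) < l := by exact_mod_cast hl1
  rw [sum_PA] at hbig
  obtain ⟨μ, hμ, hT⟩ := nonvanish lam hlam α hα0 hinj l
  have hdvd := XX_dvd A lam α h0 (m * l + m) l (GG α l μ) (GG_natDegree α l μ hμ) (GG_dvd α l μ)
  have hle := le_of_dvd_of_size K _ hT _ hdvd _ (fun σ =>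
    TT_size (σ.comp (algebraMap (𝓞 K) K)) lam α B L hB1 (fun j => hB j σ) (fun i => hL i σ) l μ hμ)
  have hXpos : (0 : ℝ) < XX A (m * l + m) l := by
    have : 0 < XX A (m * l + m) l :=
      prod_pos fun p hp => Nat.pow_pos ((mem_PA A l p).mp hp).2.1.pos
    exact_mod_cast this
  have h1 := Real.log_le_log hXpos hle
  have h2 := log_XX A (m * l + m) l m (by omega)
  have h3 := log_upper m l hm hl1 B L hB1 hL1
  have h4 : (m + 1) * l * (d * Real.log l) ≤ (m + 1) * l * ∑ p ∈ PA A l, Real.log p / p := by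
    gcongr
  have h5 : ((m + 1) * d - m) * Real.log l * l ≤ (Cst + 2 * Real.log 4) * l := by
    rw [← hCst] at h3
    nlinarith
  have h6 := le_of_mul_le_mul_right h5 hl0
  have h7 : Real.log l ≤ E := by
    rw [hE, le_div_iff₀ hε]
    linarith
  have h8 : E < Real.log l := by
    rw [Real.lt_log_iff_exp_lt hl0]
    have h9 : ((⌈Real.exp E⌉₊ + 1 : ℕ) : ℝ) ≤ l := by exact_mod_cast hl
    push_cast at h9
    linarith [Nat.le_ceil (Real.exp E)]
  linarith

end EulerLin

/-- Theorem 3 of the paper, primes in residue classes: let `R` be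
the set of primes lying in `r` reduced residue classes modulo `n ≥ 3`, where
`r > m·φ(n)/(m+1)`, and let `V` be the places of `K` above primes of `R`.  Then some
`v' ∈ V` satisfies `λ₀ + λ₁ F_{v'}(α₁) + … + λ_m F_{v'}(α_m) ≠ 0`. -/
theorem euler_linear_form_residue_classes (K : Type*) [Field K] [NumberField K]
    {m : ℕ} (hm : 1 ≤ m)
    (lam : Fin (m + 1) → 𝓞 K) (hlam : ∃ i, lam i ≠ 0)
    (α : Fin m → 𝓞 K) (hα0 : ∀ j, α j ≠ 0) (hinj : Function.Injective α)
    (n : ℕ) (hn : 3 ≤ n)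
    (A : Finset (ZMod n)) (hA : ∀ a ∈ A, IsUnit a)
    (r : ℕ) (hr : A.card = r) (hrm : (m : ℝ) * (n.totient : ℝ) / ((m : ℝ) + 1) < (r : ℝ))
    (R : Set ℕ) (hR : R = {p : ℕ | p.Prime ∧ (p : ZMod n) ∈ A})
    (V : Set (HeightOneSpectrum (𝓞 K)))
    (hV : V = {v | ∃ p ∈ R, (p : 𝓞 K) ∈ v.asIdeal}) :
    ∃ v' ∈ V,
      algebraMap K (v'.adicCompletion K) ((lam 0 : K)) +
        ∑ j : Fin m, algebraMap K (v'.adicCompletion K) ((lam j.succ : K)) *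
          eulerF K v' (α j) ≠ 0 := by
  by_contra! hcon
  subst hR hV hr
  refine EulerLin.final hm lam hlam α hα0 hinj n hn A hA hrm ?_
  rintro v ⟨p, hp, hv⟩
  exact hcon v ⟨p, hp, hv⟩
end
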